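/- arXiv:2304.06733 — 10 statements merged into one kernel-verified Lean document; each statement's English description precedes it below -/
import Mathlib

section
/- There exist universal constants c, C > 0 such that the following holds. Let Σ be a finite alphabet, let P be a probability distribution on Σ, let δ ∈ (0,1], let K = ⌈c·log(2/δ)⌉, and let N ≥ 1. If s_1,…,s_N are drawn i.i.d. from P and P̂ is the add-K estimator built from these samples, then with probability at least 1 − δ over the samples, d_{χ²}(P, P̂) ≤ C·|Σ|·log(|Σ|/δ)/N. In particular, N = O((|Σ|/ε)·log(|Σ|/δ)) i.i.d. samples suffice to learn P to χ² divergence ε with probability 1 − δ. -/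
/-!
Write `k = |Σ|`, `λᵢ = N P(i)`, `Xᵢ` for the count of symbol `i`, `L = log (k/δ)`, and
`Dᵢ = (Xᵢ - λᵢ)² / (Xᵢ + λᵢ)`.

*Concentration.* The binomial moment generating function gives
`E exp(±θ (Xᵢ - λᵢ)) ≤ exp(λᵢ θ²)` for `0 ≤ θ ≤ 1` (`mgf_centered_le`). If `Dᵢ ≥ m`, then
`|Xᵢ - λᵢ| ≥ max(m, √(m λᵢ))`, so a suitable `θ` depending only on `m` and `λᵢ` makes this a
deviation of probability at most `2 exp(-m/4)` (`exists_theta`). Summing over the integer levels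
`m` yields `E exp(Dᵢ/8) ≤ 21` (`expect_exp_dev_le`).

*One Markov inequality.* With probability at least `1 - δ`, `∑ᵢ exp(Dᵢ/8) ≤ 21 k/δ`. On this event
each `Dᵢ` is at most `8 log (21 k/δ) = O(L)`, and by Jensen's inequality the average of the `Dᵢ`
is at most `8 log (21/δ) = O(K)`. Independence between different symbols is never needed.

*Deterministic part.* On that event the `i`-th term of the χ² divergence is
`O((L/K) Dᵢ + L + k L P(i)) / N` (`term_le`): either `Xᵢ ≥ λᵢ/2`, and the denominator `Xᵢ + K` is
comparable with `λᵢ`, or `Dᵢ ≥ λᵢ/6`, whence `λᵢ = O(L)`. Summing over `i` gives `O(k L / N)`.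
The argument needs `L` bounded below, i.e. `k ≥ 2`; for `k = 1` the divergence vanishes.
-/

open Finset

/-- χ² divergence between two functions on a finite type. -/
noncomputable def chiSqDiv {α : Type} [Fintype α] (P Q : α → ℝ) : ℝ :=
  ∑ a, (P a - Q a) ^ 2 / Q a

/-- The add-`K` estimator built from the sample tuple `s`:
`P̂(i) = (Nᵢ + K)/(N + K·|Σ|)` where `Nᵢ` is the number of samples equal to `i`. -/
noncomputable def addKEst {α : Type} [Fintype α] [DecidableEq α] {N : ℕ}
    (s : Fin N → α) (K : ℝ) : α → ℝ :=
  fun i => ((({j : Fin N | s j = i} : Finset (Fin N)).card : ℝ) + K) /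
    ((N : ℝ) + K * Fintype.card α)

/-- The self-normalised squared deviation `(x - l)² / (x + l)` of a count `x` from its mean `l`
(equal to `0` when `x = l = 0`, by the convention on division by zero). -/
noncomputable def selfNormDev (x l : ℝ) : ℝ := (x - l) ^ 2 / (x + l)

lemma selfNormDev_nonneg {x l : ℝ} (hx : 0 ≤ x) (hl : 0 ≤ l) : 0 ≤ selfNormDev x l := by
  unfold selfNormDev; positivity

lemma selfNormDev_mul {x l : ℝ} (hx : 0 ≤ x) (hl : 0 ≤ l) :
    selfNormDev x l * (x + l) = (x - l) ^ 2 := by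
  unfold selfNormDev
  rcases (add_nonneg hx hl).eq_or_lt with h | h
  · have h1 : x = 0 := by linarith
    have h2 : l = 0 := by linarith
    simp [h1, h2]
  · field_simp

lemma selfNormDev_le_abs {x l : ℝ} (hx : 0 ≤ x) (hl : 0 ≤ l) : selfNormDev x l ≤ |x - l| := by
  unfold selfNormDev
  apply div_le_of_le_mul₀ (by positivity) (abs_nonneg _)
  rw [← sq_abs, sq]
  exact mul_le_mul_of_nonneg_left (abs_le.2 ⟨by linarith, by linarith⟩) (abs_nonneg _)

/-- The Chernoff parameter for the event that the self-normalised deviation is at least `m`; it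
does not depend on the count `x`. -/
lemma exists_theta {m l : ℝ} (hm : 0 ≤ m) (hl : 0 ≤ l) :
    ∃ θ : ℝ, 0 ≤ θ ∧ θ ≤ 1 ∧ ∀ x : ℝ, 0 ≤ x → m ≤ selfNormDev x l →
      m / 4 ≤ θ * |x - l| - l * θ ^ 2 := by
  by_cases h : l ≤ m
  · refine ⟨1 / 2, by norm_num, by norm_num, fun x hx hD => ?_⟩
    have := selfNormDev_le_abs hx hl
    linarith
  · push Not at h
    have hl0 : 0 < l := by linarith
    have hq : (√(m / l)) ^ 2 = m / l := Real.sq_sqrt (by positivity)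
    have hq1 : √(m / l) ≤ 1 := by
      rw [Real.sqrt_le_iff]; exact ⟨by norm_num, by rw [one_pow]; exact (div_le_one hl0).2 h.le⟩
    refine ⟨√(m / l) / 2, by positivity, by linarith, fun x hx hD => ?_⟩
    have hq2 : l * (√(m / l)) ^ 2 = m := by rw [hq]; field_simp
    have h1 : l * √(m / l) ≤ |x - l| := by
      apply abs_le_of_sq_le_sq' _ (abs_nonneg _) |>.2
      rw [sq_abs, ← selfNormDev_mul hx hl]
      nlinarith [mul_nonneg hm hx]
    nlinarith [Real.sqrt_nonneg (m / l)]

lemma exp_le_one_add_add_sq {t : ℝ} (ht : |t| ≤ 1) : Real.exp t ≤ 1 + t + t ^ 2 := by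
  have := (abs_le.1 (Real.abs_exp_sub_one_sub_id_le ht)).2
  linarith

/-- The number of samples equal to `i`, as a real number. -/
noncomputable def symCount {α : Type} [Fintype α] [DecidableEq α] {N : ℕ}
    (s : Fin N → α) (i : α) : ℝ := (({j : Fin N | s j = i} : Finset (Fin N)).card : ℝ)

section Expectation

variable {α : Type} [Fintype α] [DecidableEq α] {P : α → ℝ} {N : ℕ}

lemma symCount_nonneg (s : Fin N → α) (i : α) : 0 ≤ symCount s i := by
  unfold symCount; positivity

lemma symCount_le (s : Fin N → α) (i : α) : symCount s i ≤ N := by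
  unfold symCount
  exact_mod_cast (Finset.card_le_univ _).trans_eq (Fintype.card_fin N)

lemma mgf_symCount (h1 : ∑ a, P a = 1) (i : α) (t : ℝ) :
    ∑ s : Fin N → α, (∏ j, P (s j)) * Real.exp (t * symCount s i)
      = (1 + P i * (Real.exp t - 1)) ^ N := by
  have h2 : ∑ a, P a * Real.exp (if a = i then t else 0) = 1 + P i * (Real.exp t - 1) := by
    have : ∀ a, P a * Real.exp (if a = i then t else 0)
        = P a + (if a = i then P a * (Real.exp t - 1) else 0) := by
      intro a
      split_ifs
      · ring
      · simp
    simp [this, Finset.sum_add_distrib, h1]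
  rw [← h2, Fintype.sum_pow]
  refine Finset.sum_congr rfl fun s _ => ?_
  rw [Finset.prod_mul_distrib, ← Real.exp_sum]
  congr 2
  rw [symCount, ← Finset.sum_filter, Finset.sum_const, nsmul_eq_mul, mul_comm]

lemma mgf_centered_le (h0 : ∀ a, 0 ≤ P a) (h1 : ∑ a, P a = 1) (i : α) {t : ℝ} (ht : |t| ≤ 1) :
    ∑ s : Fin N → α, (∏ j, P (s j)) * Real.exp (t * (symCount s i - N * P i))
      ≤ Real.exp (N * P i * t ^ 2) := by
  have hP1 : P i ≤ 1 := h1 ▸ Finset.single_le_sum (fun a _ => h0 a) (Finset.mem_univ i)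
  have e1 : ∀ s : Fin N → α, (∏ j, P (s j)) * Real.exp (t * (symCount s i - N * P i))
      = ((∏ j, P (s j)) * Real.exp (t * symCount s i)) * Real.exp (-(t * (N * P i))) := by
    intro s; rw [mul_assoc, ← Real.exp_add]; ring_nf
  simp_rw [e1]
  rw [← Finset.sum_mul, mgf_symCount h1]
  have h3 : 1 + P i * (Real.exp t - 1) ≤ Real.exp (P i * (t + t ^ 2)) := by
    have := exp_le_one_add_add_sq ht
    have h4 := Real.add_one_le_exp (P i * (t + t ^ 2))
    nlinarith [h0 i]
  have h5 : 0 ≤ 1 + P i * (Real.exp t - 1) := by nlinarith [h0 i, Real.exp_pos t]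
  calc _ ≤ (Real.exp (P i * (t + t ^ 2))) ^ N * Real.exp (-(t * (N * P i))) := by gcongr
    _ = _ := by rw [← Real.exp_nat_mul, ← Real.exp_add]; ring_nf

lemma geom_exp_le (n : ℕ) :
    ∑ m ∈ Finset.range n, 2 * Real.exp (1 / 8) * Real.exp (-(1 / 8)) ^ m ≤ 21 := by
  have ha : Real.exp (1 / 8) ≤ 8 / 7 := by
    have := Real.exp_bound_div_one_sub_of_interval (x := 1 / 8) (by norm_num) (by norm_num)
    norm_num at this ⊢; exact this
  have hb : Real.exp (-(1 / 8)) ≤ 8 / 9 := by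
    have h := Real.add_one_le_exp (1 / 8 : ℝ)
    rw [Real.exp_neg]
    apply inv_le_of_inv_le₀ (by norm_num)
    norm_num at h ⊢; exact h
  have hg : ∑ m ∈ Finset.range n, Real.exp (-(1 / 8)) ^ m ≤ 9 := by
    calc _ ≤ ∑ m ∈ Finset.range n, (8 / 9 : ℝ) ^ m := by gcongr
      _ ≤ 9 := by
        have : (0 : ℝ) ≤ (8 / 9) ^ n := by positivity
        rw [geom_sum_eq (by norm_num), div_le_iff_of_neg (by norm_num)]
        linarith
  rw [← Finset.mul_sum]
  nlinarith [Real.exp_pos (1 / 8)]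

lemma expect_exp_dev_le (h0 : ∀ a, 0 ≤ P a) (h1 : ∑ a, P a = 1) (i : α) :
    ∑ s : Fin N → α, (∏ j, P (s j)) * Real.exp (selfNormDev (symCount s i) (N * P i) / 8)
      ≤ 21 := by
  set l : ℝ := N * P i with hl_def
  have hl : 0 ≤ l := mul_nonneg (Nat.cast_nonneg N) (h0 i)
  have hP1 : P i ≤ 1 := h1 ▸ Finset.single_le_sum (fun a _ => h0 a) (Finset.mem_univ i)
  have hlN : l ≤ N := mul_le_of_le_one_right (Nat.cast_nonneg N) hP1
  choose θ hθ0 hθ1 hθ using fun m : ℕ => exists_theta (Nat.cast_nonneg (α := ℝ) m) hl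
  -- Discrete layer cake: only the level `m = ⌊D⌋` is used, the other summands are nonnegative.
  have key : ∀ s : Fin N → α, Real.exp (selfNormDev (symCount s i) l / 8) ≤
      ∑ m ∈ Finset.range (2 * N + 1), Real.exp (((m : ℝ) + 1) / 8 - m / 4 - l * θ m ^ 2) *
        (Real.exp (θ m * (symCount s i - l)) + Real.exp (-θ m * (symCount s i - l))) := by
    intro s
    have hx := symCount_nonneg s i
    have hD0 := selfNormDev_nonneg hx hl
    set D := selfNormDev (symCount s i) l with hD
    have hDle : D ≤ 2 * N := (selfNormDev_le_abs hx hl).trans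
      (abs_le.2 ⟨by linarith, by linarith [symCount_le s i]⟩)
    have hm1 := Nat.floor_le hD0
    have hm2 := Nat.lt_floor_add_one D
    have hmem : ⌊D⌋₊ ∈ Finset.range (2 * N + 1) := by
      rw [Finset.mem_range, Nat.lt_succ_iff]
      exact Nat.floor_le_of_le (by push_cast; exact hDle)
    refine le_trans ?_ (Finset.single_le_sum (f := fun m : ℕ =>
      Real.exp (((m : ℝ) + 1) / 8 - m / 4 - l * θ m ^ 2) *
        (Real.exp (θ m * (symCount s i - l)) + Real.exp (-θ m * (symCount s i - l))))
      (fun m _ => by positivity) hmem)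
    have h3 := hθ ⌊D⌋₊ _ hx hm1
    have h4 : Real.exp (θ ⌊D⌋₊ * |symCount s i - l|) ≤
        Real.exp (θ ⌊D⌋₊ * (symCount s i - l)) + Real.exp (-θ ⌊D⌋₊ * (symCount s i - l)) := by
      rcases abs_choice (symCount s i - l) with h | h <;> rw [h]
      · exact le_add_of_nonneg_right (Real.exp_pos _).le
      · rw [mul_neg, ← neg_mul]
        exact le_add_of_nonneg_left (Real.exp_pos _).le
    refine le_trans ?_ (mul_le_mul_of_nonneg_left h4 (Real.exp_pos _).le)
    rw [← Real.exp_add]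
    apply Real.exp_le_exp.2
    linarith
  have hw : ∀ s : Fin N → α, 0 ≤ ∏ j, P (s j) := fun s => Finset.prod_nonneg fun j _ => h0 _
  calc _ ≤ ∑ s : Fin N → α, (∏ j, P (s j)) * ∑ m ∈ Finset.range (2 * N + 1),
        Real.exp (((m : ℝ) + 1) / 8 - m / 4 - l * θ m ^ 2) *
        (Real.exp (θ m * (symCount s i - l)) + Real.exp (-θ m * (symCount s i - l))) :=
        Finset.sum_le_sum fun s _ => mul_le_mul_of_nonneg_left (key s) (hw s)
    _ = ∑ m ∈ Finset.range (2 * N + 1), Real.exp (((m : ℝ) + 1) / 8 - m / 4 - l * θ m ^ 2) *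
        (∑ s : Fin N → α, (∏ j, P (s j)) * Real.exp (θ m * (symCount s i - l)) +
         ∑ s : Fin N → α, (∏ j, P (s j)) * Real.exp (-θ m * (symCount s i - l))) := by
        simp_rw [Finset.mul_sum]
        rw [Finset.sum_comm]
        refine Finset.sum_congr rfl fun m _ => ?_
        rw [← Finset.sum_add_distrib, Finset.mul_sum]
        exact Finset.sum_congr rfl fun s _ => by ring
    _ ≤ ∑ m ∈ Finset.range (2 * N + 1), Real.exp (((m : ℝ) + 1) / 8 - m / 4 - l * θ m ^ 2) *
        (Real.exp (l * θ m ^ 2) + Real.exp (l * θ m ^ 2)) := by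
        refine Finset.sum_le_sum fun m _ => ?_
        have ha : |θ m| ≤ 1 := abs_le.2 ⟨by linarith [hθ0 m], hθ1 m⟩
        have e1 := mgf_centered_le (N := N) h0 h1 i ha
        have e2 := mgf_centered_le (N := N) h0 h1 i (t := -θ m) (by rwa [abs_neg])
        rw [neg_sq] at e2
        gcongr
    _ = ∑ m ∈ Finset.range (2 * N + 1), 2 * Real.exp (1 / 8) * Real.exp (-(1 / 8)) ^ m := by
        refine Finset.sum_congr rfl fun m _ => ?_
        rw [← two_mul, mul_left_comm, ← Real.exp_add, mul_assoc 2, ← Real.exp_nat_mul,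
          ← Real.exp_add]
        ring_nf
    _ ≤ 21 := geom_exp_le _

/-- Markov's inequality for a weighted finite sum, as a lower bound on the mass of a superset `A`
of the sublevel set `{W ≤ b/δ}`. -/
lemma markov_mass {Ω : Type} [Fintype Ω] (w W : Ω → ℝ) (A : Ω → Prop) [DecidablePred A]
    (hw : ∀ s, 0 ≤ w s) (hw1 : ∑ s, w s = 1) (hW : ∀ s, 0 ≤ W s) {b δ : ℝ} (hb : 0 < b)
    (hδ : 0 < δ) (hE : ∑ s, w s * W s ≤ b) (hA : ∀ s, W s ≤ b / δ → A s) :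
    1 - δ ≤ ∑ s, if A s then w s else 0 := by
  have h : ∀ s, w s - (δ / b) * (w s * W s) ≤ if A s then w s else 0 := by
    intro s
    split_ifs with h
    · have := mul_nonneg (hw s) (hW s)
      have : 0 ≤ (δ / b) * (w s * W s) := by positivity
      linarith
    · have h2 : b / δ ≤ W s := by
        by_contra h3
        exact h (hA s (not_le.1 h3).le)
      have h3 : 1 ≤ (δ / b) * W s := by
        calc (1 : ℝ) = (δ / b) * (b / δ) := by field_simp
          _ ≤ _ := by gcongr
      nlinarith [hw s]
  have h2 := Finset.sum_le_sum fun s (_ : s ∈ Finset.univ) => h s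
  rw [Finset.sum_sub_distrib, hw1, ← Finset.mul_sum] at h2
  have h3 : (δ / b) * ∑ s, w s * W s ≤ (δ / b) * b := by gcongr
  have h4 : (δ / b) * b = δ := by field_simp
  linarith

end Expectation

/-- Bound on one term of the χ² divergence: `p` is the true probability, `x` the count, `k` the
alphabet size, `n` the number of samples. -/
lemma term_le {p x K k n L : ℝ} (hp : 0 ≤ p) (hx : 0 ≤ x) (hK : 0 < K) (hk : 0 < k) (hn : 0 < n)
    (hKL : K ≤ 3 * L) (hD : selfNormDev x (n * p) ≤ 48 * L) :
    (p - (x + K) / (n + K * k)) ^ 2 / ((x + K) / (n + K * k)) ≤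
      (582 * (L / K) * selfNormDev x (n * p) + 6 * L + 576 * k * L * p) / n := by
  have hl : 0 ≤ n * p := by positivity
  have hL : 0 < L := by linarith
  have hD0 := selfNormDev_nonneg hx hl
  have hDm := selfNormDev_mul hx hl
  set D := selfNormDev x (n * p)
  have hxK : 0 < x + K := by linarith
  have hM : 0 < n + K * k := by positivity
  have hcase : n * p ≤ 2 * x ∨ n * p ≤ 288 * L := by
    by_contra! h
    nlinarith
  have hY : (x - n * p) ^ 2 / (x + K) ≤ 291 * (L / K) * D := by
    have h1 : x + n * p ≤ 291 * (L / K) * (x + K) := by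
      have e : 291 * (L / K) * (x + K) = 291 * (L / K) * x + 291 * L := by field_simp
      have e2 : 1 / 3 ≤ L / K := by rw [div_le_div_iff₀ (by norm_num) hK]; linarith
      rw [e]
      rcases hcase with h | h
      · nlinarith
      · nlinarith
    rw [div_le_iff₀ hxK, ← hDm]
    nlinarith
  have hB : K * k * p ^ 2 / (x + K) ≤ 288 * k * L * p / n := by
    have h1 : K * (n * p) ≤ 288 * L * (x + K) := by
      rcases hcase with h | h
      · nlinarith
      · nlinarith [mul_nonneg hL.le hx]
    rw [div_le_div_iff₀ hxK hn]
    have := mul_le_mul_of_nonneg_left h1 (mul_nonneg hk.le hp)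
    linarith
  have hC : K / (x + K) ≤ 1 := by rw [div_le_one hxK]; linarith
  -- Splitting `M p - x - K = (n p - x) + K (k p - 1)`, where `M = n + K k`.
  have hsplit : (p - (x + K) / (n + K * k)) ^ 2 / ((x + K) / (n + K * k)) ≤
      (2 * ((x - n * p) ^ 2 / (x + K))
        + 2 * K * (K / (x + K)) + 2 * (n + K * k) * (K * k * p ^ 2 / (x + K))) / (n + K * k) := by
    have e1 : (p - (x + K) / (n + K * k)) ^ 2 / ((x + K) / (n + K * k))
        = ((n + K * k) * p - (x + K)) ^ 2 / (x + K) / (n + K * k) := by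
      field_simp
    have e2 : 2 * ((x - n * p) ^ 2 / (x + K))
        + 2 * K * (K / (x + K)) + 2 * (n + K * k) * (K * k * p ^ 2 / (x + K))
        = (2 * (x - n * p) ^ 2 + 2 * K * K + 2 * (n + K * k) * (K * k * p ^ 2)) / (x + K) := by
      field_simp
    rw [e1, e2]
    gcongr
    have q1 : 0 ≤ K * K * k * p := by positivity
    have q2 : 0 ≤ n * K * k * p ^ 2 := by positivity
    nlinarith [sq_nonneg ((n * p - x) - K * (k * p - 1))]
  refine hsplit.trans ?_
  have e3 : ∀ u v : ℝ, (u + 2 * (n + K * k) * v) / (n + K * k) = u / (n + K * k) + 2 * v := by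
    intro u v; field_simp
  rw [e3]
  have hU : 2 * ((x - n * p) ^ 2 / (x + K)) + 2 * K * (K / (x + K))
      ≤ 582 * (L / K) * D + 6 * L := by nlinarith
  have hU0 : 0 ≤ 582 * (L / K) * D + 6 * L := by positivity
  calc _ ≤ (582 * (L / K) * D + 6 * L) / n + 2 * (288 * k * L * p / n) := by
        gcongr
        have : 0 ≤ K * k := by positivity
        linarith
    _ = _ := by ring

/-- The χ² bound holds for every sample satisfying the exponential-moment condition `hW`. -/
lemma chiSq_le_of_good {α : Type} [Fintype α] [DecidableEq α] {P : α → ℝ}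
    (h0 : ∀ a, 0 ≤ P a) (h1 : ∑ a, P a = 1) (hcard : 2 ≤ Fintype.card α) {δ : ℝ} (hδ : 0 < δ)
    (hδ1 : δ ≤ 1) {N : ℕ} (hN : 1 ≤ N) {K : ℝ} (hK : Real.log (2 / δ) ≤ K)
    (hK2 : K ≤ Real.log (2 / δ) + 1) (s : Fin N → α)
    (hW : ∑ i, Real.exp (selfNormDev (symCount s i) (N * P i) / 8) ≤
      21 * Fintype.card α / δ) :
    chiSqDiv P (addKEst s K) ≤
      24000 * Fintype.card α * Real.log (Fintype.card α / δ) / N := by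
  set k : ℝ := (Fintype.card α : ℝ) with hk_def
  have hk : 2 ≤ k := by rw [hk_def]; exact_mod_cast hcard
  have hn : (0 : ℝ) < N := by exact_mod_cast hN
  set L := Real.log (k / δ) with hL
  set D : α → ℝ := fun i => selfNormDev (symCount s i) (N * P i) with hDdef
  have hlog2 : (1 / 2 : ℝ) ≤ Real.log 2 := by linarith [Real.log_two_gt_d9]
  have h2d : Real.log 2 ≤ Real.log (2 / δ) := by
    apply Real.log_le_log (by norm_num)
    rw [le_div_iff₀ hδ]; linarith
  have hLd : Real.log (2 / δ) ≤ L := by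
    apply Real.log_le_log (by positivity); gcongr
  have hKpos : 0 < K := by linarith
  have hKL : K ≤ 3 * L := by linarith
  have hLpos : 0 < L := by linarith
  have h21 : Real.log 21 ≤ 5 * Real.log 2 := by
    rw [← Real.log_rpow (by norm_num)]
    apply Real.log_le_log <;> norm_num
  have hmax : ∀ i, D i ≤ 48 * L := by
    intro i
    have h3 : Real.exp (D i / 8) ≤ 21 * k / δ :=
      (Finset.single_le_sum (f := fun i => Real.exp (D i / 8))
        (fun a _ => (Real.exp_pos _).le) (Finset.mem_univ i)).trans hW
    have h4 : D i / 8 ≤ Real.log (21 * k / δ) := (Real.le_log_iff_exp_le (by positivity)).2 h3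
    rw [mul_div_assoc, Real.log_mul (by norm_num) (by positivity)] at h4
    linarith
  have hmean : ∑ i, D i ≤ 40 * k * K := by
    have hJ := convexOn_exp.map_sum_le (t := (Finset.univ : Finset α)) (w := fun _ => k⁻¹)
      (p := fun i => D i / 8) (fun _ _ => by positivity)
      (by simp only [Finset.sum_const, Finset.card_univ, nsmul_eq_mul]
          rw [← hk_def]; field_simp) (fun _ _ => Set.mem_univ _)
    simp only [smul_eq_mul, ← Finset.mul_sum, ← Finset.sum_div] at hJ
    have h3 : Real.exp (k⁻¹ * ((∑ i, D i) / 8)) ≤ 21 / δ := by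
      calc _ ≤ _ := hJ
        _ ≤ k⁻¹ * (21 * k / δ) := by gcongr
        _ = 21 / δ := by field_simp
    have h4 := (Real.le_log_iff_exp_le (by positivity)).2 h3
    have h5 : Real.log (21 / δ) ≤ 5 * Real.log (2 / δ) := by
      rw [Real.log_div (by norm_num) hδ.ne', Real.log_div (by norm_num) hδ.ne']
      linarith [Real.log_nonpos hδ.le hδ1]
    have h6 : k⁻¹ * ((∑ i, D i) / 8) ≤ 5 * K := by linarith
    have h7 : ∑ i, D i = 8 * k * (k⁻¹ * ((∑ i, D i) / 8)) := by field_simp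
    rw [h7]
    nlinarith
  have hsum : chiSqDiv P (addKEst s K) ≤
      ∑ i, (582 * (L / K) * D i + 6 * L + 576 * k * L * P i) / N :=
    Finset.sum_le_sum fun i _ => term_le (h0 i) (symCount_nonneg s i) hKpos (by linarith) hn hKL
      (hmax i)
  refine hsum.trans ?_
  rw [← Finset.sum_div]
  gcongr
  rw [Finset.sum_add_distrib, Finset.sum_add_distrib, ← Finset.mul_sum,
    ← Finset.mul_sum (f := P), h1, Finset.sum_const, Finset.card_univ, nsmul_eq_mul, ← hk_def]
  have h8 : 582 * (L / K) * ∑ i, D i ≤ 582 * (L / K) * (40 * k * K) := by gcongr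
  have h9 : 582 * (L / K) * (40 * k * K) = 23280 * (k * L) := by field_simp; norm_num
  nlinarith [mul_pos (by linarith : 0 < k) hLpos]

lemma chiSq_eq_zero_of_subsingleton {α : Type} [Fintype α] [DecidableEq α] {P : α → ℝ}
    (h1 : ∑ a, P a = 1) (hcard : Fintype.card α = 1) {N : ℕ} (hN : 1 ≤ N) {K : ℝ} (hK : 0 ≤ K)
    (s : Fin N → α) : chiSqDiv P (addKEst s K) = 0 := by
  obtain ⟨a, ha⟩ := Fintype.card_eq_one_iff.1 hcard
  have hn : (0 : ℝ) < N := by exact_mod_cast hN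
  refine Finset.sum_eq_zero fun b _ => ?_
  have hP : P b = 1 := by
    rw [← h1]
    exact (Fintype.sum_eq_single b fun c hc => absurd ((ha c).trans (ha b).symm) hc).symm
  have hQ : addKEst s K b = 1 := by
    have : ∀ j, s j = b := fun j => (ha _).trans (ha b).symm
    have hne : (N : ℝ) + K ≠ 0 := by positivity
    simp [addKEst, this, hcard, hne]
  simp [hP, hQ]

/-- High-probability learning in χ² divergence via the add-`K` estimator with
`K = ⌈c log(2/δ)⌉`: with probability at least `1 − δ` over `N` i.i.d. samples from `P`,
`d_{χ²}(P, P̂) ≤ C·|Σ|·log(|Σ|/δ)/N`. -/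
theorem stmt_0 :
    ∃ c C : ℝ, 0 < c ∧ 0 < C ∧
      ∀ (α : Type) [Fintype α] [DecidableEq α] (P : α → ℝ),
        ((∀ a, 0 ≤ P a) ∧ ∑ a, P a = 1) →
        ∀ δ : ℝ, 0 < δ → δ ≤ 1 →
        ∀ N : ℕ, 1 ≤ N →
        ∀ K : ℝ, K = (⌈c * Real.log (2 / δ)⌉₊ : ℝ) →
        1 - δ ≤
          ∑ s : Fin N → α,
            (if chiSqDiv P (addKEst s K) ≤
                C * Fintype.card α * Real.log (Fintype.card α / δ) / N
              then ∏ j, P (s j) else 0) := by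
  refine ⟨1, 24000, by norm_num, by norm_num, ?_⟩
  rintro α _ _ P ⟨h0, h1⟩ δ hδ hδ1 N hN K hK
  rw [one_mul] at hK
  have hw1 : ∑ s : Fin N → α, ∏ j, P (s j) = 1 := by rw [← Fintype.sum_pow, h1, one_pow]
  have hlog0 : 0 ≤ Real.log (2 / δ) :=
    Real.log_nonneg (by rw [le_div_iff₀ hδ]; linarith)
  have hpos : 0 < Fintype.card α := by
    rw [Fintype.card_pos_iff]
    by_contra h
    rw [not_nonempty_iff] at h
    simp at h1
  rcases Nat.lt_or_ge (Fintype.card α) 2 with h | h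
  · have hc : Fintype.card α = 1 := by omega
    have hK0 : 0 ≤ K := by rw [hK]; positivity
    have hL : 0 ≤ Real.log (1 / δ) := Real.log_nonneg (by rw [le_div_iff₀ hδ]; linarith)
    have hR : 0 ≤ 24000 * ((1 : ℕ) : ℝ) * Real.log (((1 : ℕ) : ℝ) / δ) / N := by
      rw [Nat.cast_one]; positivity
    simp only [chiSq_eq_zero_of_subsingleton h1 hc hN hK0, hc, if_pos hR, hw1]
    linarith
  · refine markov_mass (fun s : Fin N → α => ∏ j, P (s j))
      (fun s => ∑ i, Real.exp (selfNormDev (symCount s i) (N * P i) / 8)) _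
      (fun s => Finset.prod_nonneg fun j _ => h0 _) hw1
      (fun s => Finset.sum_nonneg fun i _ => (Real.exp_pos _).le)
      (b := 21 * Fintype.card α) (by positivity) hδ ?_ ?_
    · simp_rw [Finset.mul_sum]
      rw [Finset.sum_comm]
      refine (Finset.sum_le_sum fun i _ => expect_exp_dev_le h0 h1 i).trans ?_
      rw [Finset.sum_const, Finset.card_univ, nsmul_eq_mul, mul_comm]
    · intro s hs
      exact chiSq_le_of_good h0 h1 h hδ hδ1 hN (hK ▸ Nat.le_ceil _)
        (hK ▸ (Nat.ceil_lt_add_one hlog0).le) s hs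
end

section
/- For every constant C' ≥ 1 there is a constant C'' > 0 such that the following holds. Let P be a probability distribution on a finite alphabet Σ, let N ≥ K·|Σ| with K ≥ 1, δ ∈ (0,1], L = log(2/δ), let (T_i) be nonnegative integers summing to N, and Q(i) = (T_i + K)/(N + K|Σ|). If i ∈ Σ satisfies |P(i) − Q(i)| ≤ 2√(3·P(i)·L/N) + 6L/N + (K|Σ|/(N + K|Σ|))·P(i) + K/N and P(i) ≤ C'·L/N, then (P(i) − Q(i))²/Q(i) ≤ C''·(L²/(N·K) + K/N). -/
/-!
Since `P i ≤ C' L / N`, every term of the deviation bound is of order `L / N` or `K / N`: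
with `√(3 C') ≤ 2 C'` one gets `|P i - Q i| ≤ (11 C' L + K) / N`. On the other hand
`Q i ≥ K / (2 N)`, because `K |Σ| ≤ N`. Squaring with `(a + b)² ≤ 2 a² + 2 b²` and dividing
gives `4 · 121 C'² L² / (N K) + 4 K / N`, so `C'' = 484 C'²` works.
-/

/-- Low-probability case in the analysis of the add-`K` estimator. -/
theorem stmt_2 :
    ∀ C' : ℝ, 1 ≤ C' → ∃ C'' : ℝ, 0 < C'' ∧
      ∀ (α : Type) [Fintype α] (P : α → ℝ),
        ((∀ a, 0 ≤ P a) ∧ ∑ a, P a = 1) →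
        ∀ (K : ℝ), 1 ≤ K →
        ∀ (N : ℕ), (K * Fintype.card α ≤ (N : ℝ)) →
        ∀ (δ : ℝ), 0 < δ → δ ≤ 1 →
        ∀ (L : ℝ), L = Real.log (2 / δ) →
        ∀ (T : α → ℕ), (∑ i, T i = N) →
        ∀ (Q : α → ℝ), (∀ i, Q i = ((T i : ℝ) + K) / ((N : ℝ) + K * Fintype.card α)) →
        ∀ i : α,
          |P i - Q i| ≤
              2 * Real.sqrt (3 * P i * L / N) + 6 * L / N
                + (K * Fintype.card α / ((N : ℝ) + K * Fintype.card α)) * P i + K / N →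
          P i ≤ C' * L / N →
          (P i - Q i) ^ 2 / Q i ≤ C'' * (L ^ 2 / (N * K) + K / N) := by
  intro C' hC
  refine ⟨484 * C' ^ 2, by positivity, ?_⟩
  intro α _ P hP K hK N hN δ hδ hδ1 L hL T _ Q hQ i hdev hPi
  have hcard : (1 : ℝ) ≤ Fintype.card α := by
    exact_mod_cast Fintype.card_pos_iff.mpr ⟨i⟩
  have hL0 : 0 ≤ L := by
    rw [hL]
    apply Real.log_nonneg
    rw [le_div_iff₀ hδ]
    linarith
  have hK0 : 0 < K := by linarith
  have hN0 : (0 : ℝ) < N := by nlinarith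
  have hP0 := hP.1 i
  have hQlow : K / (2 * N) ≤ Q i := by
    rw [hQ i]
    have hT : (0 : ℝ) ≤ T i := Nat.cast_nonneg _
    apply div_le_div₀ <;> first | positivity | linarith
  have hsqrt : Real.sqrt (3 * P i * L / N) ≤ 2 * C' * L / N := by
    apply Real.sqrt_le_iff.mpr
    refine ⟨by positivity, ?_⟩
    calc 3 * P i * L / N ≤ 3 * (C' * L / N) * L / N := by gcongr
      _ = 3 * C' * (L / N) ^ 2 := by ring
      _ ≤ (4 * C' ^ 2) * (L / N) ^ 2 := by
        apply mul_le_mul_of_nonneg_right _ (by positivity)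
        nlinarith
      _ = (2 * C' * L / N) ^ 2 := by ring
  have hfrac : (K * Fintype.card α / ((N : ℝ) + K * Fintype.card α)) * P i ≤ C' * L / N := by
    refine le_trans (mul_le_of_le_one_left hP0 ?_) hPi
    rw [div_le_one (by positivity)]
    linarith
  have hdev' : |P i - Q i| ≤ (11 * C' * L + K) / N := by
    have h6 : 6 * L / N ≤ 6 * (C' * L) / N := by
      gcongr
      nlinarith
    have hsum : (11 * C' * L + K) / N
        = 2 * (2 * C' * L / N) + 6 * (C' * L) / N + C' * L / N + K / N := by ring
    rw [hsum]
    linarith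
  have hsq : (P i - Q i) ^ 2 ≤ ((11 * C' * L + K) / N) ^ 2 :=
    sq_le_sq' (abs_le.mp hdev').1 (abs_le.mp hdev').2
  calc (P i - Q i) ^ 2 / Q i
      ≤ ((11 * C' * L + K) / N) ^ 2 / (K / (2 * N)) :=
        div_le_div₀ (by positivity) hsq (by positivity) hQlow
    _ = 2 * (11 * C' * L + K) ^ 2 / (N * K) := by field_simp
    _ ≤ 484 * C' ^ 2 * (L ^ 2 + K ^ 2) / (N * K) := by
        refine div_le_div_of_nonneg_right ?_ (by positivity)
        nlinarith [sq_nonneg (11 * C' * L - K), mul_nonneg (sq_nonneg K)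
          (show (0 : ℝ) ≤ C' ^ 2 - 1 by nlinarith), sq_nonneg K]
    _ = 484 * C' ^ 2 * (L ^ 2 / (N * K) + K / N) := by field_simp
end

section
/- There exist constants C'_0 ≥ 1 and C'' > 0 such that for every C' ≥ C'_0 the following holds. Let P be a probability distribution on a finite alphabet Σ, K ≥ 1, δ ∈ (0,1], L = log(2/δ), N ≥ C'·K·|Σ|, let (T_i) be nonnegative integers summing to N, and Q(i) = (T_i + K)/(N + K|Σ|). If i ∈ Σ satisfies |P(i) − T_i/N| ≤ √(3·P(i)·L/N) + 3L/N and P(i) > C'·L/N, then Q(i) ≥ P(i)/2 and (P(i) − Q(i))²/Q(i) ≤ C''·(L/N + (K|Σ|/(N + K|Σ|))²·P(i) + K²/(N·L)). -/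
/-!
Write `p = P i`, `t = T i / N`, `l = L / N`, `m = K|Σ|`, and take `C'0 = 300`, `C'' = 42`.
Since `l < p / 300`, the concentration hypothesis gives `(p - t)² ≤ 2 (3 p l + 9 l²) ≤ 7 p l`,
hence `t ≥ 4 p / 5`, and the normalisation loses only a factor
`N / (N + m) ≥ 300 / 301`; so `Q ≥ p / 2`. Decomposing
`Q - p = (N / (N + m)) (t - p) + K / (N + m) - (m / (N + m)) p`
and using `(a + b + c)² ≤ 3 (a² + b² + c²)`, division by `Q ≥ p / 2` bounds the chi-square term by
`6 (7 l + K² / (N² p) + (m / (N + m))² p)`, where `N² p ≥ N L`.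
-/

/-- A deviation of size `√(3 p l) + 3 l` has square at most `7 p l` once `l` is a small
multiple of `p`. -/
lemma deviation_sq_le {p t l : ℝ} (hl : 0 < l) (hlp : 300 * l ≤ p)
    (h : |p - t| ≤ Real.sqrt (3 * p * l) + 3 * l) : (p - t) ^ 2 ≤ 7 * p * l := by
  have hp : 0 < p := by linarith
  have he : Real.sqrt (3 * p * l) ^ 2 = 3 * p * l := Real.sq_sqrt (by positivity)
  have h1 : (p - t) ^ 2 ≤ (Real.sqrt (3 * p * l) + 3 * l) ^ 2 := by
    rw [← sq_abs]
    gcongr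
  nlinarith [sq_nonneg (Real.sqrt (3 * p * l) - 3 * l), mul_le_mul_of_nonneg_right hlp hl.le]

/-- The estimate in real variables; `m` stands for `K|Σ|`, `t` for the empirical frequency and
`l` for `L / N`. -/
lemma add_const_bound {p t l n m K : ℝ} (hl : 0 < l) (hn : 0 < n) (hm : 0 ≤ m) (hK : 0 ≤ K)
    (hlp : 300 * l ≤ p) (hmn : 300 * m ≤ n) (hd : (p - t) ^ 2 ≤ 7 * p * l) :
    p / 2 ≤ (n * t + K) / (n + m) ∧
      (p - (n * t + K) / (n + m)) ^ 2 / ((n * t + K) / (n + m)) ≤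
        42 * (l + (m / (n + m)) ^ 2 * p + K ^ 2 / (n ^ 2 * l)) := by
  have hp : 0 < p := by linarith
  have hnm : 0 < n + m := by linarith
  have ht : 4 / 5 * p ≤ t := by
    have h : p - t ≤ p / 5 := by
      refine le_of_abs_le (abs_le_of_sq_le_sq ?_ (by positivity))
      nlinarith
    linarith
  have hQ : p / 2 ≤ (n * t + K) / (n + m) := by
    rw [le_div_iff₀ hnm]
    nlinarith [mul_le_mul_of_nonneg_left ht hn.le, mul_le_mul_of_nonneg_left hmn hp.le]
  refine ⟨hQ, ?_⟩
  have hdec : p - (n * t + K) / (n + m) =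
      n / (n + m) * (p - t) + m / (n + m) * p - K / (n + m) := by
    field_simp
    ring
  have hsq : (p - (n * t + K) / (n + m)) ^ 2 ≤
      3 * ((n / (n + m) * (p - t)) ^ 2 + (m / (n + m) * p) ^ 2 + (K / (n + m)) ^ 2) := by
    rw [hdec]
    nlinarith [sq_nonneg (n / (n + m) * (p - t) - m / (n + m) * p),
      sq_nonneg (n / (n + m) * (p - t) + K / (n + m)), sq_nonneg (m / (n + m) * p + K / (n + m))]
  have h1 : (n / (n + m) * (p - t)) ^ 2 ≤ 7 * p * l := by
    have hr : (n / (n + m)) ^ 2 ≤ 1 :=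
      pow_le_one₀ (by positivity) ((div_le_one hnm).2 (by linarith))
    rw [mul_pow]
    nlinarith [mul_le_mul_of_nonneg_right hr (sq_nonneg (p - t))]
  have h3 : (K / (n + m)) ^ 2 ≤ K ^ 2 / (n ^ 2 * l) * p := by
    have h4 : (K / (n + m)) ^ 2 ≤ (K / n) ^ 2 := by
      gcongr
      linarith
    have h5 : (K / n) ^ 2 = K ^ 2 / (n ^ 2 * l) * l := by
      field_simp
    have h6 : K ^ 2 / (n ^ 2 * l) * l ≤ K ^ 2 / (n ^ 2 * l) * p := by
      gcongr
      linarith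
    linarith
  have hB : 0 ≤ K ^ 2 / (n ^ 2 * l) := by positivity
  generalize K ^ 2 / (n ^ 2 * l) = B at *
  generalize m / (n + m) = r at *
  rw [div_le_iff₀ (by linarith)]
  have hR : 0 ≤ 42 * (l + r ^ 2 * p + B) := by positivity
  have hmul := mul_le_mul_of_nonneg_left hQ hR
  nlinarith [mul_nonneg hB hp.le, mul_nonneg (sq_nonneg r) (sq_nonneg p)]

/-- High-probability case in the analysis of the add-`K` estimator. -/
theorem stmt_3 :
    ∃ C'0 C'' : ℝ, 1 ≤ C'0 ∧ 0 < C'' ∧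
      ∀ C' : ℝ, C'0 ≤ C' →
      ∀ (α : Type) [Fintype α] (P : α → ℝ),
        ((∀ a, 0 ≤ P a) ∧ ∑ a, P a = 1) →
        ∀ (K : ℝ), 1 ≤ K →
        ∀ (δ : ℝ), 0 < δ → δ ≤ 1 →
        ∀ (L : ℝ), L = Real.log (2 / δ) →
        ∀ (N : ℕ), (C' * K * Fintype.card α ≤ (N : ℝ)) →
        ∀ (T : α → ℕ), (∑ i, T i = N) →
        ∀ (Q : α → ℝ), (∀ i, Q i = ((T i : ℝ) + K) / ((N : ℝ) + K * Fintype.card α)) →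
        ∀ i : α,
          |P i - (T i : ℝ) / N| ≤ Real.sqrt (3 * P i * L / N) + 3 * L / N →
          C' * L / N < P i →
          P i / 2 ≤ Q i ∧
            (P i - Q i) ^ 2 / Q i ≤
              C'' * (L / N + (K * Fintype.card α / ((N : ℝ) + K * Fintype.card α)) ^ 2 * P i
                + K ^ 2 / (N * L)) := by
  refine ⟨300, 42, by norm_num, by norm_num, ?_⟩
  intro C' hC' α _ P hP K hK δ hδ hδ1 L hL N hN T hT Q hQ i hi hPi
  have hL0 : 0 < L := by
    rw [hL]
    apply Real.log_pos
    rw [lt_div_iff₀ hδ]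
    linarith
  have hcard : (1 : ℝ) ≤ Fintype.card α := by
    exact_mod_cast Fintype.card_pos_iff.2 ⟨i⟩
  have hm : 0 < K * Fintype.card α := by positivity
  have hmn : 300 * (K * Fintype.card α) ≤ (N : ℝ) := by
    nlinarith [mul_le_mul_of_nonneg_right hC' hm.le]
  have hn : (0 : ℝ) < N := by linarith
  have hl : 0 < L / N := by positivity
  have hlp : 300 * (L / N) ≤ P i := by
    have h := mul_le_mul_of_nonneg_right hC' hl.le
    rw [mul_div_assoc] at hPi
    linarith
  rw [mul_div_assoc, mul_div_assoc] at hi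
  have key := add_const_bound hl hn hm.le (by linarith : (0 : ℝ) ≤ K) hlp hmn
    (deviation_sq_le hl hlp hi)
  have e1 : (N : ℝ) * ((T i : ℝ) / N) = T i := by field_simp
  have e2 : (N : ℝ) ^ 2 * (L / N) = N * L := by field_simp
  rw [e1, e2, ← hQ i] at key
  exact key
end

section
/- Let X be a finite set, let ε₀ ∈ (0,1], and let P, Q be probability distributions on {0,1} × X such that Q(b,x) > 0 for all (b,x) and P({1} × X) = ε₀. Let P₁ and Q₁ be the conditional distributions on X given first coordinate 1, i.e., P₁(x) = P(1,x)/P({1}×X) and Q₁(x) = Q(1,x)/Q({1}×X). Then −1 + Σ_{(b,x) ∈ {0,1}×X} P(b,x)²/Q(b,x) ≥ 2·ε₀·(√(1 + d_{χ²}(P₁, Q₁)) − 1). -/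
/-!
Write `q = Q({1} × X)` and `s = √(1 + χ²(P₁, Q₁))`. Expanding the square in the divergence gives
`∑ₓ P(1,x)² / Q(1,x) = (ε₀ s)² / q`, while Cauchy–Schwarz in the form of Sedrakyan's lemma bounds
the other half of the sum below by `(1 - ε₀)² / (1 - q)`. Applying Sedrakyan's lemma once more to
these two terms, whose denominators add up to `1`, the whole sum is at least
`(ε₀ s + 1 - ε₀)² = (1 + ε₀ (s - 1))² ≥ 1 + 2 ε₀ (s - 1)`.
-/

open Finset

/-- `1 + χ²(p/a, r/b)` for positive `r` and normalizing constants `a = ∑ p`, `b = ∑ r`. -/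
lemma one_add_chiSqDiv_normalized {X : Type} [Fintype X] (p r : X → ℝ) (a b : ℝ)
    (ha : 0 < a) (hb : 0 < b) (hp : ∑ x, p x = a) (hr : ∑ x, r x = b) (hpos : ∀ x, 0 < r x) :
    1 + chiSqDiv (fun x => p x / a) (fun x => r x / b) = b / a ^ 2 * ∑ x, p x ^ 2 / r x := by
  have hterm : ∀ x, (p x / a - r x / b) ^ 2 / (r x / b) =
      b / a ^ 2 * (p x ^ 2 / r x) - 2 / a * p x + 1 / b * r x := by
    intro x
    have := (hpos x).ne'
    field_simp
    ring
  unfold chiSqDiv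
  simp only [hterm]
  rw [sum_add_distrib, sum_sub_distrib, ← mul_sum, ← mul_sum, ← mul_sum, hp, hr]
  field_simp
  ring

/-- Two-term Sedrakyan inequality with denominators summing to `1`. -/
lemma sq_add_le_div_add_div (a b q r : ℝ) (hq : 0 < q) (hr : 0 < r) (h : q + r = 1) :
    (a + b) ^ 2 ≤ a ^ 2 / q + b ^ 2 / r := by
  rw [div_add_div _ _ hq.ne' hr.ne', le_div_iff₀ (mul_pos hq hr)]
  obtain rfl : r = 1 - q := by linarith
  nlinarith [sq_nonneg (a * (1 - q) - b * q)]

/-- Lower bound on the χ² sum of a joint distribution on `{0,1} × X` in terms of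
the χ² divergence of the conditional distributions given first coordinate `1`. -/
theorem stmt_6 {X : Type} [Fintype X] (ε₀ : ℝ) (hε₀ : 0 < ε₀) (hε₀1 : ε₀ ≤ 1)
    (P Q : Bool × X → ℝ)
    (hP : (∀ z, 0 ≤ P z) ∧ ∑ z, P z = 1)
    (hQ : (∀ z, 0 < Q z) ∧ ∑ z, Q z = 1)
    (hPtop : ∑ x : X, P (true, x) = ε₀)
    (P₁ Q₁ : X → ℝ)
    (hP₁ : ∀ x, P₁ x = P (true, x) / (∑ y : X, P (true, y)))
    (hQ₁ : ∀ x, Q₁ x = Q (true, x) / (∑ y : X, Q (true, y))) :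
    2 * ε₀ * (Real.sqrt (1 + chiSqDiv P₁ Q₁) - 1) ≤
      -1 + ∑ z : Bool × X, P z ^ 2 / Q z := by
  obtain ⟨_, hPs⟩ := hP
  obtain ⟨hQp, hQs⟩ := hQ
  rw [Fintype.sum_prod_type, Fintype.sum_bool] at hPs hQs
  rw [Fintype.sum_prod_type, Fintype.sum_bool]
  have hX : Nonempty X := by
    by_contra h
    rw [not_nonempty_iff] at h
    simp at hPtop
    linarith
  have hq : 0 < ∑ x, Q (true, x) := sum_pos (fun x _ => hQp _) univ_nonempty
  have hr : 0 < ∑ x, Q (false, x) := sum_pos (fun x _ => hQp _) univ_nonempty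
  obtain rfl : P₁ = fun x => P (true, x) / ε₀ := by
    funext x
    rw [hP₁, hPtop]
  obtain rfl : Q₁ = fun x => Q (true, x) / ∑ y, Q (true, y) := funext hQ₁
  have hchi := one_add_chiSqDiv_normalized (fun x => P (true, x)) (fun x => Q (true, x)) ε₀ _
    hε₀ hq hPtop rfl (fun x => hQp _)
  have hfalse := sq_sum_div_le_sum_sq_div univ (fun x => P (false, x))
    (g := fun x => Q (false, x)) (fun x _ => hQp _)
  have hPf : ∑ x, P (false, x) = 1 - ε₀ := by linarith
  rw [hPf] at hfalse
  have hSnonneg : 0 ≤ ∑ x, P (true, x) ^ 2 / Q (true, x) :=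
    sum_nonneg fun x _ => div_nonneg (sq_nonneg _) (hQp _).le
  rw [hchi]
  set q := ∑ x, Q (true, x)
  set S := ∑ x, P (true, x) ^ 2 / Q (true, x)
  set s := √(q / ε₀ ^ 2 * S) with hs
  have hsq : s ^ 2 = q / ε₀ ^ 2 * S := Real.sq_sqrt (by positivity)
  have htrue : (ε₀ * s) ^ 2 / q = S := by
    rw [mul_pow, hsq]
    field_simp
  have hmain := sq_add_le_div_add_div (ε₀ * s) (1 - ε₀) q _ hq hr hQs
  rw [htrue] at hmain
  nlinarith [sq_nonneg (ε₀ * (s - 1))]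
end

section
/- Let n ≥ 2, ε₀ ∈ (0,1], and m ≥ 1. For every function Q̂ mapping m-tuples of samples in ({0,1}^n)^m to full-support probability distributions on {0,1}^n, the Bayes risk over the hard family satisfies: E_{x^h ~ Uniform({0,1}^{n−1})} E_{s ~ P_{x^h}^{⊗m}} [ d_{χ²}(P_{x^h}, Q̂(s)) ] ≥ 2·ε₀·(2^{(n−1)/2} − 1)·(1 − ε₀)^m. -/
/-!
Write `N = 2^(n-1)`. Samples all of whose first coordinates are `0` carry no information on `xʰ`:
each such tuple has probability `((1-ε₀)/N)^m` under every member of the family, and there are `N^m`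
of them. The divergence being nonnegative, the other tuples may be discarded, so it is enough to
bound, for a single fixed full-support distribution `Q`, the average over `xʰ` of `χ²(P_{xʰ}, Q)`
(`two_mul_le_avg_chiSqDiv`).

For fixed `Q`, `χ²(P, Q) = ∑ P²/Q - 1`, and the average over `xʰ` of `P_{xʰ}(z)²` is `A(z)²`, where
`A(1, y) = ε₀/√N` and `A(0, y) = (1-ε₀)/N`. By Cauchy–Schwarz, `∑ A²/Q ≥ (∑ A)²`, and
`∑ A = ε₀√N + 1 - ε₀ = 1 + ε₀(√N - 1)`, whose square is at least `1 + 2ε₀(√N - 1)`.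
-/

open Finset

/-- The hard family of degree-1 Bayes nets on `{0,1}ⁿ ≃ {0,1} × {0,1}^(n-1)`:
the first coordinate equals `1` with probability `ε₀`; given `1` the rest equals `xʰ`
deterministically; given `0` the rest is uniform. -/
noncomputable def hardP (n : ℕ) (ε₀ : ℝ) (xh : Fin (n - 1) → Bool) :
    Bool × (Fin (n - 1) → Bool) → ℝ :=
  fun z =>
    if z.1 = true then (if z.2 = xh then ε₀ else 0)
    else (1 - ε₀) / (2 ^ (n - 1) : ℝ)

lemma chiSqDiv_nonneg {α : Type} [Fintype α] (P Q : α → ℝ) (hQ : ∀ a, 0 < Q a) :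
    0 ≤ chiSqDiv P Q :=
  Finset.sum_nonneg fun a _ => div_nonneg (sq_nonneg _) (hQ a).le

lemma chiSqDiv_eq {α : Type} [Fintype α] (P Q : α → ℝ) (hQ : ∀ a, 0 < Q a)
    (hP1 : ∑ a, P a = 1) (hQ1 : ∑ a, Q a = 1) :
    chiSqDiv P Q = ∑ a, P a ^ 2 / Q a - 1 := by
  have h : ∀ a, (P a - Q a) ^ 2 / Q a = P a ^ 2 / Q a - 2 * P a + Q a := by
    intro a
    have := (hQ a).ne'
    field_simp
    ring
  unfold chiSqDiv
  simp_rw [h]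
  rw [Finset.sum_add_distrib, Finset.sum_sub_distrib, ← Finset.mul_sum, hP1, hQ1]
  ring

lemma hardP_nonneg (n : ℕ) (ε₀ : ℝ) (hε₀ : 0 < ε₀) (hε₀1 : ε₀ ≤ 1)
    (xh : Fin (n - 1) → Bool) (z : Bool × (Fin (n - 1) → Bool)) : 0 ≤ hardP n ε₀ xh z := by
  have h : 0 ≤ 1 - ε₀ := by linarith
  unfold hardP
  split_ifs <;> positivity

lemma hardP_sum (n : ℕ) (ε₀ : ℝ) (xh : Fin (n - 1) → Bool) : ∑ z, hardP n ε₀ xh z = 1 := by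
  rw [Fintype.sum_prod_type]
  simp [hardP]
  field_simp
  ring

/-- The square root of the average of `P_{xʰ}(z)²` over uniform `xʰ`; the parameter `r` stands for
`√(2^(n-1))`. -/
noncomputable def rootMeanSq (n : ℕ) (ε₀ r : ℝ) (z : Bool × (Fin (n - 1) → Bool)) : ℝ :=
  if z.1 = true then ε₀ / r else (1 - ε₀) / (2 ^ (n - 1) : ℝ)

lemma avg_hardP_sq (n : ℕ) (ε₀ r : ℝ) (hr : r ^ 2 = 2 ^ (n - 1))
    (z : Bool × (Fin (n - 1) → Bool)) :
    (1 / (2 ^ (n - 1) : ℝ)) * ∑ xh, hardP n ε₀ xh z ^ 2 = rootMeanSq n ε₀ r z ^ 2 := by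
  obtain ⟨b, y⟩ := z
  cases b
  · simp [hardP, rootMeanSq]
  · simp [hardP, rootMeanSq, ite_pow, div_pow, hr]
    field_simp

lemma rootMeanSq_sum (n : ℕ) (ε₀ r : ℝ) (hr0 : 0 < r) (hr : r ^ 2 = 2 ^ (n - 1)) :
    ∑ z, rootMeanSq n ε₀ r z = 1 + ε₀ * (r - 1) := by
  rw [Fintype.sum_prod_type]
  simp [rootMeanSq, ← hr]
  field_simp
  ring

/-- The lower bound on the average divergence for an estimate `Q` that ignores the samples. -/
lemma two_mul_le_avg_chiSqDiv (n : ℕ) (ε₀ r : ℝ) (hr0 : 0 < r) (hr : r ^ 2 = 2 ^ (n - 1))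
    (Q : Bool × (Fin (n - 1) → Bool) → ℝ) (hQ : ∀ z, 0 < Q z) (hQ1 : ∑ z, Q z = 1) :
    2 * ε₀ * (r - 1) ≤ (1 / (2 ^ (n - 1) : ℝ)) * ∑ xh, chiSqDiv (hardP n ε₀ xh) Q := by
  have hCS := Finset.sq_sum_div_le_sum_sq_div Finset.univ (rootMeanSq n ε₀ r)
    (fun z _ => hQ z)
  rw [hQ1, div_one, rootMeanSq_sum n ε₀ r hr0 hr] at hCS
  have havg : (1 / (2 ^ (n - 1) : ℝ)) * ∑ xh, chiSqDiv (hardP n ε₀ xh) Q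
      = ∑ z, rootMeanSq n ε₀ r z ^ 2 / Q z - 1 := by
    simp_rw [fun xh => chiSqDiv_eq (hardP n ε₀ xh) Q hQ (hardP_sum n ε₀ xh) hQ1,
      ← avg_hardP_sq n ε₀ r hr]
    rw [Finset.sum_sub_distrib, Finset.sum_comm, mul_sub, Finset.mul_sum]
    congr 1
    · refine Finset.sum_congr rfl fun z _ => ?_
      rw [← Finset.sum_div, mul_div_assoc]
    · simp
  rw [havg]
  nlinarith [sq_nonneg (ε₀ * (r - 1))]

/-- The sample tuples whose first coordinates all vanish, indexed by their remaining coordinates. -/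
def zeroSample (n m : ℕ) :
    (Fin m → (Fin (n - 1) → Bool)) ↪ (Fin m → Bool × (Fin (n - 1) → Bool)) where
  toFun t j := (false, t j)
  inj' t t' h := by
    funext j
    exact (Prod.mk.inj (congrFun h j)).2

/-- Bayes-risk lower bound over the hard family:
`E_{xʰ ~ U} E_{s ~ P_{xʰ}^{⊗m}} [χ²(P_{xʰ}, Q̂(s))] ≥ 2 ε₀ (2^((n-1)/2) − 1)(1 − ε₀)^m`. -/
theorem stmt_7 (n : ℕ) (hn : 2 ≤ n) (ε₀ : ℝ) (hε₀ : 0 < ε₀) (hε₀1 : ε₀ ≤ 1)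
    (m : ℕ) (hm : 1 ≤ m)
    (Qhat : (Fin m → Bool × (Fin (n - 1) → Bool)) → (Bool × (Fin (n - 1) → Bool)) → ℝ)
    (hQhat : ∀ s, (∀ z, 0 < Qhat s z) ∧ ∑ z, Qhat s z = 1) :
    2 * ε₀ * ((2 : ℝ) ^ (((n : ℝ) - 1) / 2) - 1) * (1 - ε₀) ^ m ≤
      (1 / (2 ^ (n - 1) : ℝ)) *
        ∑ xh : Fin (n - 1) → Bool,
          ∑ s : Fin m → Bool × (Fin (n - 1) → Bool),
            (∏ j, hardP n ε₀ xh (s j)) * chiSqDiv (hardP n ε₀ xh) (Qhat s) := by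
  obtain ⟨r, hrdef⟩ : ∃ r : ℝ, r = (2 : ℝ) ^ (((n : ℝ) - 1) / 2) := ⟨_, rfl⟩
  rw [← hrdef]
  have hr0 : 0 < r := by rw [hrdef]; positivity
  have hr : r ^ 2 = 2 ^ (n - 1) := by
    rw [hrdef, ← Real.rpow_natCast, ← Real.rpow_mul (by norm_num), ← Real.rpow_natCast,
      Nat.cast_sub (by omega)]
    congr 1
    push_cast
    ring
  have hε : 0 ≤ 1 - ε₀ := by linarith
  have hprod : ∀ xh t, ∏ j, hardP n ε₀ xh (zeroSample n m t j)
      = ((1 - ε₀) / (2 ^ (n - 1) : ℝ)) ^ m := by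
    intro xh t
    simp [hardP, zeroSample, div_pow]
  calc 2 * ε₀ * (r - 1) * (1 - ε₀) ^ m
      = ∑ _t : Fin m → (Fin (n - 1) → Bool),
          ((1 - ε₀) / (2 ^ (n - 1) : ℝ)) ^ m * (2 * ε₀ * (r - 1)) := by
        simp [div_pow]
        field_simp
    _ ≤ ∑ t : Fin m → (Fin (n - 1) → Bool), ((1 - ε₀) / (2 ^ (n - 1) : ℝ)) ^ m *
          ((1 / (2 ^ (n - 1) : ℝ)) *
            ∑ xh, chiSqDiv (hardP n ε₀ xh) (Qhat (zeroSample n m t))) := by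
        refine Finset.sum_le_sum fun t _ => mul_le_mul_of_nonneg_left ?_ (by positivity)
        exact two_mul_le_avg_chiSqDiv n ε₀ r hr0 hr _ (hQhat _).1 (hQhat _).2
    _ = (1 / (2 ^ (n - 1) : ℝ)) * ∑ xh : Fin (n - 1) → Bool,
          ∑ s ∈ Finset.univ.map (zeroSample n m),
            (∏ j, hardP n ε₀ xh (s j)) * chiSqDiv (hardP n ε₀ xh) (Qhat s) := by
        simp_rw [Finset.sum_map, hprod]
        rw [Finset.sum_comm, Finset.mul_sum]
        refine Finset.sum_congr rfl fun t _ => ?_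
        rw [← Finset.mul_sum]
        ring
    _ ≤ _ := by
        refine mul_le_mul_of_nonneg_left (Finset.sum_le_sum fun xh _ => ?_) (by positivity)
        refine Finset.sum_le_sum_of_subset_of_nonneg (Finset.subset_univ _) fun s _ _ => ?_
        exact mul_nonneg (Finset.prod_nonneg fun j _ => hardP_nonneg n ε₀ hε₀ hε₀1 xh _)
          (chiSqDiv_nonneg _ _ (hQhat s).1)
end

section
/- Let P be a probability distribution on {0,1}^n, let Π be a degree-d parent map on [n], let c > 0, ε ∈ (0,1), and set τ = c·ε²/(2^{d+1}·n). Draw m = (3/c)·2^{d+1}·n·log(6·2^{d+1}·n)/ε² i.i.d. samples from P, and for each i ∈ [n] and each configuration (x_i, π) ∈ {0,1} × {0,1}^{Π_i}, let Z_{x_i,π} be the fraction of samples whose i-th coordinate equals x_i and whose restriction to Π_i equals π. Then with probability at least 5/6, simultaneously for all i and all (x_i, π): if P(X_i = x_i, X_{Π_i} = π) ≥ 4τ then Z_{x_i,π} > 2τ, and if P(X_i = x_i, X_{Π_i} = π) ≤ τ then Z_{x_i,π} ≤ 2τ. Consequently, the set S̃_k of all x ∈ {0,1}^k with Z_{x_i,π_i(x)}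 > 2τ for all i ≤ k satisfies S'_k ⊆ S̃_k ⊆ S_k for all k ∈ [n]. -/
/-!
Write `N = 2 ^ (d + 1) * n`, so that `τ = c ε² / N` and the sample size satisfies
`m τ ≥ 3 log (6 N)`. A configuration is determined by `i`, `b` and the restriction of `π` to `Πᵢ`,
so there are at most `N` of them; restrictions are indexed by subsets of `Πᵢ`
(`configOf`). For one configuration of mass `p` the number of matching samples is binomial, and the
exponential-moment bound (`chernoff`) with parameter `log 2` (if `p ≤ τ`) or `-log 2`
(if `p ≥ 4τ`) shows that the count lies on the wrong side of `2 m τ` with probability at most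
`exp (-log (6 N)) = 1 / (6 N)` (`badMass_le`). As `τ > 0`, at most one of the two cases applies to
each configuration, so a union bound gives total failure probability at most `1/6`.
The inclusions `S'ₖ ⊆ S̃ₖ ⊆ Sₖ` follow pointwise from the two implications.
-/

open Finset

/-- The joint probability `P(Xᵢ = b, X_{Πᵢ} = π)`: mass of strings whose `i`-th coordinate is
`b` and which agree with `π` on the parent set `Πᵢ`. -/
noncomputable def jointMass {n : ℕ} (Par : Fin n → Finset (Fin n))
    (P : (Fin n → Bool) → ℝ) (i : Fin n) (b : Bool) (π : Fin n → Bool) : ℝ :=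
  ∑ x : Fin n → Bool, if x i = b ∧ ∀ j ∈ Par i, x j = π j then P x else 0

/-- The empirical fraction `Z_{b,π}` of the `m` samples whose `i`-th coordinate is `b` and
which agree with `π` on the parent set `Πᵢ`. -/
noncomputable def empFrac {n m : ℕ} (Par : Fin n → Finset (Fin n))
    (s : Fin m → Fin n → Bool) (i : Fin n) (b : Bool) (π : Fin n → Bool) : ℝ :=
  (({j : Fin m | s j i = b ∧ ∀ l ∈ Par i, s j l = π l} : Finset (Fin m)).card : ℝ) / m

/-- Chernoff's bound in exponential form for `m` i.i.d. draws from `P`, where `p` is the mass of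
`A`. A positive `θ` bounds the upper tail at `T`, a negative `θ` the lower tail. -/
lemma chernoff {α : Type*} [Fintype α] (P : α → ℝ) (hP : ∀ x, 0 ≤ P x) (hP1 : ∑ x, P x = 1)
    (A : α → Prop) [DecidablePred A] (p : ℝ) (hp : p = ∑ x, if A x then P x else 0)
    (m : ℕ) (θ T : ℝ) (E : (Fin m → α) → Prop) [DecidablePred E]
    (hE : ∀ s, E s → θ * T ≤ θ * (({j : Fin m | A (s j)} : Finset (Fin m)).card : ℝ)) :
    ∑ s : Fin m → α, (if E s then ∏ j, P (s j) else 0)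
      ≤ Real.exp ((Real.exp θ - 1) * p * m - θ * T) := by
  have hbase : ∑ x, P x * (if A x then Real.exp θ else 1) = 1 + (Real.exp θ - 1) * p := by
    nth_rw 2 [← hP1]
    rw [hp, Finset.mul_sum, ← Finset.sum_add_distrib]
    refine Finset.sum_congr rfl fun x _ => ?_
    split_ifs <;> ring
  have hbase0 : 0 ≤ 1 + (Real.exp θ - 1) * p := by
    rw [← hbase]
    refine Finset.sum_nonneg fun x _ => mul_nonneg (hP x) ?_
    split_ifs <;> positivity
  have hmom : ∑ s : Fin m → α, (∏ j, P (s j)) *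
      Real.exp (θ * (({j : Fin m | A (s j)} : Finset (Fin m)).card : ℝ))
      = (1 + (Real.exp θ - 1) * p) ^ m := by
    rw [← hbase, Fintype.sum_pow]
    refine Finset.sum_congr rfl fun s _ => ?_
    rw [Finset.prod_mul_distrib, Finset.prod_ite, Finset.prod_const, Finset.prod_const_one,
      mul_one, ← Real.exp_nat_mul, mul_comm θ]
  calc ∑ s : Fin m → α, (if E s then ∏ j, P (s j) else 0)
      ≤ ∑ s : Fin m → α, ((∏ j, P (s j)) *
          Real.exp (θ * (({j : Fin m | A (s j)} : Finset (Fin m)).card : ℝ))) *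
            Real.exp (-(θ * T)) := by
        refine Finset.sum_le_sum fun s _ => ?_
        have hw : 0 ≤ ∏ j, P (s j) := Finset.prod_nonneg fun j _ => hP _
        split_ifs with h
        · rw [mul_assoc, ← Real.exp_add]
          refine le_mul_of_one_le_right hw (Real.one_le_exp ?_)
          linarith [hE s h]
        · positivity
    _ = (1 + (Real.exp θ - 1) * p) ^ m * Real.exp (-(θ * T)) := by
        rw [← Finset.sum_mul, hmom]
    _ ≤ Real.exp ((Real.exp θ - 1) * p) ^ m * Real.exp (-(θ * T)) := by
        gcongr
        linarith [Real.add_one_le_exp ((Real.exp θ - 1) * p)]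
    _ = Real.exp ((Real.exp θ - 1) * p * m - θ * T) := by
        rw [← Real.exp_nat_mul, ← Real.exp_add]
        ring_nf

/-- The failure event of a single configuration: it is heavy with small empirical fraction, or
light with large empirical fraction. -/
def Bad {n m : ℕ} (Par : Fin n → Finset (Fin n)) (P : (Fin n → Bool) → ℝ) (τ : ℝ)
    (i : Fin n) (b : Bool) (π : Fin n → Bool) (s : Fin m → Fin n → Bool) : Prop :=
  (4 * τ ≤ jointMass Par P i b π ∧ empFrac Par s i b π ≤ 2 * τ) ∨
    (jointMass Par P i b π ≤ τ ∧ 2 * τ < empFrac Par s i b π)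

/-- The string that is `true` exactly on `T`. The strings `configOf T` for `T ⊆ Πᵢ` represent every
assignment to `Πᵢ` once. -/
def configOf {n : ℕ} (T : Finset (Fin n)) : Fin n → Bool := fun j => decide (j ∈ T)

lemma exists_configOf {n : ℕ} (S : Finset (Fin n)) (π : Fin n → Bool) :
    ∃ T ∈ S.powerset, ∀ j ∈ S, π j = configOf T j := by
  refine ⟨S.filter fun j => π j = true, by simp, fun j hj => ?_⟩
  by_cases h : π j = true <;> simp [configOf, hj, h]

lemma jointMass_congr {n : ℕ} (Par : Fin n → Finset (Fin n)) (P : (Fin n → Bool) → ℝ)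
    (i : Fin n) (b : Bool) {π π' : Fin n → Bool} (h : ∀ j ∈ Par i, π j = π' j) :
    jointMass Par P i b π = jointMass Par P i b π' := by
  unfold jointMass
  refine Finset.sum_congr rfl fun x _ => ?_
  have : (x i = b ∧ ∀ j ∈ Par i, x j = π j) ↔ (x i = b ∧ ∀ j ∈ Par i, x j = π' j) :=
    and_congr_right fun _ => forall₂_congr fun j hj => by rw [h j hj]
  simp only [this]

lemma empFrac_congr {n m : ℕ} (Par : Fin n → Finset (Fin n)) (s : Fin m → Fin n → Bool)
    (i : Fin n) (b : Bool) {π π' : Fin n → Bool} (h : ∀ j ∈ Par i, π j = π' j) :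
    empFrac Par s i b π = empFrac Par s i b π' := by
  unfold empFrac
  have : ∀ k, (s k i = b ∧ ∀ j ∈ Par i, s k j = π j) ↔
      (s k i = b ∧ ∀ j ∈ Par i, s k j = π' j) := fun k =>
    and_congr_right fun _ => forall₂_congr fun j hj => by rw [h j hj]
  simp only [this]

open Classical in
/-- A single configuration fails with probability at most `exp (-L)` once `m τ ≥ 3 L`. The constant
`3` suffices because `3 (2 log 2 - 1) ≥ 1` and `3 (2 - 2 log 2) ≥ 1`. -/
lemma badMass_le {n m : ℕ} (Par : Fin n → Finset (Fin n)) (P : (Fin n → Bool) → ℝ)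
    (hP : ∀ x, 0 ≤ P x) (hP1 : ∑ x, P x = 1) (τ L : ℝ) (hτ : 0 < τ) (hL : 0 < L)
    (hm : 3 * L ≤ m * τ) (i : Fin n) (b : Bool) (π : Fin n → Bool) :
    ∑ s : Fin m → Fin n → Bool, (if Bad Par P τ i b π s then ∏ j, P (s j) else 0)
      ≤ Real.exp (-L) := by
  have hm0 : (0 : ℝ) < m := by
    by_contra h
    nlinarith
  have hl2 := Real.log_two_gt_d9
  have hl2' := Real.log_two_lt_d9
  have hcount : ∀ s : Fin m → Fin n → Bool, empFrac Par s i b π * m =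
      (({j : Fin m | s j i = b ∧ ∀ l ∈ Par i, s j l = π l} : Finset (Fin m)).card : ℝ) :=
    fun s => div_mul_cancel₀ _ hm0.ne'
  by_cases hlight : jointMass Par P i b π ≤ τ
  · refine (chernoff P hP hP1 (fun x => x i = b ∧ ∀ j ∈ Par i, x j = π j)
      (jointMass Par P i b π) (by unfold jointMass; rfl) m (Real.log 2) (2 * τ * m) _ ?_).trans ?_
    · rintro s (⟨h, -⟩ | ⟨-, h⟩)
      · linarith
      · rw [← hcount]
        gcongr
    · rw [Real.exp_log two_pos]
      refine Real.exp_le_exp.2 ?_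
      nlinarith [mul_le_mul_of_nonneg_right hlight hm0.le]
  · by_cases hheavy : 4 * τ ≤ jointMass Par P i b π
    · refine (chernoff P hP hP1 (fun x => x i = b ∧ ∀ j ∈ Par i, x j = π j)
        (jointMass Par P i b π) (by unfold jointMass; rfl) m (-Real.log 2) (2 * τ * m) _ ?_).trans ?_
      · rintro s (⟨-, h⟩ | ⟨h, -⟩)
        · rw [← hcount]
          have := mul_le_mul_of_nonneg_right h hm0.le
          nlinarith
        · exact absurd h hlight
      · rw [Real.exp_neg, Real.exp_log two_pos]
        refine Real.exp_le_exp.2 ?_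
        nlinarith [mul_le_mul_of_nonneg_right hheavy hm0.le]
    · refine (Finset.sum_nonpos fun s _ => ?_).trans (Real.exp_pos _).le
      rw [if_neg]
      rintro (⟨h, -⟩ | ⟨h, -⟩)
      exacts [hheavy h, hlight h]

/-- Majority-support identification. With probability at least `5/6` over the
`m` i.i.d. samples, every heavy configuration (mass `≥ 4τ`) has empirical fraction `> 2τ`,
every light configuration (mass `≤ τ`) has empirical fraction `≤ 2τ`, and consequently the
empirically-selected sets `S̃ₖ` satisfy `S'ₖ ⊆ S̃ₖ ⊆ Sₖ` for all `k ∈ [n]`. -/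
theorem stmt_9 {n d : ℕ} (hn : 1 ≤ n) (hd : d ≤ n)
    (Par : Fin n → Finset (Fin n))
    (hdeg : ∀ i, (Par i).card ≤ d) (hanc : ∀ i, ∀ j ∈ Par i, j < i)
    (P : (Fin n → Bool) → ℝ) (hP : (∀ x, 0 ≤ P x) ∧ ∑ x, P x = 1)
    (c ε : ℝ) (hc : 0 < c) (hε : 0 < ε) (hε1 : ε < 1)
    (τ : ℝ) (hτ : τ = c * ε ^ 2 / (2 ^ (d + 1) * n))
    (m : ℕ)
    (hm : (3 / c) * (2 ^ (d + 1) * n * Real.log (6 * 2 ^ (d + 1) * n)) / ε ^ 2 ≤ (m : ℝ)) :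
    5 / 6 ≤
      ∑ s : Fin m → Fin n → Bool,
        (if (∀ i : Fin n, ∀ b : Bool, ∀ π : Fin n → Bool,
              (4 * τ ≤ jointMass Par P i b π → 2 * τ < empFrac Par s i b π) ∧
              (jointMass Par P i b π ≤ τ → empFrac Par s i b π ≤ 2 * τ)) ∧
            (∀ k : ℕ, 1 ≤ k → k ≤ n → ∀ x : Fin n → Bool,
              ((∀ i : Fin n, (i : ℕ) < k → 4 * τ ≤ jointMass Par P i (x i) x) →
                (∀ i : Fin n, (i : ℕ) < k → 2 * τ < empFrac Par s i (x i) x)) ∧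
              ((∀ i : Fin n, (i : ℕ) < k → 2 * τ < empFrac Par s i (x i) x) →
                (∀ i : Fin n, (i : ℕ) < k → τ ≤ jointMass Par P i (x i) x)))
          then ∏ j, P (s j) else 0) := by
  classical
  obtain ⟨hP0, hP1⟩ := hP
  have hn0 : (0 : ℝ) < n := by exact_mod_cast hn
  have hn1 : (1 : ℝ) ≤ n := by exact_mod_cast hn
  have hN1 : (1 : ℝ) ≤ 2 ^ (d + 1) * n :=
    one_le_mul_of_one_le_of_one_le (one_le_pow₀ (by norm_num)) hn1
  set N : ℝ := 2 ^ (d + 1) * n with hN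
  have hτ0 : 0 < τ := by rw [hτ]; positivity
  set L : ℝ := Real.log (6 * N) with hLdef
  have hL : 0 < L := Real.log_pos (by linarith)
  have hmτ : 3 * L ≤ m * τ := by
    have h6 : (6 : ℝ) * 2 ^ (d + 1) * n = 6 * N := by rw [hN]; ring
    rw [h6, ← hLdef] at hm
    calc 3 * L = (3 / c * (N * L) / ε ^ 2) * τ := by
          rw [hτ]
          field_simp
      _ ≤ m * τ := by gcongr
  have hexp : Real.exp (-L) = 1 / (6 * N) := by
    rw [Real.exp_neg, hLdef, Real.exp_log (by linarith), one_div]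
  have htot : ∑ s : Fin m → Fin n → Bool, ∏ j, P (s j) = 1 := by
    rw [← Fintype.sum_pow, hP1, one_pow]
  -- The union bound over the representatives `configOf T`, `T ⊆ Πᵢ`.
  have hbad : ∑ s : Fin m → Fin n → Bool, ∑ i : Fin n, ∑ b : Bool, ∑ T ∈ (Par i).powerset,
      (if Bad Par P τ i b (configOf T) s then ∏ j, P (s j) else 0) ≤ 1 / 6 := by
    rw [Finset.sum_comm]
    calc _ ≤ ∑ i : Fin n, (2 ^ (d + 1) * (1 / (6 * N)) : ℝ) := by
          refine Finset.sum_le_sum fun i _ => ?_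
          rw [Finset.sum_comm]
          calc _ ≤ ∑ b : Bool, (2 ^ d * (1 / (6 * N)) : ℝ) := by
                refine Finset.sum_le_sum fun b _ => ?_
                rw [Finset.sum_comm]
                refine (Finset.sum_le_card_nsmul _ _ _ fun T _ =>
                  badMass_le Par P hP0 hP1 τ L hτ0 hL hmτ i b (configOf T)).trans ?_
                rw [Finset.card_powerset, nsmul_eq_mul, hexp]
                push_cast
                gcongr
                · norm_num
                · exact hdeg i
            _ = _ := by
                rw [Finset.sum_const, Finset.card_univ, Fintype.card_bool, nsmul_eq_mul]
                push_cast
                ring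
      _ = N * (1 / (6 * N)) := by
          rw [Finset.sum_const, Finset.card_univ, Fintype.card_fin, nsmul_eq_mul, hN]
          ring
      _ = 1 / 6 := by
          field_simp
  suffices h : ∑ s : Fin m → Fin n → Bool, ∏ j, P (s j) ≤ _ + 1 / 6 by
    rw [htot] at h
    refine le_trans ?_ (sub_le_iff_le_add.2 h)
    norm_num
  refine le_trans ?_ (add_le_add_right hbad _)
  rw [← Finset.sum_add_distrib]
  refine Finset.sum_le_sum fun s _ => ?_
  have hw : 0 ≤ ∏ j, P (s j) := Finset.prod_nonneg fun j _ => hP0 _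
  have hterm : ∀ (i : Fin n) (b : Bool) (T : Finset (Fin n)),
      0 ≤ (if Bad Par P τ i b (configOf T) s then ∏ j, P (s j) else 0) := by
    intro i b T
    split_ifs
    exacts [hw, le_rfl]
  by_cases hex : ∃ i b, ∃ T ∈ (Par i).powerset, Bad Par P τ i b (configOf T) s
  · obtain ⟨i, b, T, hT, hB⟩ := hex
    refine le_add_of_nonneg_of_le (by split_ifs <;> simp [hw]) ?_
    calc ∏ j, P (s j) = (if Bad Par P τ i b (configOf T) s then ∏ j, P (s j) else 0) :=
          (if_pos hB).symm
      _ ≤ ∑ T ∈ (Par i).powerset,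
            (if Bad Par P τ i b (configOf T) s then ∏ j, P (s j) else 0) :=
          Finset.single_le_sum
            (f := fun T => if Bad Par P τ i b (configOf T) s then ∏ j, P (s j) else 0)
            (fun T _ => hterm i b T) hT
      _ ≤ ∑ b : Bool, ∑ T ∈ (Par i).powerset,
            (if Bad Par P τ i b (configOf T) s then ∏ j, P (s j) else 0) :=
          Finset.single_le_sum
            (f := fun b => ∑ T ∈ (Par i).powerset,
              if Bad Par P τ i b (configOf T) s then ∏ j, P (s j) else 0)
            (fun b _ => Finset.sum_nonneg fun T _ => hterm i b T) (Finset.mem_univ b)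
      _ ≤ _ :=
          Finset.single_le_sum
            (f := fun i => ∑ b : Bool, ∑ T ∈ (Par i).powerset,
              if Bad Par P τ i b (configOf T) s then ∏ j, P (s j) else 0)
            (fun i _ => Finset.sum_nonneg fun b _ => Finset.sum_nonneg fun T _ => hterm i b T)
            (Finset.mem_univ i)
  · have hgood : ∀ i : Fin n, ∀ b : Bool, ∀ π : Fin n → Bool,
        (4 * τ ≤ jointMass Par P i b π → 2 * τ < empFrac Par s i b π) ∧
        (jointMass Par P i b π ≤ τ → empFrac Par s i b π ≤ 2 * τ) := by
      intro i b π
      obtain ⟨T, hT, hπ⟩ := exists_configOf (Par i) π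
      rw [jointMass_congr Par P i b hπ, empFrac_congr Par s i b hπ]
      refine ⟨fun h => ?_, fun h => ?_⟩
      · by_contra h'
        exact hex ⟨i, b, T, hT, Or.inl ⟨h, not_lt.1 h'⟩⟩
      · by_contra h'
        exact hex ⟨i, b, T, hT, Or.inr ⟨h, not_le.1 h'⟩⟩
    rw [if_pos]
    · exact le_add_of_nonneg_right (Finset.sum_nonneg fun i _ => Finset.sum_nonneg fun b _ =>
        Finset.sum_nonneg fun T _ => hterm i b T)
    · refine ⟨hgood, fun k _ _ x => ⟨fun h i hi => (hgood i (x i) x).1 (h i hi),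
        fun h i hi => ?_⟩⟩
      by_contra h'
      exact absurd ((hgood i (x i) x).2 (not_le.1 h').le) (not_le.2 (h i hi))
end

section
/- Let P be a probability distribution on {0,1}^n that is Markov with respect to a degree-d parent map Π on [n], let Q be any probability distribution on {0,1}^n, let c > 0, ε ∈ (0,1), and let 2 ≤ k ≤ n. Then (2·P_{X_1,…,X_{k−1}}(S_{k−1}) − Q_{X_1,…,X_{k−1}}(S_{k−1})) − (2·P_{X_1,…,X_k}(S_k) − Q_{X_1,…,X_k}(S_k)) ≤ 2c·ε²/n. -/
/-!
Passing from `S_{k-1}` to `S_k` can only shrink the set, so the `Q` terms contribute a nonpositive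
amount. The `P` mass lost is at most the mass of the configurations whose `k`-th pair
`(x_k, x_{Π_k})` has probability below `τ`. There are at most `2 ^ (d + 1)` values of that pair, each
light one carrying mass less than `τ = cε² / (2 ^ (d + 1) n)`, so the loss is at most `cε² / n`
(`light_mass_le`), and doubling gives the bound.
-/

open Finset

/-- `P` is Markov with respect to the parent map `Par`: it factorizes as a product of
conditional kernels, the `i`-th kernel depending only on the coordinates in `Par i`. -/
def IsMarkov {n : ℕ} (Par : Fin n → Finset (Fin n)) (P : (Fin n → Bool) → ℝ) : Prop :=
  ∃ p : Fin n → (Fin n → Bool) → Bool → ℝ,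
    (∀ i x, (∀ b, 0 ≤ p i x b) ∧ p i x true + p i x false = 1) ∧
    (∀ i x y, (∀ j ∈ Par i, x j = y j) → p i x = p i y) ∧
    (∀ x, P x = ∏ i, p i x (x i))

/-- Membership of (the first `k` coordinates of) `x` in the set
`Sₖ = {x : ∀ i ≤ k, P(Xᵢ = xᵢ, X_{Πᵢ} = πᵢ(x)) ≥ τ}`. -/
def memS {n : ℕ} (Par : Fin n → Finset (Fin n)) (P : (Fin n → Bool) → ℝ)
    (τ : ℝ) (k : ℕ) (x : Fin n → Bool) : Prop :=
  ∀ i : Fin n, (i : ℕ) < k → τ ≤ jointMass Par P i (x i) x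

open scoped Classical in
/-- The mass `R_{X_1,…,X_k}(Sₖ)` that the marginal of `R` on the first `k` coordinates
assigns to `Sₖ` (where `Sₖ` is defined via `P`). -/
noncomputable def massOnS {n : ℕ} (Par : Fin n → Finset (Fin n))
    (P : (Fin n → Bool) → ℝ) (τ : ℝ) (k : ℕ) (R : (Fin n → Bool) → ℝ) : ℝ :=
  ∑ x : Fin n → Bool, if memS Par P τ k x then R x else 0

/-- The event that the pair `(xᵢ, x_{Πᵢ})` is light (has mass below `τ`) is a union of at most
`2 ^ (d + 1)` cylinders over the coordinates `insert i (Par i)`, each of mass at most `τ`. -/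
lemma light_mass_le {n d : ℕ} (Par : Fin n → Finset (Fin n)) (P : (Fin n → Bool) → ℝ)
    (hP : ∀ x, 0 ≤ P x) (i : Fin n) (hdeg : (Par i).card ≤ d) (τ : ℝ) (hτ : 0 ≤ τ) :
    ∑ x : Fin n → Bool, (if jointMass Par P i (x i) x < τ then P x else 0)
      ≤ 2 ^ (d + 1) * τ := by
  classical
  set T : Finset (Fin n) := insert i (Par i) with hT
  have hcard : T.card ≤ d + 1 := (Finset.card_insert_le _ _).trans (by omega)
  rw [← Finset.sum_fiberwise (s := univ) (g := fun (x : Fin n → Bool) (j : T) => x j)]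
  have hfiber : ∀ y : T → Bool,
      ∑ x ∈ univ.filter (fun x : Fin n → Bool => (fun j : T => x j) = y),
        (if jointMass Par P i (x i) x < τ then P x else 0) ≤ τ := by
    intro y
    by_cases h : ∃ x₀ : Fin n → Bool,
        (fun j : T => x₀ j) = y ∧ jointMass Par P i (x₀ i) x₀ < τ
    · obtain ⟨x₀, hx₀, hlt⟩ := h
      refine le_trans ?_ hlt.le
      -- The fiber through `x₀` is contained in the event whose mass is `jointMass` at `x₀`.
      rw [Finset.sum_filter, jointMass]
      refine Finset.sum_le_sum fun x _ => ?_
      by_cases hx : (fun j : T => x j) = y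
      · have heq : ∀ j ∈ T, x j = x₀ j := fun j hj =>
          congrFun (hx.trans hx₀.symm) ⟨j, hj⟩
        have hcyl : x i = x₀ i ∧ ∀ j ∈ Par i, x j = x₀ j :=
          ⟨heq i (Finset.mem_insert_self _ _), fun j hj => heq j (Finset.mem_insert_of_mem hj)⟩
        rw [if_pos hx, if_pos hcyl]
        split_ifs
        · exact le_rfl
        · exact hP x
      · rw [if_neg hx]
        split_ifs
        · exact hP x
        · exact le_rfl
    · push Not at h
      refine le_trans (le_of_eq (Finset.sum_eq_zero fun x hx => ?_)) hτ
      exact if_neg (not_lt.mpr (h x (Finset.mem_filter.mp hx).2))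
  refine (Finset.sum_le_sum fun y _ => hfiber y).trans ?_
  rw [Finset.sum_const, nsmul_eq_mul, Finset.card_univ, Fintype.card_fun, Fintype.card_bool,
    Fintype.card_coe]
  push_cast
  gcongr
  norm_num

/-- Lemma `residual_1`: the residual term
`(2 P(S_{k−1}) − Q(S_{k−1})) − (2 P(Sₖ) − Q(Sₖ))` is at most `2cε²/n`. -/
theorem stmt_10 {n d : ℕ} (hd : d ≤ n)
    (Par : Fin n → Finset (Fin n))
    (hdeg : ∀ i, (Par i).card ≤ d) (hanc : ∀ i, ∀ j ∈ Par i, j < i)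
    (P Q : (Fin n → Bool) → ℝ)
    (hP : (∀ x, 0 ≤ P x) ∧ ∑ x, P x = 1) (hPM : IsMarkov Par P)
    (hQ : (∀ x, 0 ≤ Q x) ∧ ∑ x, Q x = 1)
    (c ε : ℝ) (hc : 0 < c) (hε : 0 < ε) (hε1 : ε < 1)
    (τ : ℝ) (hτ : τ = c * ε ^ 2 / (2 ^ (d + 1) * n))
    (k : ℕ) (hk2 : 2 ≤ k) (hkn : k ≤ n) :
    (2 * massOnS Par P τ (k - 1) P - massOnS Par P τ (k - 1) Q) -
        (2 * massOnS Par P τ k P - massOnS Par P τ k Q) ≤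
      2 * c * ε ^ 2 / n := by
  classical
  have hn : (0 : ℝ) < n := by exact_mod_cast (by omega : 0 < n)
  have hτ0 : 0 ≤ τ := by rw [hτ]; positivity
  have hQle : massOnS Par P τ k Q ≤ massOnS Par P τ (k - 1) Q := by
    unfold massOnS
    refine Finset.sum_le_sum fun x _ => ?_
    by_cases h : memS Par P τ k x
    · have h' : memS Par P τ (k - 1) x := fun i hi => h i (by omega)
      rw [if_pos h, if_pos h']
    · rw [if_neg h]
      split_ifs
      · exact hQ.1 x
      · exact le_rfl
  -- Coordinates are indexed from `0`, so the `k`-th one is `k - 1`.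
  let i : Fin n := ⟨k - 1, by omega⟩
  have hPle : massOnS Par P τ (k - 1) P ≤ massOnS Par P τ k P +
      ∑ x : Fin n → Bool, (if jointMass Par P i (x i) x < τ then P x else 0) := by
    unfold massOnS
    rw [← Finset.sum_add_distrib]
    refine Finset.sum_le_sum fun x _ => ?_
    have hx := hP.1 x
    by_cases hl : jointMass Par P i (x i) x < τ
    · rw [if_pos hl]
      split_ifs <;> linarith
    · rw [if_neg hl]
      by_cases h : memS Par P τ (k - 1) x
      · have h' : memS Par P τ k x := by
          intro j hj
          by_cases hjk : (j : ℕ) < k - 1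
          · exact h j hjk
          · have hji : j = i := Fin.ext (by simp only [i]; omega)
            rw [hji]
            exact not_lt.mp hl
        rw [if_pos h, if_pos h', add_zero]
      · rw [if_neg h]
        split_ifs <;> linarith
  have hlight := light_mass_le Par P hP.1 i (hdeg i) τ hτ0
  have hval : (2 : ℝ) ^ (d + 1) * τ = c * ε ^ 2 / n := by
    rw [hτ]; field_simp
  have hgoal : 2 * c * ε ^ 2 / n = 2 * (c * ε ^ 2 / n) := by ring
  rw [hgoal]
  linarith
end

section
/- Let P and Q be probability distributions on {0,1}^n, both Markov with respect to the same degree-d parent map Π on [n], with Q(x) > 0 for all x. Let c, c' > 0, ε ∈ (0,1), m ≥ 1, and 2 ≤ k ≤ n. Suppose that for every a ∈ A_{S_k}: −1 + Σ_{b ∈ B(a,S_k)} P_{X_k|Π_k}(b|a)²/Q_{X_k|Π_k}(b|a) ≤ 2c'·log(2^d n)/(m·P(Π_k = a)). Then Σ_{a ∈ A_{S_k}} Σ_{g ∈ C(a,S_k)} (P(Π_k=a)²/Q(Π_k=a)) · (P_{X_1,…,X_{k−1}∖Π_k | Π_k}(g|a)²/Q_{X_1,…,X_{k−1}∖Π_k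 | Π_k}(g|a)) · (−1 + Σ_{b ∈ B(a,S_k)} P_{X_k|Π_k}(b|a)²/Q_{X_k|Π_k}(b|a)) ≤ (2c'·2^d·n·log(2^d n)/(c·m·ε²))·d_{χ²}(P_{X_1,…,X_{k−1}}, Q_{X_1,…,X_{k−1}}, S_{k−1}) + 4c'·2^d·log(2^d n)/m. -/
/-!
Write `p(a) = P(Π_K = a)`, and `r`, `s` for the masses that `P`, `Q` give to the string on the
first `k - 1` coordinates determined by `(a, g)`. The weight in front of the bracket is `r² / s`
(the parent masses cancel), and the bracket is at most `L / (m p(a))` with `L = 2 c' log (2^d n)`,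
by hypothesis. Now
`r² / s = (r - s)² / s + 2 r - s ≤ (r - s)² / s + 2 r`.
On the first summand `1 / p(a)` is bounded by `2^d n / (c ε²)`, the threshold defining the set of
admissible `a`; this gives the χ² term. On the second, the sum of `r` over `g` is at most `p(a)`
(`sum_restMass_le`), so each of the at most `2^d` configurations `a` contributes at most `2 L / m`.
-/

open Finset

/-- `P(Π_K = a)` for a configuration `a` of the parents of node `K`. -/
noncomputable def parentMass {n : ℕ} (Par : Fin n → Finset (Fin n))
    (P : (Fin n → Bool) → ℝ) (K : Fin n) (a : Par K → Bool) : ℝ :=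
  ∑ x : Fin n → Bool, if ∀ j : Par K, x j.1 = a j then P x else 0

/-- `P(X_K = b, Π_K = a)`. -/
noncomputable def jointKMass {n : ℕ} (Par : Fin n → Finset (Fin n))
    (P : (Fin n → Bool) → ℝ) (K : Fin n) (b : Bool) (a : Par K → Bool) : ℝ :=
  ∑ x : Fin n → Bool, if x K = b ∧ ∀ j : Par K, x j.1 = a j then P x else 0

/-- The string on the first `k - 1` coordinates obtained by combining the parent
configuration `a` (on `Par K`) with the configuration `g` on the remaining coordinates
(extended by `false` elsewhere). -/
def combine {n : ℕ} (Par : Fin n → Finset (Fin n)) (K : Fin n) (k : ℕ)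
    (a : Par K → Bool) (g : {j : Fin n // (j : ℕ) < k - 1 ∧ j ∉ Par K} → Bool) :
    Fin n → Bool :=
  fun j =>
    if h : j ∈ Par K then a ⟨j, h⟩
    else if h2 : (j : ℕ) < k - 1 then g ⟨j, h2, h⟩ else false

/-- `P(X_1, …, X_{k-1} = (combine a g))`: the marginal mass, on the first `k - 1`
coordinates, of the string determined by the pair `(a, g)`. -/
noncomputable def restMass {n : ℕ} (Par : Fin n → Finset (Fin n))
    (P : (Fin n → Bool) → ℝ) (K : Fin n) (k : ℕ)
    (a : Par K → Bool) (g : {j : Fin n // (j : ℕ) < k - 1 ∧ j ∉ Par K} → Bool) : ℝ :=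
  ∑ x : Fin n → Bool,
    if ∀ j : Fin n, (j : ℕ) < k - 1 → x j = combine Par K k a g j then P x else 0

lemma restMass_nonneg {n : ℕ} (Par : Fin n → Finset (Fin n)) (P : (Fin n → Bool) → ℝ)
    (hP : ∀ x, 0 ≤ P x) (K : Fin n) (k : ℕ) (a : Par K → Bool)
    (g : {j : Fin n // (j : ℕ) < k - 1 ∧ j ∉ Par K} → Bool) :
    0 ≤ restMass Par P K k a g := by
  unfold restMass
  exact Finset.sum_nonneg fun x _ => by split_ifs <;> simp [hP x]

lemma restMass_pos {n : ℕ} (Par : Fin n → Finset (Fin n)) (Q : (Fin n → Bool) → ℝ)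
    (hQ : ∀ x, 0 < Q x) (K : Fin n) (k : ℕ) (a : Par K → Bool)
    (g : {j : Fin n // (j : ℕ) < k - 1 ∧ j ∉ Par K} → Bool) :
    0 < restMass Par Q K k a g := by
  unfold restMass
  refine Finset.sum_pos' (fun x _ => ?_) ⟨combine Par K k a g, Finset.mem_univ _, ?_⟩
  · split_ifs <;> simp [(hQ x).le]
  · simpa using hQ _

/-- Distinct `g` describe disjoint events, all contained in `Π_K = a`: the string `x` determines
`g` as its restriction to the non-parents. -/
lemma sum_restMass_le {n : ℕ} (Par : Fin n → Finset (Fin n)) (P : (Fin n → Bool) → ℝ)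
    (hP : ∀ x, 0 ≤ P x) (K : Fin n) (k : ℕ) (hK : (K : ℕ) = k - 1)
    (hanc : ∀ j ∈ Par K, j < K) (a : Par K → Bool) :
    ∑ g : {j : Fin n // (j : ℕ) < k - 1 ∧ j ∉ Par K} → Bool, restMass Par P K k a g ≤
      parentMass Par P K a := by
  unfold restMass parentMass
  rw [Finset.sum_comm]
  refine Finset.sum_le_sum fun x _ => ?_
  calc _ ≤ ∑ g : {j : Fin n // (j : ℕ) < k - 1 ∧ j ∉ Par K} → Bool,
        if g = (fun j => x j.1) then (if ∀ j : Par K, x j.1 = a j then P x else 0) else 0 := by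
        refine Finset.sum_le_sum fun g _ => ?_
        by_cases h : ∀ j : Fin n, (j : ℕ) < k - 1 → x j = combine Par K k a g j
        · have h1 : g = fun j => x j.1 := by
            funext j
            rw [h j.1 j.2.1]
            simp [combine, j.2.1, j.2.2]
          have h2 : ∀ j : Par K, x j.1 = a j := by
            intro j
            have hj : (j.1 : ℕ) < k - 1 := by
              rw [← hK]
              exact hanc j.1 j.2
            rw [h j.1 hj]
            simp [combine]
          rw [if_pos h, if_pos h1, if_pos h2]
        · rw [if_neg h]
          split_ifs <;> simp [hP x]
    _ = _ := by simp

/-- The bound on one summand: `r`, `s` are the masses of a string under `P`, `Q`, `p`, `q` those of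
its parent configuration, `t` is the lower threshold for `p`, and `E` is the bracket. -/
lemma residual_term_le {r s p q t E L m : ℝ} (hs : 0 < s) (hq : 0 < q) (ht : 0 < t)
    (hp : t ≤ p) (hL : 0 ≤ L) (hm : 0 < m) (hE : E ≤ L / (m * p)) :
    p ^ 2 / q * ((r / p) ^ 2 / (s / q)) * E ≤
      L / (m * t) * ((r - s) ^ 2 / s) + 2 * L / (m * p) * r := by
  have hp0 : 0 < p := ht.trans_le hp
  have hw : p ^ 2 / q * ((r / p) ^ 2 / (s / q)) = r ^ 2 / s := by field_simp
  have hsplit : r ^ 2 / s ≤ (r - s) ^ 2 / s + 2 * r := by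
    have : r ^ 2 / s = (r - s) ^ 2 / s + 2 * r - s := by
      field_simp
      ring
    linarith
  have hchi : 0 ≤ (r - s) ^ 2 / s := by positivity
  have hLp : 0 ≤ L / (m * p) := by positivity
  have hLt : L / (m * p) ≤ L / (m * t) := by gcongr
  rw [hw]
  calc r ^ 2 / s * E ≤ r ^ 2 / s * (L / (m * p)) := by gcongr
    _ ≤ ((r - s) ^ 2 / s + 2 * r) * (L / (m * p)) := by gcongr
    _ = L / (m * p) * ((r - s) ^ 2 / s) + 2 * L / (m * p) * r := by ring
    _ ≤ _ := by gcongr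

open scoped Classical in
/-- Lemma `residual_2`: bound on the main residual term by the restricted
χ² divergence of the `(k-1)`-dimensional marginals on `S_{k-1}`. -/
theorem stmt_11 {n d : ℕ} (hd : d ≤ n)
    (Par : Fin n → Finset (Fin n))
    (hdeg : ∀ i, (Par i).card ≤ d) (hanc : ∀ i, ∀ j ∈ Par i, j < i)
    (P Q : (Fin n → Bool) → ℝ)
    (hP : (∀ x, 0 ≤ P x) ∧ ∑ x, P x = 1) (hPM : IsMarkov Par P)
    (hQ : (∀ x, 0 < Q x) ∧ ∑ x, Q x = 1) (hQM : IsMarkov Par Q)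
    (c c' ε : ℝ) (hc : 0 < c) (hc' : 0 < c') (hε : 0 < ε) (hε1 : ε < 1)
    (m : ℕ) (hm : 1 ≤ m)
    (τ : ℝ) (hτ : τ = c * ε ^ 2 / (2 ^ (d + 1) * n))
    (k : ℕ) (hk2 : 2 ≤ k) (hkn : k ≤ n)
    (K : Fin n) (hK : (K : ℕ) = k - 1)
    (hyp : ∀ a : Par K → Bool,
      c * ε ^ 2 / (2 ^ d * n) ≤ parentMass Par P K a →
      -1 + ∑ b : Bool,
          (if τ ≤ jointKMass Par P K b a then
            (jointKMass Par P K b a / parentMass Par P K a) ^ 2 /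
              (jointKMass Par Q K b a / parentMass Par Q K a)
          else 0) ≤
        2 * c' * Real.log (2 ^ d * n) / (m * parentMass Par P K a)) :
    (∑ a : Par K → Bool,
        if c * ε ^ 2 / (2 ^ d * n) ≤ parentMass Par P K a then
          ∑ g : {j : Fin n // (j : ℕ) < k - 1 ∧ j ∉ Par K} → Bool,
            if memS Par P τ (k - 1) (combine Par K k a g) then
              (parentMass Par P K a ^ 2 / parentMass Par Q K a) *
                ((restMass Par P K k a g / parentMass Par P K a) ^ 2 /
                  (restMass Par Q K k a g / parentMass Par Q K a)) *
                (-1 + ∑ b : Bool,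
                  (if τ ≤ jointKMass Par P K b a then
                    (jointKMass Par P K b a / parentMass Par P K a) ^ 2 /
                      (jointKMass Par Q K b a / parentMass Par Q K a)
                  else 0))
            else 0
        else 0) ≤
      (2 * c' * 2 ^ d * n * Real.log (2 ^ d * n) / (c * m * ε ^ 2)) *
          (∑ a : Par K → Bool,
            ∑ g : {j : Fin n // (j : ℕ) < k - 1 ∧ j ∉ Par K} → Bool,
              if memS Par P τ (k - 1) (combine Par K k a g) then
                (restMass Par P K k a g - restMass Par Q K k a g) ^ 2 /
                  restMass Par Q K k a g
              else 0) +
        4 * c' * 2 ^ d * Real.log (2 ^ d * n) / m := by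
  have hn : (2 : ℝ) ≤ n := by exact_mod_cast hk2.trans hkn
  have hm0 : (0 : ℝ) < m := by exact_mod_cast hm
  have hlog : 0 ≤ Real.log (2 ^ d * n) := by
    apply Real.log_nonneg
    have : (1 : ℝ) ≤ 2 ^ d := one_le_pow₀ (by norm_num)
    nlinarith
  have hL : 0 ≤ 2 * c' * Real.log (2 ^ d * n) := by positivity
  set L := 2 * c' * Real.log (2 ^ d * n) with hLdef
  have ht : 0 < c * ε ^ 2 / (2 ^ d * n) := by positivity
  have hC : 2 * c' * 2 ^ d * n * Real.log (2 ^ d * n) / (c * m * ε ^ 2) =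
      L / (m * (c * ε ^ 2 / (2 ^ d * n))) := by
    rw [hLdef]
    field_simp
  have hD : 4 * c' * 2 ^ d * Real.log (2 ^ d * n) / m = 2 ^ d * (2 * L / m) := by
    rw [hLdef]
    ring
  rw [hC, hD]
  set t := c * ε ^ 2 / (2 ^ d * n) with htdef
  set chi : (Par K → Bool) → ({j : Fin n // (j : ℕ) < k - 1 ∧ j ∉ Par K} → Bool) → ℝ :=
    fun a g => if memS Par P τ (k - 1) (combine Par K k a g) then
      (restMass Par P K k a g - restMass Par Q K k a g) ^ 2 / restMass Par Q K k a g else 0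
    with hchi
  have hchi0 : ∀ a g, 0 ≤ chi a g := by
    intro a g
    have := restMass_pos Par Q hQ.1 K k a g
    simp only [hchi]
    split_ifs <;> positivity
  have hLm : 0 ≤ 2 * L / m := by positivity
  have hLt : 0 ≤ L / (m * t) := by positivity
  have hcard : (Fintype.card (Par K → Bool) : ℝ) ≤ 2 ^ d := by
    simpa using pow_le_pow_right₀ (by norm_num : (1 : ℝ) ≤ 2) (hdeg K)
  calc _ ≤ ∑ a : Par K → Bool, (L / (m * t) * ∑ g, chi a g + 2 * L / m) := by
        refine Finset.sum_le_sum fun a _ => ?_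
        split_ifs with ha
        · have hp0 : 0 < parentMass Par P K a := ht.trans_le ha
          have hq0 : 0 < parentMass Par Q K a :=
            (Finset.sum_pos (fun g _ => restMass_pos Par Q hQ.1 K k a g)
              Finset.univ_nonempty).trans_le
              (sum_restMass_le Par Q (fun x => (hQ.1 x).le) K k hK (hanc K) a)
          have hE := hyp a ha
          calc _ ≤ ∑ g, (L / (m * t) * chi a g +
                2 * L / (m * parentMass Par P K a) * restMass Par P K k a g) := by
                refine Finset.sum_le_sum fun g _ => ?_
                have hr := restMass_nonneg Par P hP.1 K k a g
                by_cases hS : memS Par P τ (k - 1) (combine Par K k a g)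
                · simp only [hchi, if_pos hS]
                  exact residual_term_le (restMass_pos Par Q hQ.1 K k a g) hq0 ht ha hL hm0
                    hE
                · rw [if_neg hS]
                  have := hchi0 a g
                  positivity
            _ = L / (m * t) * ∑ g, chi a g + 2 * L / (m * parentMass Par P K a) *
                ∑ g, restMass Par P K k a g := by
                rw [Finset.sum_add_distrib, Finset.mul_sum, Finset.mul_sum]
            _ ≤ L / (m * t) * ∑ g, chi a g + 2 * L / (m * parentMass Par P K a) *
                parentMass Par P K a := by
                gcongr
                exact sum_restMass_le Par P hP.1 K k hK (hanc K) a
            _ = _ := by field_simp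
        · have : 0 ≤ ∑ g, chi a g := Finset.sum_nonneg fun g _ => hchi0 a g
          positivity
    _ = L / (m * t) * ∑ a, ∑ g, chi a g + Fintype.card (Par K → Bool) * (2 * L / m) := by
        rw [Finset.sum_add_distrib, ← Finset.mul_sum, Finset.sum_const, nsmul_eq_mul,
          Finset.card_univ]
    _ ≤ _ := by gcongr
end

section
/- Let P and Q be probability distributions on {0,1}^n, both Markov with respect to the same degree-d parent map Π on [n], with Q(x) > 0 for all x. Then 1 + d_{χ²}(P, Q) ≤ Π_{i=1}^n (1 + max_{π_i} d_{χ²}(P_{X_i | Π_i = π_i}, Q_{X_i | Π_i = π_i})), where the maximum is over all configurations π_i ∈ {0,1}^{Π_i} with P(Π_i = π_i) > 0. -/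
/-!
Expanding the square, `1 + χ²(P, Q) = ∑ₓ P(x)² / Q(x) = ∑ₓ ∏ᵢ Rᵢ(x)` with
`Rᵢ = pᵢ² / qᵢ` formed from the Markov kernels at node `i`. The sum is evaluated by summing out
the last node first: given the earlier coordinates, `∑_b pᵢ(b)² / qᵢ(b)` is `1 + χ²` of the two
kernels at node `i`, which is at most the `i`-th factor on the right-hand side whenever the parent
configuration has positive `P`-mass. If it has mass zero then some earlier `pⱼ` vanishes, and so
does the whole term.

To avoid changing the index type, all sums run over `{0,1}ⁿ`, with powers of `2` accounting for the
coordinates the summand does not depend on. Summing out one coordinate is then `two_mul_sum`, a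
pairing of each point with its flip. The same device (`sum_marginal`) gives `jointMass_eq`, which
identifies the conditional law of `Xᵢ` given its parents with the kernel `pᵢ`.
-/

open Finset

/-- The probability `P(X_{Πᵢ} = π)` of a parent configuration. -/
noncomputable def parentCfgMass {n : ℕ} (Par : Fin n → Finset (Fin n))
    (P : (Fin n → Bool) → ℝ) (i : Fin n) (π : Fin n → Bool) : ℝ :=
  ∑ x : Fin n → Bool, if ∀ j ∈ Par i, x j = π j then P x else 0

/-- χ² divergence between two distributions on `{0,1}`. -/
noncomputable def chiSqBool (p q : Bool → ℝ) : ℝ :=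
  ∑ b : Bool, (p b - q b) ^ 2 / q b

/-- `A` depends only on the coordinates with index below `k`. -/
def DependsBelow {n : ℕ} (k : ℕ) (A : (Fin n → Bool) → ℝ) : Prop :=
  ∀ x y : Fin n → Bool, (∀ j : Fin n, (j : ℕ) < k → x j = y j) → A x = A y

/-- The product over the first `k` nodes of the factors `K i x (x i)`. -/
noncomputable def prefixProd {n : ℕ} (K : Fin n → (Fin n → Bool) → Bool → ℝ) (k : ℕ)
    (x : Fin n → Bool) : ℝ :=
  ∏ i ∈ univ.filter (fun i : Fin n => (i : ℕ) < k), K i x (x i)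

lemma prefixProd_zero {n : ℕ} (K : Fin n → (Fin n → Bool) → Bool → ℝ) (x : Fin n → Bool) :
    prefixProd K 0 x = 1 := by
  simp [prefixProd]

lemma prefixProd_top {n : ℕ} (K : Fin n → (Fin n → Bool) → Bool → ℝ) (x : Fin n → Bool) :
    prefixProd K n x = ∏ i, K i x (x i) := by
  simp [prefixProd]

lemma prefixProd_succ {n : ℕ} (K : Fin n → (Fin n → Bool) → Bool → ℝ) (i : Fin n)
    (x : Fin n → Bool) :
    prefixProd K (i + 1) x = prefixProd K i x * K i x (x i) := by
  unfold prefixProd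
  have h : (univ.filter fun j : Fin n => (j : ℕ) < i + 1)
      = insert i (univ.filter fun j : Fin n => (j : ℕ) < i) := by
    ext j
    simp only [mem_filter, mem_univ, true_and, mem_insert, Fin.ext_iff]
    omega
  rw [h, prod_insert (by simp), mul_comm]

lemma prefixProd_dependsBelow {n : ℕ} {K : Fin n → (Fin n → Bool) → Bool → ℝ}
    (hK : ∀ (i : Fin n) b, DependsBelow i (fun x => K i x b)) (k : ℕ) :
    DependsBelow k (prefixProd K k) := by
  intro x y h
  refine prod_congr rfl fun i hi => ?_
  simp only [mem_filter, mem_univ, true_and] at hi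
  rw [h i hi]
  exact hK i _ x y fun j hj => h j (hj.trans hi)

lemma DependsBelow.mul {n k : ℕ} {A B : (Fin n → Bool) → ℝ} (hA : DependsBelow k A)
    (hB : DependsBelow k B) : DependsBelow k (fun x => A x * B x) := by
  intro x y h
  simp only [hA x y h, hB x y h]

/-- Averaging over the coordinate `i`: pair each `x` with the point obtained by flipping `x i`. -/
lemma two_mul_sum {n : ℕ} (i : Fin n) {A : (Fin n → Bool) → ℝ} (hA : DependsBelow i A)
    {K : (Fin n → Bool) → Bool → ℝ} (hK : ∀ b, DependsBelow i (fun x => K x b)) :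
    2 * ∑ x, A x * K x (x i) = ∑ x, A x * (K x true + K x false) := by
  let flip : (Fin n → Bool) → (Fin n → Bool) := fun x => Function.update x i (!x i)
  have hflip : Function.Involutive flip := by
    intro x
    simp [flip]
  have hbelow : ∀ x : Fin n → Bool, ∀ j : Fin n, (j : ℕ) < i → flip x j = x j := by
    intro x j hj
    exact Function.update_of_ne (by rintro rfl; omega) _ _
  have hsum : ∑ x, A x * K x (x i) = ∑ x, A x * K x (!x i) := by
    rw [← Equiv.sum_comp hflip.toPerm]
    refine sum_congr rfl fun x _ => ?_
    have h1 : A (flip x) = A x := hA _ _ (hbelow x)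
    have h2 : ∀ b, K (flip x) b = K x b := fun b => hK b _ _ (hbelow x)
    have h3 : flip x i = !x i := by simp [flip]
    rw [Function.Involutive.coe_toPerm, h1, h2, h3]
  rw [two_mul]
  nth_rewrite 2 [hsum]
  rw [← sum_add_distrib]
  refine sum_congr rfl fun x _ => ?_
  cases x i <;> simp <;> ring

/-- Summing out the last nodes of a Bayes net. Sums still run over all of `{0,1}ⁿ`, so each node
that is summed out leaves a factor `2` for its free coordinate. -/
lemma sum_marginal {n : ℕ} {p : Fin n → (Fin n → Bool) → Bool → ℝ}
    (hp : ∀ i x, p i x true + p i x false = 1)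
    (hK : ∀ (i : Fin n) b, DependsBelow i (fun x => p i x b)) {k : ℕ} (hk : k ≤ n)
    {A : (Fin n → Bool) → ℝ} (hA : DependsBelow k A) :
    2 ^ n * ∑ x, A x * ∏ i, p i x (x i) = 2 ^ k * ∑ x, A x * prefixProd p k x := by
  have key : ∀ m, k ≤ m → m ≤ n →
      2 ^ m * ∑ x, A x * prefixProd p m x = 2 ^ k * ∑ x, A x * prefixProd p k x := by
    intro m hm
    induction m, hm using Nat.le_induction with
    | base => intro _; rfl
    | succ m hm ih =>
      intro hmn
      rw [← ih (by omega)]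
      have hA' : DependsBelow m A := fun x y h => hA x y fun j hj => h j (by omega)
      have h := two_mul_sum ⟨m, hmn⟩ (hA'.mul (prefixProd_dependsBelow hK m))
        (hK ⟨m, hmn⟩)
      simp only [hp, mul_one] at h
      rw [← h, pow_succ, mul_assoc]
      congr 2
      refine sum_congr rfl fun x _ => ?_
      rw [prefixProd_succ p ⟨m, hmn⟩, mul_assoc]
  rw [← key n hk le_rfl]
  simp only [prefixProd_top]

section Conditional

variable {n : ℕ} {Par : Fin n → Finset (Fin n)} {P : (Fin n → Bool) → ℝ}
  {p : Fin n → (Fin n → Bool) → Bool → ℝ}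

lemma kernel_dependsBelow (hanc : ∀ i, ∀ j ∈ Par i, j < i)
    (hloc : ∀ i x y, (∀ j ∈ Par i, x j = y j) → p i x = p i y) (i : Fin n) (b : Bool) :
    DependsBelow i (fun x => p i x b) := by
  intro x y h
  exact congrFun (hloc i x y fun j hj => h j (hanc i j hj)) b

lemma indicator_dependsBelow (hanc : ∀ i, ∀ j ∈ Par i, j < i) (i : Fin n) (π : Fin n → Bool) :
    DependsBelow i (fun x => if ∀ j ∈ Par i, x j = π j then (1 : ℝ) else 0) := by
  intro x y h
  have : (∀ j ∈ Par i, x j = π j) ↔ ∀ j ∈ Par i, y j = π j :=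
    forall₂_congr fun j hj => by rw [h j (hanc i j hj)]
  simp only [this]

lemma parentCfgMass_eq (hanc : ∀ i, ∀ j ∈ Par i, j < i)
    (hp : ∀ i x, p i x true + p i x false = 1)
    (hloc : ∀ i x y, (∀ j ∈ Par i, x j = y j) → p i x = p i y)
    (hP : ∀ x, P x = ∏ i, p i x (x i)) (i : Fin n) (π : Fin n → Bool) :
    2 ^ n * parentCfgMass Par P i π =
      2 ^ (i : ℕ) * ∑ x, (if ∀ j ∈ Par i, x j = π j then (1 : ℝ) else 0) * prefixProd p i x := by
  rw [← sum_marginal hp (kernel_dependsBelow hanc hloc) i.2.le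
    (indicator_dependsBelow hanc i π)]
  simp only [parentCfgMass, hP, ite_mul, one_mul, zero_mul]

/-- The kernel `p i` computes the conditional law of `Xᵢ` given its parents. -/
lemma jointMass_eq (hanc : ∀ i, ∀ j ∈ Par i, j < i)
    (hp : ∀ i x, p i x true + p i x false = 1)
    (hloc : ∀ i x y, (∀ j ∈ Par i, x j = y j) → p i x = p i y)
    (hP : ∀ x, P x = ∏ i, p i x (x i)) (i : Fin n) (b : Bool) (π : Fin n → Bool) :
    jointMass Par P i b π = p i π b * parentCfgMass Par P i π := by
  have hK := kernel_dependsBelow hanc hloc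
  have hI := indicator_dependsBelow hanc i π
  have hpre := prefixProd_dependsBelow hK (i : ℕ)
  have hA : DependsBelow (i + 1 : ℕ) (fun x : Fin n → Bool =>
      (if ∀ j ∈ Par i, x j = π j then (1 : ℝ) else 0) * if x i = b then 1 else 0) := by
    intro x y h
    have h1 := hI x y fun j hj => h j (by omega)
    simp only at h1
    simp only [h1, h i (by omega)]
  have h1 := sum_marginal hp hK (k := i + 1) i.2 hA
  have h2 := two_mul_sum i (hI.mul hpre)
    (K := fun x c => (if c = b then 1 else 0) * p i x c) (by
      intro c x y h
      have := hK i c x y h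
      simp only at this ⊢
      rw [this])
  have h3 : 2 ^ n * jointMass Par P i b π = 2 ^ n * (p i π b * parentCfgMass Par P i π) := by
    rw [mul_left_comm, parentCfgMass_eq hanc hp hloc hP]
    calc 2 ^ n * jointMass Par P i b π = _ := by
          rw [jointMass]
          congr 1
          refine sum_congr rfl fun x _ => ?_
          rw [hP x, ite_and]
          by_cases h : x i = b <;> by_cases h' : ∀ j ∈ Par i, x j = π j <;> simp [h, h']
      _ = _ := h1
      _ = 2 ^ (i : ℕ) * (2 * ∑ x : Fin n → Bool,
            ((if ∀ j ∈ Par i, x j = π j then (1 : ℝ) else 0) * prefixProd p i x) *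
              ((if x i = b then 1 else 0) * p i x (x i))) := by
          rw [pow_succ, mul_assoc]
          congr 2
          refine sum_congr rfl fun x _ => ?_
          rw [prefixProd_succ]
          ring
      _ = _ := by
          rw [h2, mul_left_comm]
          congr 1
          rw [mul_sum]
          refine sum_congr rfl fun x _ => ?_
          by_cases h' : ∀ j ∈ Par i, x j = π j
          · rw [hloc i x π h']
            cases b <;> simp [mul_comm]
          · simp [h']
  exact mul_left_cancel₀ (by positivity) h3

lemma parentCfgMass_pos_of_prefixProd_pos (hanc : ∀ i, ∀ j ∈ Par i, j < i)
    (hp0 : ∀ i x b, 0 ≤ p i x b)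
    (hp : ∀ i x, p i x true + p i x false = 1)
    (hloc : ∀ i x y, (∀ j ∈ Par i, x j = y j) → p i x = p i y)
    (hP : ∀ x, P x = ∏ i, p i x (x i)) (i : Fin n) (x : Fin n → Bool)
    (hx : prefixProd p i x ≠ 0) : 0 < parentCfgMass Par P i x := by
  have hnn : ∀ y, 0 ≤ prefixProd p i y := fun y => prod_nonneg fun _ _ => hp0 _ _ _
  have h := parentCfgMass_eq hanc hp hloc hP i x
  refine pos_of_mul_pos_right (a := (2 : ℝ) ^ n) ?_ (by positivity)
  rw [h]
  refine mul_pos (by positivity) (sum_pos' (fun y _ => ?_) ⟨x, mem_univ _, ?_⟩)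
  · exact mul_nonneg (by split_ifs <;> simp) (hnn y)
  · simpa using lt_of_le_of_ne (hnn x) hx.symm

lemma kernel_pos (hanc : ∀ i, ∀ j ∈ Par i, j < i) (hp0 : ∀ i x b, 0 ≤ p i x b)
    (hloc : ∀ i x y, (∀ j ∈ Par i, x j = y j) → p i x = p i y)
    (hP : ∀ x, P x = ∏ i, p i x (x i)) (hpos : ∀ x, 0 < P x)
    (i : Fin n) (x : Fin n → Bool) (b : Bool) : 0 < p i x b := by
  have h := hpos (Function.update x i b)
  rw [hP] at h
  have h1 := prod_ne_zero_iff.1 h.ne' i (mem_univ i)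
  rw [Function.update_self, hloc i (Function.update x i b) x fun j hj =>
    Function.update_of_ne (hanc i j hj).ne _ _] at h1
  exact lt_of_le_of_ne (hp0 _ _ _) h1.symm

end Conditional

lemma one_add_chiSqBool {p q : Bool → ℝ} (hp : p true + p false = 1)
    (hq : q true + q false = 1) (hpos : ∀ b, 0 < q b) :
    1 + chiSqBool p q = p true ^ 2 / q true + p false ^ 2 / q false := by
  have h : ∀ b, (p b - q b) ^ 2 / q b = p b ^ 2 / q b - 2 * p b + q b := by
    intro b
    have := (hpos b).ne'
    field_simp
    ring
  simp only [chiSqBool, Fintype.sum_bool, h]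
  linarith

/-- Subadditivity of `1 + χ²` over the nodes of a Bayes net:
`1 + d_{χ²}(P,Q) ≤ ∏ᵢ (1 + maxᵢ_{πᵢ : P(Πᵢ = πᵢ) > 0} d_{χ²}(P_{Xᵢ|Πᵢ=πᵢ}, Q_{Xᵢ|Πᵢ=πᵢ}))`. -/
theorem stmt_14 {n d : ℕ} (hd : d ≤ n)
    (Par : Fin n → Finset (Fin n))
    (hdeg : ∀ i, (Par i).card ≤ d) (hanc : ∀ i, ∀ j ∈ Par i, j < i)
    (P Q : (Fin n → Bool) → ℝ)
    (hP : (∀ x, 0 ≤ P x) ∧ ∑ x, P x = 1) (hPM : IsMarkov Par P)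
    (hQ : (∀ x, 0 < Q x) ∧ ∑ x, Q x = 1) (hQM : IsMarkov Par Q) :
    1 + ∑ x : Fin n → Bool, (P x - Q x) ^ 2 / Q x ≤
      ∏ i : Fin n,
        (1 + sSup {v : ℝ | ∃ π : Fin n → Bool, 0 < parentCfgMass Par P i π ∧
          v = chiSqBool
            (fun b => jointMass Par P i b π / parentCfgMass Par P i π)
            (fun b => jointMass Par Q i b π / parentCfgMass Par Q i π)}) := by
  obtain ⟨p, hp, hploc, hPp⟩ := hPM
  obtain ⟨q, hq, hqloc, hQq⟩ := hQM
  have hp0 : ∀ i x b, 0 ≤ p i x b := fun i x b => (hp i x).1 b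
  have hq0 : ∀ i x b, 0 ≤ q i x b := fun i x b => (hq i x).1 b
  have hp1 : ∀ i x, p i x true + p i x false = 1 := fun i x => (hp i x).2
  have hq1 : ∀ i x, q i x true + q i x false = 1 := fun i x => (hq i x).2
  have hqpos := kernel_pos hanc hq0 hqloc hQq hQ.1
  set c : Fin n → ℝ := fun i => 1 + sSup {v : ℝ | ∃ π : Fin n → Bool,
      0 < parentCfgMass Par P i π ∧
        v = chiSqBool
          (fun b => jointMass Par P i b π / parentCfgMass Par P i π)
          (fun b => jointMass Par Q i b π / parentCfgMass Par Q i π)} with hc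
  let R : Fin n → (Fin n → Bool) → Bool → ℝ := fun i x b => p i x b ^ 2 / q i x b
  have hR0 : ∀ i x b, 0 ≤ R i x b := fun i x b => div_nonneg (sq_nonneg _) (hq0 i x b)
  have hRloc : ∀ (i : Fin n) b, DependsBelow i (fun x => R i x b) := by
    intro i b x y h
    have h1 := kernel_dependsBelow hanc hploc i b x y h
    have h2 := kernel_dependsBelow hanc hqloc i b x y h
    simp only at h1 h2
    simp only [R, h1, h2]
  have hcond : ∀ i x, 0 < parentCfgMass Par P i x → R i x true + R i x false ≤ c i := by
    intro i x hx
    have hQx : 0 < parentCfgMass Par Q i x := by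
      refine sum_pos' (fun y _ => ?_) ⟨x, mem_univ _, ?_⟩
      · split_ifs
        exacts [(hQ.1 y).le, le_rfl]
      · simpa using hQ.1 x
    have hmem : chiSqBool (p i x) (q i x) ≤ sSup {v : ℝ | ∃ π : Fin n → Bool,
        0 < parentCfgMass Par P i π ∧
          v = chiSqBool
            (fun b => jointMass Par P i b π / parentCfgMass Par P i π)
            (fun b => jointMass Par Q i b π / parentCfgMass Par Q i π)} := by
      refine le_csSup (Set.Finite.bddAbove ((Set.finite_range fun π : Fin n → Bool => chiSqBool
        (fun b => jointMass Par P i b π / parentCfgMass Par P i π)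
        (fun b => jointMass Par Q i b π / parentCfgMass Par Q i π)).subset ?_)) ⟨x, hx, ?_⟩
      · rintro v ⟨π, -, rfl⟩
        exact ⟨π, rfl⟩
      · congr 1 <;> funext b
        · rw [jointMass_eq hanc hp1 hploc hPp, mul_div_cancel_right₀ _ hx.ne']
        · rw [jointMass_eq hanc hq1 hqloc hQq, mul_div_cancel_right₀ _ hQx.ne']
    have h1 := one_add_chiSqBool (hp1 i x) (hq1 i x) (hqpos i x)
    simp only [R, hc]
    linarith
  have hc0 : ∀ i, 0 ≤ c i := by
    intro i
    refine add_nonneg zero_le_one (Real.sSup_nonneg ?_)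
    rintro v ⟨π, -, rfl⟩
    refine sum_nonneg fun b _ => div_nonneg (sq_nonneg _) (div_nonneg ?_ ?_)
    all_goals
      refine sum_nonneg fun y _ => ?_
      split_ifs
      exacts [(hQ.1 y).le, le_rfl]
  have hstep : ∀ k, k ≤ n →
      2 ^ k * ∑ x, prefixProd R k x ≤ 2 ^ n * ∏ i ∈ univ.filter (fun i : Fin n => (i : ℕ) < k), c i := by
    intro k
    induction k with
    | zero =>
      intro _
      simp [prefixProd_zero]
    | succ k ih =>
      intro hk
      let i : Fin n := ⟨k, hk⟩
      have h1 := two_mul_sum i (prefixProd_dependsBelow hRloc k) (hRloc i)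
      have h2 : ∑ x, prefixProd R k x * (R i x true + R i x false) ≤
          ∑ x, prefixProd R k x * c i := by
        refine sum_le_sum fun x _ => ?_
        by_cases hx : prefixProd p k x = 0
        · -- A vanishing prefix probability kills the term, so only parent configurations of
          -- positive `P`-mass need the bound.
          have : prefixProd R k x = 0 := by
            obtain ⟨j, hj, hj0⟩ := prod_eq_zero_iff.1 hx
            exact prod_eq_zero hj (by simp [R, hj0])
          simp [this]
        · exact mul_le_mul_of_nonneg_left
            (hcond i x (parentCfgMass_pos_of_prefixProd_pos hanc hp0 hp1 hploc hPp i x hx))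
            (prod_nonneg fun _ _ => hR0 _ _ _)
      have hins : (univ.filter fun j : Fin n => (j : ℕ) < k + 1)
          = insert i (univ.filter fun j : Fin n => (j : ℕ) < k) := by
        ext j
        simp only [mem_filter, mem_univ, true_and, mem_insert, Fin.ext_iff, i]
        omega
      have h3 : ∀ x, prefixProd R (k + 1) x = prefixProd R k x * R i x (x i) :=
        prefixProd_succ R i
      simp only [h3]
      rw [pow_succ, mul_assoc, h1, hins, prod_insert (by simp [i])]
      rw [← sum_mul] at h2
      calc _ ≤ (2 : ℝ) ^ k * ((∑ x, prefixProd R k x) * c i) := by gcongr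
        _ = (2 ^ k * ∑ x, prefixProd R k x) * c i := by ring
        _ ≤ (2 ^ n * ∏ j ∈ univ.filter (fun j : Fin n => (j : ℕ) < k), c j) * c i :=
          mul_le_mul_of_nonneg_right (ih (by omega)) (hc0 i)
        _ = _ := by ring
  have hfin := le_of_mul_le_mul_left (hstep n le_rfl) (by positivity)
  simp only [Fin.is_lt, filter_true] at hfin
  refine le_of_eq_of_le ?_ hfin
  have hterm : ∀ x, (P x - Q x) ^ 2 / Q x = prefixProd R n x - 2 * P x + Q x := by
    intro x
    have hR : prefixProd R n x = P x ^ 2 / Q x := by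
      rw [prefixProd_top, hPp, hQq, ← prod_pow, ← prod_div_distrib]
    have := (hQ.1 x).ne'
    rw [hR]
    field_simp
    ring
  simp only [hterm, sum_add_distrib, sum_sub_distrib, ← mul_sum, hP.2, hQ.2]
  ring
end

section
/- There exists a universal constant C > 0 such that for every n, every d with d ≤ n, every degree-d parent map Π on [n], and every ε ∈ (0,1), with m = ⌈C·max(2^{n/2}/ε², 2^d·n²·d·log(n)/ε²)⌉ there exists a test function f : ({0,1}^n)^m → {accept, reject} such that for every probability distribution P on {0,1}^n: (i) if P is Markov with respect to Π, then Pr_{s ~ P^{⊗m}}[f(s) = accept] ≥ 2/3; and (ii) if d_H(P, Q) ≥ ε for every probability distribution Q on {0,1}^n that is Markov with respect to Π, then Pr_{s ~ P^{⊗m}}[f(s) = reject] ≥ 2/3. -/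
open Finset

/-- Hellinger distance between two functions on a finite type. -/
noncomputable def hellinger {α : Type} [Fintype α] (P Q : α → ℝ) : ℝ :=
  Real.sqrt ((1 / 2) * ∑ a, (Real.sqrt (P a) - Real.sqrt (Q a)) ^ 2)

/-!
The test splits the sample into three blocks of `k` points. The first block is used to choose a
Markov distribution `Q` all of whose subcube masses match the empirical subcube counts, within
`r = 3 √(10 (n + 1))` on the square-root scale; the test rejects if no such `Q` exists. A Chernoff
bound on the square-root scale (`chernoff`) and a union bound over the at most `4 ^ n` subcubes show
that a Markov `P` itself qualifies with probability at least `9 / 10` (`feasible_prob`).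

Each point `x` receives a score, `n` times the sum over `i` of `r² / (k Q(cell) + r²)`, where the
cell is the subcube of `x` on the coordinate `i` and its parents. In a Bayesian network each local
kernel is a quotient of two such subcube masses (`cellMass_insert`), so two Markov distributions
compatible with the same block satisfy `(P x - Q x)² ≤ 1296 Q(x)² score x` on the set `A` where the
score is at most `1 / 324` (`ratio_bound`). The mean score is `O(n² 2^d r² / k)` (`score_mean`),
which for the given sample size is a small multiple of `ε²`; hence the complement of `A` has small
mass and the regularised `χ²`-distance of `P` and `Q` on `A` is small.

The complement of `A` is collapsed to one point and the statistic
`∑ z, w z (N z - k q z) (N' z - k q z)` is formed from the counts of the other two blocks, with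
weights `w` the inverse reference masses regularised by `ε² / 2^n` (by `ε²` at the collapsed point).
Its mean is `k² D`, where `D ≤ ε² / 16` if `P` is Markov and compatible with the first block
(`discrepancy_close`) and `D ≥ ε² / 4` if `P` is `ε`-far from `Q` in Hellinger distance
(`discrepancy_far`). Chebyshev's inequality (`stat_dev`), which needs `k ≥ 3400 · 2^(n/2) / ε²`,
separates the two cases at the threshold `k² ε² / 8`.

The argument uses `2^d n³ / ε²` samples up to a constant for the choice of `Q`; this is dominated by
the sample size of the theorem (`size_bound`).
-/

/-! ### Expectation over independent samples and Chernoff bounds -/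

/-- Expectation of `F` over `k` independent samples from the mass function `P`. -/
noncomputable def Ex {α : Type} [Fintype α] (P : α → ℝ) {k : ℕ} (F : (Fin k → α) → ℝ) : ℝ :=
  ∑ v, (∏ j, P (v j)) * F v

section Expectation
variable {α : Type} [Fintype α] {P : α → ℝ} {k : ℕ}

lemma Ex_add (F G : (Fin k → α) → ℝ) : Ex P (fun v => F v + G v) = Ex P F + Ex P G := by
  simp [Ex, mul_add, sum_add_distrib]

lemma Ex_mul_left (c : ℝ) (F : (Fin k → α) → ℝ) : Ex P (fun v => c * F v) = c * Ex P F := by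
  simp only [Ex, mul_sum]
  exact sum_congr rfl fun v _ => by ring

lemma Ex_sum {ι : Type} (s : Finset ι) (F : ι → (Fin k → α) → ℝ) :
    Ex P (fun v => ∑ i ∈ s, F i v) = ∑ i ∈ s, Ex P (F i) := by
  simp only [Ex, mul_sum]
  exact sum_comm

lemma Ex_mono (hP : ∀ x, 0 ≤ P x) {F G : (Fin k → α) → ℝ} (h : ∀ v, F v ≤ G v) :
    Ex P F ≤ Ex P G :=
  sum_le_sum fun v _ => mul_le_mul_of_nonneg_left (h v) (prod_nonneg fun _ _ => hP _)

lemma Ex_prod (h : α → ℝ) :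
    Ex P (fun v : Fin k → α => ∏ j, h (v j)) = (∑ x, P x * h x) ^ k := by
  classical
  simp only [Ex, ← prod_mul_distrib]
  rw [← Fintype.piFinset_univ, sum_prod_piFinset univ (fun _ x => P x * h x)]
  simp

lemma Ex_const (h1 : ∑ x, P x = 1) (c : ℝ) : Ex P (fun _ : Fin k → α => c) = c := by
  have h := Ex_prod (P := P) (k := k) (fun _ => 1)
  have h' := Ex_mul_left (P := P) (k := k) c (fun _ => 1)
  simp only [prod_const_one, mul_one, h1, one_pow] at h h'
  rw [h', h, mul_one]

lemma Ex_append {l : ℕ} (F : (Fin (k + l) → α) → ℝ) :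
    Ex P F = Ex P (fun u : Fin k → α => Ex P (fun v : Fin l → α => F (Fin.append u v))) := by
  simp only [Ex, mul_sum]
  rw [← Fintype.sum_prod_type', ← (Fin.appendEquiv k l).sum_comp]
  refine sum_congr rfl fun p _ => ?_
  simp [Fin.appendEquiv, Fin.prod_univ_add, mul_assoc]

lemma Ex_cons (F : (Fin (k + 1) → α) → ℝ) :
    Ex P F = ∑ a, P a * Ex P (fun v : Fin k → α => F (Fin.cons a v)) := by
  simp only [Ex, mul_sum]
  rw [← Fintype.sum_prod_type', ← (Fin.consEquiv (fun _ => α)).sum_comp]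
  refine sum_congr rfl fun p _ => ?_
  simp [Fin.consEquiv, Fin.prod_univ_succ, mul_assoc]

lemma Ex_sum_apply (h1 : ∑ x, P x = 1) (f : α → ℝ) :
    Ex P (fun v : Fin k → α => ∑ j, f (v j)) = k * ∑ x, P x * f x := by
  induction k with
  | zero => simp [Ex]
  | succ k ih =>
    rw [Ex_cons]
    simp only [Fin.sum_univ_succ, Fin.cons_zero, Fin.cons_succ, Ex_add, Ex_const h1, ih, mul_add,
      sum_add_distrib, ← sum_mul, h1]
    push_cast; ring

lemma Ex_sum_mul_sum (h1 : ∑ x, P x = 1) (f g : α → ℝ) :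
    Ex P (fun v : Fin k → α => (∑ j, f (v j)) * ∑ j, g (v j)) =
      k * (∑ x, P x * (f x * g x) - (∑ x, P x * f x) * ∑ x, P x * g x) +
        k ^ 2 * ((∑ x, P x * f x) * ∑ x, P x * g x) := by
  induction k with
  | zero => simp [Ex]
  | succ k ih =>
    rw [Ex_cons]
    have key : ∀ a, Ex P (fun v : Fin k → α =>
        (∑ j, f (Fin.cons (α := fun _ => α) a v j)) * ∑ j, g (Fin.cons (α := fun _ => α) a v j)) =
        f a * g a + f a * (k * ∑ x, P x * g x) + g a * (k * ∑ x, P x * f x) +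
          Ex P (fun v : Fin k → α => (∑ j, f (v j)) * ∑ j, g (v j)) := by
      intro a
      rw [← Ex_sum_apply h1, ← Ex_sum_apply h1, ← Ex_mul_left, ← Ex_mul_left,
        ← Ex_const (k := k) h1 (f a * g a), ← Ex_add, ← Ex_add, ← Ex_add]
      congr 1; funext v
      simp only [Fin.sum_univ_succ, Fin.cons_zero, Fin.cons_succ]
      ring
    simp only [key, ih, mul_add, sum_add_distrib, ← sum_mul, h1, ← mul_assoc]
    push_cast; ring

/-- Chernoff tail bound for the signed centred count `σ ∑ j, (1_S(v j) - p)`, `σ = ±1`. -/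
lemma chernoff_one (hP : ∀ x, 0 ≤ P x) (h1 : ∑ x, P x = 1) (S : α → Prop) [DecidablePred S]
    (σ : ℝ) (hσ : |σ| = 1) (L : ℝ) (hL : 0 < L) (p : ℝ)
    (hp : p = ∑ x, if S x then P x else 0) :
    Ex P (fun v : Fin k → α =>
      if 2 * L + 2 * √(L * (k * p)) ≤ σ * ∑ j, ((if S (v j) then (1 : ℝ) else 0) - p) then (1 : ℝ) else 0)
      ≤ Real.exp (-L) := by
  have hσ2 : σ ^ 2 = 1 := by rw [← sq_abs, hσ]; norm_num
  have hp0 : 0 ≤ p := by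
    rw [hp]; exact sum_nonneg fun x _ => by split_ifs <;> simp [hP]
  have hp1 : p ≤ 1 := by
    rw [hp, ← h1]; exact sum_le_sum fun x _ => by split_ifs <;> simp [hP]
  have hμ0 : 0 ≤ (k : ℝ) * p := by positivity
  -- the exponent `t` optimises the Chernoff bound subject to `t ≤ 1`
  obtain ⟨t, ht0, ht1, htb⟩ : ∃ t : ℝ, 0 ≤ t ∧ t ≤ 1 ∧
      t ^ 2 * (k * p) + L ≤ t * (2 * L + 2 * √(L * (k * p))) := by
    rcases le_total (k * p) L with h | h
    · exact ⟨1, by norm_num, le_rfl, by nlinarith [Real.sqrt_nonneg (L * (k * p))]⟩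
    · have hμ : 0 < (k : ℝ) * p := hL.trans_le h
      refine ⟨√L / √(k * p), by positivity, ?_, ?_⟩
      · rw [div_le_one (by positivity)]; exact Real.sqrt_le_sqrt h
      · have e1 : (√L / √(k * p)) ^ 2 * (k * p) = L := by
          rw [div_pow, Real.sq_sqrt hL.le, Real.sq_sqrt hμ0, div_mul_cancel₀ _ hμ.ne']
        have e2 : √L / √(k * p) * √(L * (k * p)) = L := by
          rw [Real.sqrt_mul hL.le]
          have : √(k * p) ≠ 0 := by positivity
          field_simp
          exact Real.sq_sqrt hL.le
        have e3 : 0 ≤ √L / √(k * p) * L := by positivity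
        nlinarith
  have hmom : ∑ x, P x * Real.exp (t * σ * ((if S x then (1 : ℝ) else 0) - p)) ≤
      Real.exp (t ^ 2 * p) := by
    have hb : ∀ x, P x * Real.exp (t * σ * ((if S x then (1 : ℝ) else 0) - p)) ≤
        P x * (1 - t * σ * p + t ^ 2 * p ^ 2) +
          (if S x then P x else 0) * (t * σ + t ^ 2 * (1 - 2 * p)) := by
      intro x
      set y := (if S x then (1 : ℝ) else 0) - p with hy
      have hyb : |y| ≤ 1 := by
        rw [hy, abs_le]; split_ifs <;> constructor <;> linarith
      have hb := Real.abs_exp_sub_one_sub_id_le (x := t * σ * y) (by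
        rw [abs_mul, abs_mul, hσ, abs_of_nonneg ht0, mul_one]
        exact mul_le_one₀ ht1 (abs_nonneg _) hyb)
      have hb' := (abs_le.1 hb).2
      have e : (t * σ * y) ^ 2 = t ^ 2 * y ^ 2 := by rw [mul_pow, mul_pow, hσ2, mul_one]
      calc P x * Real.exp (t * σ * y) ≤ P x * (1 + t * σ * y + t ^ 2 * y ^ 2) :=
            mul_le_mul_of_nonneg_left (by linarith) (hP x)
        _ = _ := by rw [hy]; split_ifs <;> ring
    refine (sum_le_sum fun x _ => hb x).trans ?_
    rw [sum_add_distrib, ← sum_mul, ← sum_mul, h1, ← hp]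
    have := Real.add_one_le_exp (t ^ 2 * p)
    nlinarith [mul_nonneg (sq_nonneg t) (sq_nonneg p)]
  calc _ ≤ Ex P (fun v : Fin k → α => Real.exp (-(t ^ 2 * (k * p) + L)) *
          ∏ j, Real.exp (t * σ * ((if S (v j) then (1 : ℝ) else 0) - p))) := by
        refine Ex_mono hP fun v => ?_
        rw [← Real.exp_sum, ← Real.exp_add, ← mul_sum]
        split_ifs with h
        · rw [Real.one_le_exp_iff]
          have := mul_le_mul_of_nonneg_left h ht0
          linarith
        · positivity
    _ ≤ Real.exp (-(t ^ 2 * (k * p) + L)) * Real.exp (t ^ 2 * p) ^ k := by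
        rw [Ex_mul_left,
          Ex_prod (fun x => Real.exp (t * σ * ((if S x then (1 : ℝ) else 0) - p)))]
        refine mul_le_mul_of_nonneg_left (pow_le_pow_left₀ ?_ hmom k) (Real.exp_nonneg _)
        exact sum_nonneg fun x _ => mul_nonneg (hP x) (Real.exp_nonneg _)
    _ = Real.exp (-L) := by
        rw [← Real.exp_nat_mul, ← Real.exp_add]; congr 1; ring

/-- Deviations of square roots: the variance-stabilised form of the Chernoff tail event. -/
lemma sqrt_dev {N μ L : ℝ} (hN : 0 ≤ N) (hμ : 0 ≤ μ) (hL : 0 < L)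
    (h : 3 * √L < |√N - √μ|) :
    2 * L + 2 * √(L * μ) ≤ N - μ ∨ 2 * L + 2 * √(L * μ) ≤ -(N - μ) := by
  have a1 := Real.sq_sqrt hN
  have a2 := Real.sq_sqrt hμ
  have a3 := Real.sq_sqrt hL.le
  have b1 := Real.sqrt_nonneg N
  have b2 := Real.sqrt_nonneg μ
  have b3 := Real.sqrt_pos.2 hL
  rw [Real.sqrt_mul hL.le]
  rcases lt_abs.1 h with h | h
  · left; nlinarith
  · right; nlinarith

/-- Number of samples lying in `S`. -/
def cnt (S : α → Prop) [DecidablePred S] (v : Fin k → α) : ℝ :=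
  ∑ j, if S (v j) then (1 : ℝ) else 0

/-- Chernoff bound on the square-root scale, where the deviation `3 √L` does not depend on the mass
of `S`. -/
lemma chernoff_s17 (hP : ∀ x, 0 ≤ P x) (h1 : ∑ x, P x = 1) (S : α → Prop) [DecidablePred S]
    (L : ℝ) (hL : 0 < L) :
    Ex P (fun v : Fin k → α =>
      if 3 * √L < |√(cnt S v) - √(k * ∑ x, if S x then P x else 0)| then (1 : ℝ) else 0)
      ≤ 2 * Real.exp (-L) := by
  set p := ∑ x, if S x then P x else 0 with hp
  have hp0 : 0 ≤ p := by
    rw [hp]; exact sum_nonneg fun x _ => by split_ifs <;> simp [hP]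
  have c1 := chernoff_one (k := k) hP h1 S 1 (by simp) L hL p hp
  have c2 := chernoff_one (k := k) hP h1 S (-1) (by simp) L hL p hp
  refine le_trans ?_ ((add_le_add c1 c2).trans_eq (by ring))
  rw [← Ex_add]
  refine Ex_mono hP fun v => ?_
  have e : ∑ j, ((if S (v j) then (1 : ℝ) else 0) - p) = cnt S v - k * p := by
    simp [cnt, sum_sub_distrib]
  have hN : 0 ≤ cnt S v := sum_nonneg fun j _ => by split_ifs <;> simp
  rw [e, one_mul, neg_one_mul]
  by_cases h : 3 * √L < |√(cnt S v) - √(k * p)|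
  · rw [if_pos h]
    rcases sqrt_dev hN (by positivity) hL h with h' | h'
    · rw [if_pos h']; split_ifs <;> norm_num
    · rw [if_pos h']; split_ifs <;> norm_num
  · rw [if_neg h]; split_ifs <;> norm_num

end Expectation

/-! ### The two-sample chi-square statistic -/

section Tester
variable {α β : Type} [Fintype α] [DecidableEq β] {P : α → ℝ} {k : ℕ}

/-- Push-forward of the mass function `P` along `g`. -/
def push (P : α → ℝ) (g : α → β) (z : β) : ℝ := ∑ x, if g x = z then P x else 0

lemma push_nonneg (hP : ∀ x, 0 ≤ P x) (g : α → β) (z : β) : 0 ≤ push P g z :=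
  sum_nonneg fun x _ => by split_ifs <;> simp [hP]

lemma push_sum [Fintype β] (h1 : ∑ x, P x = 1) (g : α → β) : ∑ z, push P g z = 1 := by
  simp only [push]
  rw [sum_comm]
  simpa using h1

lemma feature_mean (h1 : ∑ x, P x = 1) (g : α → β) (q : β → ℝ) (z : β) :
    ∑ x, P x * ((if g x = z then (1 : ℝ) else 0) - q z) = push P g z - q z := by
  simp only [mul_sub, sum_sub_distrib, ← sum_mul, h1, push, mul_ite, mul_one, mul_zero, one_mul]

lemma feature_cov (h1 : ∑ x, P x = 1) (g : α → β) (q : β → ℝ) (z z' : β) :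
    ∑ x, P x * (((if g x = z then (1 : ℝ) else 0) - q z) *
        ((if g x = z' then (1 : ℝ) else 0) - q z')) -
      (push P g z - q z) * (push P g z' - q z') =
      (if z = z' then push P g z else 0) - push P g z * push P g z' := by
  have e : ∀ x, P x * (((if g x = z then (1 : ℝ) else 0) - q z) *
        ((if g x = z' then (1 : ℝ) else 0) - q z')) =
      (if z = z' then (if g x = z then P x else 0) else 0) - (if g x = z then P x else 0) * q z' -
        (if g x = z' then P x else 0) * q z + P x * (q z * q z') := by
    intro x
    split_ifs <;> first | ring1 | (exfalso; simp_all)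
  simp only [e, sum_add_distrib, sum_sub_distrib, ← sum_mul, h1]
  have e2 : ∑ x, (if z = z' then (if g x = z then P x else 0) else 0) =
      if z = z' then push P g z else 0 := by
    split_ifs <;> simp [push]
  rw [e2]
  change _ - push P g z * _ - push P g z' * _ + _ - _ = _
  ring

variable [Fintype β]

/-- The two-sample `χ²`-type statistic `∑ z, w z (N z - k q z) (N' z - k q z)`, where `N`, `N'`
are the histograms of `g` over the independent samples `v`, `v'`. -/
def stat (g : α → β) (w q : β → ℝ) (v v' : Fin k → α) : ℝ :=
  ∑ z, w z * ((∑ j, ((if g (v j) = z then (1 : ℝ) else 0) - q z)) *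
    ∑ j, ((if g (v' j) = z then (1 : ℝ) else 0) - q z))

lemma stat_mean (h1 : ∑ x, P x = 1) (g : α → β) (w q : β → ℝ) :
    Ex P (fun v : Fin k → α => Ex P (fun v' : Fin k → α => stat g w q v v')) =
      k ^ 2 * ∑ z, w z * (push P g z - q z) ^ 2 := by
  simp only [stat, Ex_sum, Ex_mul_left]
  have e : ∀ z, Ex P (fun v' : Fin k → α => ∑ j, ((if g (v' j) = z then (1 : ℝ) else 0) - q z)) =
      k * (push P g z - q z) := fun z => by
    rw [← feature_mean h1,
      Ex_sum_apply h1 (fun x => (if g x = z then (1 : ℝ) else 0) - q z)]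
  have e' : ∀ z (v : Fin k → α), (∑ j, ((if g (v j) = z then (1 : ℝ) else 0) - q z)) *
      (k * (push P g z - q z)) = (k * (push P g z - q z)) *
        (∑ j, ((if g (v j) = z then (1 : ℝ) else 0) - q z)) := fun z v => mul_comm _ _
  have e'' : ∀ z, ∑ i, Ex P (fun v' : Fin k → α => (if g (v' i) = z then (1 : ℝ) else 0) - q z) =
      k * (push P g z - q z) := fun z => by rw [← e, Ex_sum]
  simp only [e, e', e'', Ex_mul_left]
  rw [mul_sum]
  exact sum_congr rfl fun z _ => by ring

lemma stat_sq (h1 : ∑ x, P x = 1) (g : α → β) (w q : β → ℝ) :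
    Ex P (fun v : Fin k → α => Ex P (fun v' : Fin k → α => stat g w q v v' ^ 2)) =
      ∑ z, ∑ z', w z * w z' *
        (k * ((if z = z' then push P g z else 0) - push P g z * push P g z') +
          k ^ 2 * ((push P g z - q z) * (push P g z' - q z'))) ^ 2 := by
  have e : ∀ z z', Ex P (fun v : Fin k → α =>
      (∑ j, ((if g (v j) = z then (1 : ℝ) else 0) - q z)) *
        ∑ j, ((if g (v j) = z' then (1 : ℝ) else 0) - q z')) =
      k * ((if z = z' then push P g z else 0) - push P g z * push P g z') +
          k ^ 2 * ((push P g z - q z) * (push P g z' - q z')) := fun z z' => by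
    rw [Ex_sum_mul_sum h1 (fun x => (if g x = z then (1 : ℝ) else 0) - q z)
      (fun x => (if g x = z' then (1 : ℝ) else 0) - q z'), feature_mean h1, feature_mean h1,
      feature_cov h1]
  have s : ∀ v v' : Fin k → α, stat g w q v v' ^ 2 = ∑ z, ∑ z', (w z * w z' *
      ((∑ j, ((if g (v j) = z then (1 : ℝ) else 0) - q z)) *
        ∑ j, ((if g (v j) = z' then (1 : ℝ) else 0) - q z'))) *
      ((∑ j, ((if g (v' j) = z then (1 : ℝ) else 0) - q z)) *
        ∑ j, ((if g (v' j) = z' then (1 : ℝ) else 0) - q z')) := by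
    intro v v'
    rw [stat, sq, sum_mul_sum]
    exact sum_congr rfl fun z _ => sum_congr rfl fun z' _ => by ring
  simp only [s, Ex_sum, Ex_mul_left, e]
  refine sum_congr rfl fun z _ => sum_congr rfl fun z' _ => ?_
  set M := (k * ((if z = z' then push P g z else 0) - push P g z * push P g z') +
          k ^ 2 * ((push P g z - q z) * (push P g z' - q z')) : ℝ) with hM
  have e' : ∀ v : Fin k → α, (w z * w z' *
      ((∑ j, ((if g (v j) = z then (1 : ℝ) else 0) - q z)) *
        ∑ j, ((if g (v j) = z' then (1 : ℝ) else 0) - q z'))) * M = (M * (w z * w z')) *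
      ((∑ j, ((if g (v j) = z then (1 : ℝ) else 0) - q z)) *
        ∑ j, ((if g (v j) = z' then (1 : ℝ) else 0) - q z')) := fun v => by ring
  simp only [e', Ex_mul_left, e]
  rw [← hM]; ring

/-- Variance of the statistic in terms of `D`, its normalised mean, and the sum `S` of the
squared weighted masses. -/
lemma stat_var (hP : ∀ x, 0 ≤ P x) (h1 : ∑ x, P x = 1) (g : α → β) (w q : β → ℝ)
    (hw : ∀ z, 0 ≤ w z) (D S : ℝ) (hD : D = ∑ z, w z * (push P g z - q z) ^ 2)
    (hS : S = ∑ z, (w z * push P g z) ^ 2) :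
    Ex P (fun v : Fin k → α => Ex P (fun v' : Fin k → α => (stat g w q v v' - k ^ 2 * D) ^ 2)) ≤
      k ^ 2 * S + 2 * k ^ 3 * (D * √S) := by
  have e0 : Ex P (fun v : Fin k → α => Ex P (fun v' : Fin k → α =>
      (stat g w q v v' - k ^ 2 * D) ^ 2)) =
      Ex P (fun v : Fin k → α => Ex P (fun v' : Fin k → α => stat g w q v v' ^ 2)) -
        (k ^ 2 * D) ^ 2 := by
    have e : ∀ v v' : Fin k → α, (stat g w q v v' - k ^ 2 * D) ^ 2 =
        stat g w q v v' ^ 2 + (-(2 * k ^ 2 * D)) * stat g w q v v' + (k ^ 2 * D) ^ 2 :=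
      fun v v' => by ring
    simp only [e, Ex_add, Ex_mul_left, Ex_const h1]
    rw [stat_mean h1, ← hD]; ring
  rw [e0, stat_sq h1]
  have hp0 := push_nonneg hP g
  have hp1 := push_sum h1 g
  set p := push P g
  set δ : β → ℝ := fun z => p z - q z with hδ
  have hD' : D = ∑ z, w z * δ z ^ 2 := hD
  have hS0 : 0 ≤ S := by rw [hS]; exact sum_nonneg fun z _ => sq_nonneg _
  have e1 : ∑ z, ∑ z', w z * w z' *
        (k * ((if z = z' then p z else 0) - p z * p z') + k ^ 2 * ((p z - q z) * (p z' - q z'))) ^ 2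
      = k ^ 2 * (∑ z, w z ^ 2 * (p z ^ 2 - 2 * p z ^ 3) + (∑ z, w z * p z ^ 2) ^ 2) +
        2 * k ^ 3 * (∑ z, w z ^ 2 * p z * δ z ^ 2 - (∑ z, w z * p z * δ z) ^ 2) +
        (k ^ 2 * D) ^ 2 := by
    have e : ∀ z z', w z * w z' *
        (k * ((if z = z' then p z else 0) - p z * p z') + k ^ 2 * ((p z - q z) * (p z' - q z'))) ^ 2
        = (if z = z' then k ^ 2 * (w z ^ 2 * (p z ^ 2 - 2 * p z ^ 3)) +
            2 * k ^ 3 * (w z ^ 2 * p z * δ z ^ 2) else 0) +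
          k ^ 2 * ((w z * p z ^ 2) * (w z' * p z' ^ 2)) -
          2 * k ^ 3 * ((w z * p z * δ z) * (w z' * p z' * δ z')) +
          k ^ 4 * ((w z * δ z ^ 2) * (w z' * δ z' ^ 2)) := by
      intro z z'
      simp only [hδ]
      split_ifs with h
      · subst h; ring
      · ring
    simp only [e, sum_add_distrib, sum_sub_distrib, ← mul_sum, ← sum_mul, sum_ite_eq, mem_univ,
      if_true]
    rw [hD']; ring
  rw [e1]
  have c1 : (∑ z, w z * p z ^ 2) ^ 2 ≤ ∑ z, w z ^ 2 * p z ^ 3 := by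
    have := sum_mul_sq_le_sq_mul_sq univ (fun z => √(p z)) (fun z => w z * p z * √(p z))
    have ea : ∀ z, √(p z) * (w z * p z * √(p z)) = w z * p z ^ 2 := fun z => by
      calc _ = w z * p z * √(p z) ^ 2 := by ring
        _ = _ := by rw [Real.sq_sqrt (hp0 z)]; ring
    have eb : ∀ z, (w z * p z * √(p z)) ^ 2 = w z ^ 2 * p z ^ 3 := fun z => by
      calc _ = w z ^ 2 * p z ^ 2 * √(p z) ^ 2 := by ring
        _ = _ := by rw [Real.sq_sqrt (hp0 z)]; ring
    simp only [ea, eb, Real.sq_sqrt (hp0 _), hp1, one_mul] at this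
    exact this
  have c2 : ∑ z, w z ^ 2 * p z * δ z ^ 2 ≤ D * √S := by
    have := Real.sum_mul_le_sqrt_mul_sqrt univ (fun z => w z * δ z ^ 2) (fun z => w z * p z)
    rw [← hS] at this
    calc _ = ∑ z, w z * δ z ^ 2 * (w z * p z) := sum_congr rfl fun z _ => by ring
      _ ≤ _ := this
      _ ≤ D * √S := by
        refine mul_le_mul_of_nonneg_right ?_ (Real.sqrt_nonneg _)
        have hn : ∀ z ∈ (univ : Finset β), 0 ≤ w z * δ z ^ 2 :=
          fun z _ => mul_nonneg (hw z) (sq_nonneg _)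
        rw [Real.sqrt_le_left (by rw [hD']; exact sum_nonneg hn), hD']
        exact sum_sq_le_sq_sum_of_nonneg hn
  have c3 : ∑ z, w z ^ 2 * (p z ^ 2 - 2 * p z ^ 3) + (∑ z, w z * p z ^ 2) ^ 2 ≤ S := by
    have h3 : 0 ≤ ∑ z, w z ^ 2 * p z ^ 3 :=
      sum_nonneg fun z _ => mul_nonneg (sq_nonneg _) (pow_nonneg (hp0 z) 3)
    have : ∑ z, w z ^ 2 * (p z ^ 2 - 2 * p z ^ 3) = S - 2 * ∑ z, w z ^ 2 * p z ^ 3 := by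
      rw [hS, mul_sum, ← sum_sub_distrib]
      exact sum_congr rfl fun z _ => by ring
    linarith
  have c4 : ∑ z, w z ^ 2 * p z * δ z ^ 2 - (∑ z, w z * p z * δ z) ^ 2 ≤ D * √S := by
    linarith [sq_nonneg (∑ z, w z * p z * δ z)]
  have k2 : (0 : ℝ) ≤ k ^ 2 := by positivity
  have k3 : (0 : ℝ) ≤ 2 * k ^ 3 := by positivity
  linarith [mul_le_mul_of_nonneg_left c3 k2, mul_le_mul_of_nonneg_left c4 k3]

/-- Chebyshev for the statistic, with deviations measured on any scale `E` above
both `D` and `ε² / 4`. -/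
lemma stat_dev (hP : ∀ x, 0 ≤ P x) (h1 : ∑ x, P x = 1) (g : α → β) (w q : β → ℝ)
    (hw : ∀ z, 0 ≤ w z) (hq : ∀ z, 0 ≤ q z) (hwq : ∀ z, w z * q z ≤ 1)
    (N ε : ℝ) (hN : 0 < N) (hε : 0 < ε) (hcard : (Fintype.card β : ℝ) ≤ 2 * N)
    (hwN : ∀ z, w z ≤ N / ε ^ 2) (hk : 3400 * √N / ε ^ 2 ≤ k)
    (D E : ℝ) (hD : D = ∑ z, w z * (push P g z - q z) ^ 2) (hDE : D ≤ E) (hE : ε ^ 2 / 4 ≤ E) :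
    Ex P (fun v : Fin k → α => Ex P (fun v' : Fin k → α =>
      if k ^ 2 * E / 4 ≤ |stat g w q v v' - k ^ 2 * D| then (1 : ℝ) else 0)) ≤ 1 / 10 := by
  set S := ∑ z, (w z * push P g z) ^ 2 with hS
  have hε2 : 0 < ε ^ 2 := by positivity
  have hE0 : 0 < E := by linarith
  have hkpos : (0 : ℝ) < k := lt_of_lt_of_le (by positivity) hk
  have hS0 : 0 ≤ S := sum_nonneg fun z _ => sq_nonneg _
  have hSb : S ≤ 18 * N * E / ε ^ 2 := by
    have h : ∀ z, (w z * push P g z) ^ 2 ≤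
        2 + 2 * (N / ε ^ 2) * (w z * (push P g z - q z) ^ 2) := by
      intro z
      have a : (w z * q z) ^ 2 ≤ 1 := pow_le_one₀ (mul_nonneg (hw z) (hq z)) (hwq z)
      have b : w z * (w z * (push P g z - q z) ^ 2) ≤ N / ε ^ 2 * (w z * (push P g z - q z) ^ 2) :=
        mul_le_mul_of_nonneg_right (hwN z) (mul_nonneg (hw z) (sq_nonneg _))
      nlinarith [sq_nonneg (w z * q z - w z * (push P g z - q z))]
    have h2 : S ≤ 2 * Fintype.card β + 2 * (N / ε ^ 2) * D := by
      refine (sum_le_sum fun z _ => h z).trans_eq ?_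
      rw [sum_add_distrib, ← mul_sum, ← hD]; simp; ring
    have h3 : N / ε ^ 2 * D ≤ N / ε ^ 2 * E := mul_le_mul_of_nonneg_left hDE (by positivity)
    have h4 : N ≤ 4 * (N / ε ^ 2 * E) := by
      rw [div_mul_eq_mul_div, mul_div_assoc', le_div_iff₀ hε2]; nlinarith
    have : 18 * N * E / ε ^ 2 = 18 * (N / ε ^ 2 * E) := by ring
    rw [this]; linarith
  -- `√S` is small compared with `k E`
  have hsq : √S ≤ k * E / 400 := by
    rw [Real.sqrt_le_left (by positivity)]
    refine hSb.trans ?_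
    have hk2 : (3400 * √N / ε ^ 2) ^ 2 ≤ (k : ℝ) ^ 2 := pow_le_pow_left₀ (by positivity) hk 2
    have e : (3400 * √N / ε ^ 2) ^ 2 = 11560000 * N / ε ^ 2 / ε ^ 2 := by
      rw [div_pow, mul_pow, Real.sq_sqrt hN.le]; field_simp; norm_num
    rw [e, div_le_iff₀ hε2] at hk2
    have h5 : 11560000 * N / ε ^ 2 * E ≤ k ^ 2 * ε ^ 2 * E := mul_le_mul_of_nonneg_right hk2 hE0.le
    have h6 : (k : ℝ) ^ 2 * E * ε ^ 2 ≤ k ^ 2 * E * (4 * E) :=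
      mul_le_mul_of_nonneg_left (by linarith) (by positivity)
    have h7 : 18 * N * E / ε ^ 2 = 18 / 11560000 * (11560000 * N / ε ^ 2 * E) := by ring
    rw [h7]
    have : (0 : ℝ) ≤ k ^ 2 * E ^ 2 := by positivity
    nlinarith
  have hSk : S ≤ (k * E / 400) ^ 2 := by
    rw [← Real.sq_sqrt hS0]; exact pow_le_pow_left₀ (Real.sqrt_nonneg _) hsq 2
  have hv := stat_var (k := k) hP h1 g w q hw D S hD hS
  have ht : (0 : ℝ) < k ^ 2 * E / 4 := by positivity
  calc _ ≤ Ex P (fun v : Fin k → α => Ex P (fun v' : Fin k → α =>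
        1 / (k ^ 2 * E / 4) ^ 2 * (stat g w q v v' - k ^ 2 * D) ^ 2)) := by
        refine Ex_mono hP fun v => Ex_mono hP fun v' => ?_
        split_ifs with h
        · rw [one_div_mul_eq_div, one_le_div (by positivity), ← sq_abs (stat g w q v v' - _)]
          exact pow_le_pow_left₀ ht.le h 2
        · positivity
    _ ≤ 1 / (k ^ 2 * E / 4) ^ 2 * (k ^ 2 * S + 2 * k ^ 3 * (D * √S)) := by
        simp only [Ex_mul_left]
        exact mul_le_mul_of_nonneg_left hv (by positivity)
    _ ≤ 1 / 10 := by
        rw [one_div_mul_eq_div, div_le_iff₀ (by positivity)]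
        have h8 : D * √S ≤ E * (k * E / 400) :=
          mul_le_mul hDE hsq (Real.sqrt_nonneg _) hE0.le
        have h9 := mul_le_mul_of_nonneg_left h8 (by positivity : (0 : ℝ) ≤ 2 * k ^ 3)
        have h10 := mul_le_mul_of_nonneg_left hSk (by positivity : (0 : ℝ) ≤ (k : ℝ) ^ 2)
        have : (0 : ℝ) ≤ k ^ 4 * E ^ 2 := by positivity
        nlinarith

end Tester

/-! ### Subcube masses of Bayesian networks -/

section Markov
variable {n : ℕ}

/-- Mass of the subcube of points agreeing with `x` on `S`. -/
def cellMass (P : (Fin n → Bool) → ℝ) (S : Finset (Fin n)) (x : Fin n → Bool) : ℝ :=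
  ∑ y, if ∀ j ∈ S, y j = x j then P y else 0

lemma cellMass_nonneg {P : (Fin n → Bool) → ℝ} (hP : ∀ x, 0 ≤ P x) (S : Finset (Fin n))
    (x : Fin n → Bool) : 0 ≤ cellMass P S x :=
  sum_nonneg fun y _ => by split_ifs <;> simp [hP]

lemma cellMass_anti {P : (Fin n → Bool) → ℝ} (hP : ∀ x, 0 ≤ P x) {S T : Finset (Fin n)}
    (h : S ⊆ T) (x : Fin n → Bool) : cellMass P T x ≤ cellMass P S x := by
  refine sum_le_sum fun y _ => ?_
  by_cases hT : ∀ j ∈ T, y j = x j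
  · rw [if_pos hT, if_pos fun j hj => hT j (h hj)]
  · rw [if_neg hT]; split_ifs <;> simp [hP]

lemma cellMass_congr (P : (Fin n → Bool) → ℝ) {S : Finset (Fin n)} {x y : Fin n → Bool}
    (h : ∀ j ∈ S, x j = y j) : cellMass P S x = cellMass P S y := by
  refine sum_congr rfl fun z _ => ?_
  have : (∀ j ∈ S, z j = x j) ↔ ∀ j ∈ S, z j = y j :=
    forall₂_congr fun j hj => by rw [h j hj]
  simp only [this]

/-- A sum over the cube, regrouped along the edges in direction `i` (each edge occurs twice). -/
lemma sum_pair (i : Fin n) (F : (Fin n → Bool) → ℝ) :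
    ∑ y, F y = 1 / 2 * ∑ y, (F (Function.update y i true) + F (Function.update y i false)) := by
  have hinv : Function.Involutive (fun y : Fin n → Bool => Function.update y i (!y i)) := by
    intro y; ext j
    by_cases h : j = i
    · subst h; simp
    · simp [h]
  have h1 : ∑ y, F (Function.update y i (!y i)) = ∑ y, F y := Equiv.sum_comp hinv.toPerm F
  have h2 : ∀ y, F (Function.update y i true) + F (Function.update y i false) =
      F y + F (Function.update y i (!y i)) := by
    intro y
    cases h : y i
    · have : Function.update y i false = y := by rw [← h]; simp
      rw [this]; simp [add_comm]
    · have : Function.update y i true = y := by rw [← h]; simp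
      rw [this]; simp
  simp only [h2, sum_add_distrib, h1]; ring

/-- The product of the kernels at the coordinates below `t`. -/
def partialProd (p : Fin n → (Fin n → Bool) → Bool → ℝ) (t : ℕ) (y : Fin n → Bool) : ℝ :=
  ∏ j, if j.val < t then p j y (y j) else 1

variable {Par : Fin n → Finset (Fin n)} {p : Fin n → (Fin n → Bool) → Bool → ℝ}

lemma kernel_update (hpar : ∀ i, ∀ j ∈ Par i, j < i)
    (hdep : ∀ i x y, (∀ j ∈ Par i, x j = y j) → p i x = p i y) {i j : Fin n} (hij : j ≤ i)
    (y : Fin n → Bool) (b : Bool) : p j (Function.update y i b) = p j y := by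
  refine hdep j _ _ fun l hl => ?_
  have : l ≠ i := ((hpar j l hl).trans_le hij).ne
  simp [this]

lemma partialProd_update (hpar : ∀ i, ∀ j ∈ Par i, j < i)
    (hdep : ∀ i x y, (∀ j ∈ Par i, x j = y j) → p i x = p i y) (i : Fin n)
    (y : Fin n → Bool) (b : Bool) :
    partialProd p (i + 1) (Function.update y i b) = partialProd p i y * p i y b := by
  have e : p i y b = ∏ j, if j = i then p j y b else 1 := by simp
  rw [partialProd, partialProd, e, ← prod_mul_distrib]
  refine prod_congr rfl fun j _ => ?_
  rcases lt_trichotomy j i with h | h | h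
  · have h' : j.val < i.val := h
    rw [if_pos (by lia), if_pos h', if_neg h.ne, kernel_update hpar hdep h.le]
    simp [h.ne]
  · subst h
    rw [if_pos (by lia), if_neg (by lia), if_pos rfl, kernel_update hpar hdep le_rfl]
    simp
  · have h' : i.val < j.val := h
    rw [if_neg (by lia), if_neg (by lia), if_neg h.ne']; simp

/-- In a Bayesian network the local kernel at `i` is the conditional law of coordinate `i` given
its parents. -/
lemma cellMass_insert (hpar : ∀ i, ∀ j ∈ Par i, j < i) {P : (Fin n → Bool) → ℝ}
    (hsum : ∀ i x, p i x true + p i x false = 1)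
    (hdep : ∀ i x y, (∀ j ∈ Par i, x j = y j) → p i x = p i y)
    (hprod : ∀ x, P x = ∏ i, p i x (x i)) (i : Fin n) (x : Fin n → Bool) :
    p i x (x i) * cellMass P (Par i) x = cellMass P (insert i (Par i)) x := by
  set G : (Fin n → Bool) → ℝ := fun y => if ∀ j ∈ Par i, y j = x j then
    (if y i = x i then 1 else 0) - p i x (x i) else 0 with hG
  have hcell : ∀ (l : Fin n) (y : Fin n → Bool) (b : Bool), i ≤ l →
      ((∀ j ∈ Par i, Function.update y l b j = x j) ↔ ∀ j ∈ Par i, y j = x j) := by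
    intro l y b hl
    refine forall₂_congr fun j hj => ?_
    have : j ≠ l := ((hpar i j hj).trans_le hl).ne
    simp [this]
  -- the coordinates above `i` are summed out one at a time, since `G` does not depend on them
  have h0 : ∀ s, i.val + 1 ≤ s → s ≤ n → ∑ y, partialProd p s y * G y = 0 := by
    intro s hs
    induction s, hs using Nat.le_induction with
    | base =>
      intro _
      rw [sum_pair i]
      simp only [partialProd_update hpar hdep]
      refine mul_eq_zero_of_right _ (sum_eq_zero fun y _ => ?_)
      simp only [hG, hcell i y _ le_rfl, Function.update_self]
      split_ifs with hc ht hf hf <;> try simp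
      · rw [← ht] at hf; simp at hf
      · have e := hdep i y x hc
        have := hsum i x
        rw [← ht, e]
        linear_combination (-(partialProd p i y * p i x true)) * this
      · have e := hdep i y x hc
        have := hsum i x
        rw [← hf, e]
        linear_combination (-(partialProd p i y * p i x false)) * this
      · cases h : x i <;> simp_all
    | succ s hs ih =>
      intro hsn
      have ih := ih (by lia)
      rw [sum_pair ⟨s, by lia⟩]
      have e := partialProd_update hpar hdep ⟨s, by lia⟩
      simp only at e
      have eG : ∀ y b, G (Function.update y ⟨s, by lia⟩ b) = G y := by
        intro y b
        have hne : i ≠ ⟨s, by lia⟩ := by intro h; rw [h] at hs; simp at hs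
        simp only [hG, hcell ⟨s, by lia⟩ y b (by rw [Fin.le_def]; simp; lia),
          Function.update_of_ne hne]
      simp only [e, eG]
      rw [sum_congr rfl fun y _ => (by
        linear_combination (partialProd p s y * G y) * hsum ⟨s, by lia⟩ y :
        partialProd p s y * p ⟨s, _⟩ y true * G y +
          partialProd p s y * p ⟨s, _⟩ y false * G y = partialProd p s y * G y), ih, mul_zero]
  have h1 := h0 n i.isLt le_rfl
  have e1 : ∀ y, partialProd p n y = P y := fun y => by simp [partialProd, hprod]
  have e2 : ∀ y, partialProd p n y * G y = (if ∀ j ∈ insert i (Par i), y j = x j then P y else 0) -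
      p i x (x i) * (if ∀ j ∈ Par i, y j = x j then P y else 0) := by
    intro y
    simp only [e1, hG, forall_mem_insert]
    by_cases hb : ∀ j ∈ Par i, y j = x j
    · simp only [eq_true hb, and_true, if_true]
      split_ifs <;> ring
    · simp only [eq_false hb, and_false, if_false]
      ring
  simp only [e2, sum_sub_distrib, ← mul_sum] at h1
  rw [cellMass, cellMass]; linarith

/-- If each cell contributes at most `B`, the weighted total is at most `B` times the number of
cells. -/
lemma sum_cells_le (R v : (Fin n → Bool) → ℝ) (S : Finset (Fin n)) (B : ℝ)
    (hv : ∀ x y, (∀ j ∈ S, x j = y j) → v x = v y) (hB0 : 0 ≤ B)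
    (hB : ∀ x, cellMass R S x * v x ≤ B) :
    ∑ x, R x * v x ≤ 2 ^ S.card * B := by
  rw [← sum_fiberwise univ (fun (x : Fin n → Bool) (j : S) => x j)]
  calc _ ≤ ∑ _a : S → Bool, B := by
        refine sum_le_sum fun a _ => ?_
        by_cases h : ∃ x : Fin n → Bool, (fun j : S => x j) = a
        · obtain ⟨x, rfl⟩ := h
          refine le_trans (le_of_eq ?_) (hB x)
          rw [cellMass, sum_mul, sum_filter]
          refine sum_congr rfl fun y _ => ?_
          have : ((fun j : S => y j) = fun j : S => x j) ↔ ∀ j ∈ S, y j = x j := by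
            simp [funext_iff]
          simp only [this]
          split_ifs with hy
          · rw [hv y x hy]
          · simp
        · rw [filter_eq_empty_iff.2 fun x _ hx => h ⟨x, hx⟩]; simpa using hB0
    _ = _ := by simp

/-- Comparison of two conditional probabilities `p`, `q` whose numerators and denominators are
close on the square-root scale. -/
lemma local_ratio {p q a b a' b' r u : ℝ} (hr : 0 < r) (hp : 0 ≤ p) (hq : 0 ≤ q)
    (ha : 0 ≤ a) (hb : 0 ≤ b) (ha' : 0 ≤ a') (hbb : b ≤ b')
    (h1 : |a - b| ≤ 2 * r) (h2 : |a' - b'| ≤ 2 * r)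
    (hu0 : 0 ≤ u) (hu : u ^ 2 = r ^ 2 / (b ^ 2 + r ^ 2)) (hu1 : u ≤ 1 / 18)
    (ep : p * a' ^ 2 = a ^ 2) (eq : q * b' ^ 2 = b ^ 2) :
    p ≤ Real.exp (18 * u) * q ∧ q ≤ Real.exp (18 * u) * p := by
  have hu2 : u ^ 2 * (b ^ 2 + r ^ 2) = r ^ 2 := by rw [hu]; field_simp
  have hrb : 2 * r ≤ 3 * u * b := by
    refine abs_le_of_sq_le_sq' ?_ (by positivity) |>.2
    have : u ^ 2 ≤ 1 / 9 := by nlinarith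
    nlinarith [mul_nonneg (sq_nonneg r) (sub_nonneg.2 this)]
  have hb0 : 0 < b := by
    rcases hb.eq_or_lt with h | h
    · subst h; linarith
    · exact h
  have hrb' : 2 * r ≤ 3 * u * b' := hrb.trans (by gcongr)
  have key : ∀ s t : ℝ, 0 ≤ s → 0 ≤ t → 2 * r ≤ 3 * u * t → |s - t| ≤ 2 * r →
      s ^ 2 ≤ Real.exp (6 * u) * t ^ 2 ∧ t ^ 2 ≤ Real.exp (12 * u) * s ^ 2 := by
    intro s t hs ht hrt hst
    obtain ⟨l1, l2⟩ := abs_le.1 hst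
    constructor
    · have : s ≤ Real.exp (3 * u) * t := by
        nlinarith [Real.add_one_le_exp (3 * u)]
      have h := pow_le_pow_left₀ hs this 2
      rw [mul_pow, ← Real.exp_nat_mul] at h
      refine h.trans_eq ?_
      congr 2; push_cast; ring
    · have h6 : 1 ≤ Real.exp (6 * u) * (1 - 3 * u) := by
        nlinarith [Real.add_one_le_exp (6 * u)]
      have : t ≤ Real.exp (6 * u) * s := by
        have hs' : (1 - 3 * u) * t ≤ s := by linarith
        have := mul_le_mul_of_nonneg_left hs' (Real.exp_nonneg (6 * u))
        nlinarith
      have h := pow_le_pow_left₀ ht this 2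
      rw [mul_pow, ← Real.exp_nat_mul] at h
      refine h.trans_eq ?_
      congr 2; push_cast; ring
  obtain ⟨k1, k2⟩ := key a b ha hb hrb h1
  obtain ⟨k3, k4⟩ := key a' b' ha' (hb.trans hbb) hrb' h2
  have hb'0 : 0 < b' := hb0.trans_le hbb
  have ha'0 : 0 < a' ^ 2 := by
    by_contra hcon
    have : a' ^ 2 = 0 := le_antisymm (not_lt.1 hcon) (sq_nonneg _)
    rw [this, mul_zero] at k4
    nlinarith
  have hb'2 : 0 < b' ^ 2 := by positivity
  have eexp : Real.exp (18 * u) = Real.exp (6 * u) * Real.exp (12 * u) := by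
    rw [← Real.exp_add]; congr 1; ring
  constructor
  · refine le_of_mul_le_mul_right ?_ ha'0
    calc p * a' ^ 2 ≤ Real.exp (6 * u) * b ^ 2 := by rw [ep]; exact k1
      _ = Real.exp (6 * u) * (q * b' ^ 2) := by rw [eq]
      _ ≤ Real.exp (6 * u) * (q * (Real.exp (12 * u) * a' ^ 2)) := by gcongr
      _ = _ := by rw [eexp]; ring
  · refine le_of_mul_le_mul_right ?_ hb'2
    calc q * b' ^ 2 ≤ Real.exp (12 * u) * a ^ 2 := by rw [eq]; exact k2
      _ = Real.exp (12 * u) * (p * a' ^ 2) := by rw [ep]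
      _ ≤ Real.exp (12 * u) * (p * (Real.exp (6 * u) * b' ^ 2)) := by gcongr
      _ = _ := by rw [eexp]; ring

/-- The uncertainty score of `x`: `n` times the sum over `i` of the (regularised) relative squared
estimation error of the mass of the cell of `x` on coordinate `i` and its parents. -/
noncomputable def score (Par : Fin n → Finset (Fin n)) (Q : (Fin n → Bool) → ℝ) (k : ℕ) (r : ℝ)
    (x : Fin n → Bool) : ℝ :=
  n * ∑ i, r ^ 2 / (k * cellMass Q (insert i (Par i)) x + r ^ 2)

lemma score_nonneg {Q : (Fin n → Bool) → ℝ} (hQ : ∀ x, 0 ≤ Q x) (k : ℕ) (r : ℝ)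
    (x : Fin n → Bool) : 0 ≤ score Par Q k r x := by
  refine mul_nonneg (Nat.cast_nonneg _) (sum_nonneg fun i _ => ?_)
  have := cellMass_nonneg hQ (insert i (Par i)) x
  positivity

/-- Two Markov distributions with close cell masses have likelihood ratio near `1` wherever the
score is small. -/
lemma ratio_bound (hpar : ∀ i, ∀ j ∈ Par i, j < i) {P Q : (Fin n → Bool) → ℝ}
    (hP : ∀ x, 0 ≤ P x) (hQ : ∀ x, 0 ≤ Q x) (mP : IsMarkov Par P) (mQ : IsMarkov Par Q)
    (k : ℕ) (r : ℝ) (hr : 0 < r)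
    (hclose : ∀ S x, |√(k * cellMass P S x) - √(k * cellMass Q S x)| ≤ 2 * r)
    (x : Fin n → Bool) (hx : score Par Q k r x ≤ 1 / 324) :
    (P x - Q x) ^ 2 ≤ 1296 * (Q x ^ 2 * score Par Q k r x) := by
  obtain ⟨p, hp1, hp2, hp3⟩ := mP
  obtain ⟨q, hq1, hq2, hq3⟩ := mQ
  set u : Fin n → ℝ := fun i => √(r ^ 2 / (k * cellMass Q (insert i (Par i)) x + r ^ 2)) with hu
  have hcQ := fun S => cellMass_nonneg hQ S x
  have hcP := fun S => cellMass_nonneg hP S x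
  have hu0 : ∀ i, 0 ≤ u i := fun i => Real.sqrt_nonneg _
  have hu2 : ∀ i, u i ^ 2 = r ^ 2 / (k * cellMass Q (insert i (Par i)) x + r ^ 2) := fun i => by
    have := hcQ (insert i (Par i))
    exact Real.sq_sqrt (by positivity)
  set U := ∑ i, u i with hU
  have hU0 : 0 ≤ U := sum_nonneg fun i _ => hu0 i
  -- Cauchy-Schwarz; this is where the factor `n` in the score comes from
  have hU2 : U ^ 2 ≤ score Par Q k r x := by
    have := sq_sum_le_card_mul_sum_sq (s := univ) (f := u)
    simpa [score, ← hu2] using this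
  have hU1 : U ≤ 1 / 18 := by nlinarith
  have hui : ∀ i, u i ≤ 1 / 18 := fun i =>
    (single_le_sum (fun j _ => hu0 j) (mem_univ i)).trans hU1
  have hloc : ∀ i, p i x (x i) ≤ Real.exp (18 * u i) * q i x (x i) ∧
      q i x (x i) ≤ Real.exp (18 * u i) * p i x (x i) := by
    intro i
    have sq1 : ∀ S, √(k * cellMass P S x) ^ 2 = k * cellMass P S x := fun S =>
      Real.sq_sqrt (mul_nonneg (Nat.cast_nonneg _) (hcP S))
    have sq2 : ∀ S, √(k * cellMass Q S x) ^ 2 = k * cellMass Q S x := fun S =>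
      Real.sq_sqrt (mul_nonneg (Nat.cast_nonneg _) (hcQ S))
    refine local_ratio (a := √(k * cellMass P (insert i (Par i)) x))
      (b := √(k * cellMass Q (insert i (Par i)) x)) (a' := √(k * cellMass P (Par i) x))
      (b' := √(k * cellMass Q (Par i) x)) hr ((hp1 i x).1 _) ((hq1 i x).1 _)
      (Real.sqrt_nonneg _) (Real.sqrt_nonneg _) (Real.sqrt_nonneg _) ?_ (hclose _ _) (hclose _ _)
      (hu0 i) ?_ (hui i) ?_ ?_
    · exact Real.sqrt_le_sqrt (mul_le_mul_of_nonneg_left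
        (cellMass_anti hQ (subset_insert _ _) x) (Nat.cast_nonneg _))
    · rw [sq2, hu2]
    · rw [sq1, sq1, ← cellMass_insert hpar (fun i x => (hp1 i x).2) hp2 hp3]; ring
    · rw [sq2, sq2, ← cellMass_insert hpar (fun i x => (hq1 i x).2) hq2 hq3]; ring
  have eprod : ∏ i, Real.exp (18 * u i) = Real.exp (18 * U) := by
    rw [← Real.exp_sum, hU, mul_sum]
  have g1 : P x ≤ Real.exp (18 * U) * Q x := by
    rw [hp3, hq3, ← eprod, ← prod_mul_distrib]
    exact prod_le_prod (fun i _ => (hp1 i x).1 _) fun i _ => (hloc i).1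
  have g2 : Q x ≤ Real.exp (18 * U) * P x := by
    rw [hp3, hq3, ← eprod, ← prod_mul_distrib]
    exact prod_le_prod (fun i _ => (hq1 i x).1 _) fun i _ => (hloc i).2
  have hexp : Real.exp (18 * U) ≤ 1 + 36 * U := by
    have := (abs_le.1 (Real.abs_exp_sub_one_le (x := 18 * U)
      (by rw [abs_of_nonneg (by positivity)]; linarith))).2
    rw [abs_of_nonneg (by positivity : 0 ≤ 18 * U)] at this
    linarith
  have hQx := hQ x
  have hPx := hP x
  have hab : |P x - Q x| ≤ 36 * U * Q x := by
    rw [abs_le]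
    constructor
    · rcases le_total (P x) (Q x) with h | h
      · have : Q x ≤ (1 + 36 * U) * P x := g2.trans (mul_le_mul_of_nonneg_right hexp hPx)
        nlinarith
      · have : 0 ≤ 36 * U * Q x := by positivity
        linarith
    · have : P x ≤ (1 + 36 * U) * Q x := g1.trans (mul_le_mul_of_nonneg_right hexp hQx)
      linarith
  calc (P x - Q x) ^ 2 = |P x - Q x| ^ 2 := (sq_abs _).symm
    _ ≤ (36 * U * Q x) ^ 2 := pow_le_pow_left₀ (abs_nonneg _) hab 2
    _ = 1296 * (Q x ^ 2 * U ^ 2) := by ring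
    _ ≤ _ := by gcongr

/-- The mean score under any `R` whose subcube masses are dominated by those of `Q`: each of the at
most `2 ^ (d + 1)` cells of a family contributes at most `M r² / k`. -/
lemma score_mean {d : ℕ} (hdeg : ∀ i, (Par i).card ≤ d) {R Q : (Fin n → Bool) → ℝ}
    (hQ : ∀ x, 0 ≤ Q x) (k : ℕ) (hk : 0 < k)
    (r : ℝ) (hr : 0 < r) (M : ℝ) (hM : 0 ≤ M)
    (hdom : ∀ S x, k * cellMass R S x ≤ M * (k * cellMass Q S x + r ^ 2)) :
    ∑ x, R x * score Par Q k r x ≤ M * (n ^ 2 * 2 ^ (d + 1) * r ^ 2 / k) := by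
  have hk' : (0 : ℝ) < k := Nat.cast_pos.2 hk
  have h : ∀ i, ∑ x, R x * (r ^ 2 / (k * cellMass Q (insert i (Par i)) x + r ^ 2)) ≤
      2 ^ (d + 1) * (M * r ^ 2 / k) := by
    intro i
    have hB0 : 0 ≤ M * r ^ 2 / k := by positivity
    refine (sum_cells_le R _ (insert i (Par i)) (M * r ^ 2 / k) ?_ hB0 ?_).trans ?_
    · intro x y hxy; rw [cellMass_congr Q hxy]
    · intro x
      have h0 := cellMass_nonneg hQ (insert i (Par i)) x
      rw [mul_div_assoc', div_le_div_iff₀ (by positivity) hk']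
      have := mul_le_mul_of_nonneg_right (hdom (insert i (Par i)) x) (sq_nonneg r)
      linarith
    · refine mul_le_mul_of_nonneg_right ?_ hB0
      exact pow_le_pow_right₀ (by norm_num)
        ((card_insert_le _ _).trans (Nat.succ_le_succ (hdeg i)))
  have e : ∑ x, R x * score Par Q k r x =
      n * ∑ i, ∑ x, R x * (r ^ 2 / (k * cellMass Q (insert i (Par i)) x + r ^ 2)) := by
    rw [sum_comm, mul_sum]
    refine sum_congr rfl fun x _ => ?_
    rw [score, ← mul_sum]; ring
  rw [e]
  calc _ ≤ (n : ℝ) * ∑ _i : Fin n, 2 ^ (d + 1) * (M * r ^ 2 / k) :=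
        mul_le_mul_of_nonneg_left (sum_le_sum fun i _ => h i) (Nat.cast_nonneg _)
    _ = _ := by simp; ring

end Markov

/-! ### Collapsing the unreliable points -/

section Collapse
variable {α : Type} [Fintype α] (A : α → Prop) [DecidablePred A]

/-- The map keeping the points of `A` and merging all the others into `none`. -/
def collapse (x : α) : Option α := if A x then some x else none

/-- Reference masses for the collapsed sample space: `Q` on `A`, and `0` at the merged point. -/
def refMass (Q : α → ℝ) : Option α → ℝ
  | none => 0
  | some x => if A x then Q x else 0

/-- Weights of the statistic: inverse reference masses, regularised by `ε² / |α|` at ordinary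
points and by `ε²` at the merged point. -/
noncomputable def weight (Q : α → ℝ) (ε : ℝ) : Option α → ℝ
  | none => 1 / ε ^ 2
  | some x => 1 / ((if A x then Q x else 0) + ε ^ 2 / Fintype.card α)

variable [DecidableEq α]

lemma push_some (P : α → ℝ) (x : α) : push P (collapse A) (some x) = if A x then P x else 0 := by
  have : ∀ y, (if collapse A y = some x then P y else 0) = if y = x then (if A x then P x else 0)
      else 0 := by
    intro y
    unfold collapse
    by_cases h : y = x
    · subst h; split_ifs <;> simp_all
    · split_ifs <;> simp_all
  simp [push, this]

lemma push_none (P : α → ℝ) : push P (collapse A) none = ∑ x, if A x then 0 else P x := by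
  refine sum_congr rfl fun y _ => ?_
  unfold collapse
  split_ifs <;> simp_all

/-- The normalised mean of the statistic. -/
noncomputable def discrepancy (P Q : α → ℝ) (ε : ℝ) : ℝ :=
  ∑ z, weight A Q ε z * (push P (collapse A) z - refMass A Q z) ^ 2

lemma discrepancy_eq (P Q : α → ℝ) (ε : ℝ) :
    discrepancy A P Q ε = (∑ x, if A x then 0 else P x) ^ 2 / ε ^ 2 +
      ∑ x, if A x then (P x - Q x) ^ 2 / (Q x + ε ^ 2 / Fintype.card α) else 0 := by
  rw [discrepancy, Fintype.sum_option, push_none]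
  simp only [weight, refMass, push_some]
  congr 1
  · ring
  · refine sum_congr rfl fun x _ => ?_
    split_ifs <;> ring

/-- Pointwise comparison of the Hellinger and regularised `χ²` contributions. -/
lemma sqrt_sub_sq_le {p q τ : ℝ} (hp : 0 ≤ p) (hq : 0 ≤ q) (hτ : 0 < τ) :
    (√p - √q) ^ 2 ≤ 2 * ((p - q) ^ 2 / (q + τ)) + τ := by
  have a := Real.sq_sqrt hp
  have b := Real.sq_sqrt hq
  have a0 := Real.sqrt_nonneg p
  have b0 := Real.sqrt_nonneg q
  have hpos : 0 < q + τ := by linarith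
  have hfr : 0 ≤ (p - q) ^ 2 / (q + τ) := by positivity
  by_cases h : q + τ ≤ 2 * (p + q)
  · have : (√p - √q) ^ 2 ≤ 2 * (p - q) ^ 2 / (q + τ) := by
      rw [le_div_iff₀ hpos]
      have e : (p - q) ^ 2 = (√p - √q) ^ 2 * (√p + √q) ^ 2 := by
        rw [← mul_pow]; congr 1; linear_combination b - a
      rw [e]
      have : q + τ ≤ 2 * (√p + √q) ^ 2 := by nlinarith [mul_nonneg a0 b0]
      nlinarith [mul_le_mul_of_nonneg_left this (sq_nonneg (√p - √q))]
    rw [mul_div_assoc] at this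
    linarith
  · nlinarith [mul_nonneg a0 b0]

/-- If `P` is far from `Q` in Hellinger distance and `Q` has little mass outside `A`, then the
statistic has large mean. -/
lemma discrepancy_far {P Q : α → ℝ} (hP : ∀ x, 0 ≤ P x) (hQ : ∀ x, 0 ≤ Q x) {ε : ℝ} (hε : 0 < ε)
    [Nonempty α] (hA : ∑ x, (if A x then 0 else Q x) ≤ ε ^ 2 / 4) (hfar : ε ≤ hellinger P Q) :
    ε ^ 2 / 4 ≤ discrepancy A P Q ε := by
  have hc : (0 : ℝ) < Fintype.card α := Nat.cast_pos.2 Fintype.card_pos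
  set τ := ε ^ 2 / Fintype.card α with hτ
  have hτ0 : 0 < τ := by positivity
  have h1 : 2 * ε ^ 2 ≤ ∑ x, (√(P x) - √(Q x)) ^ 2 := by
    have h0 : 0 ≤ (1 / 2) * ∑ a, (√(P a) - √(Q a)) ^ 2 :=
      mul_nonneg (by norm_num) (sum_nonneg fun a _ => sq_nonneg _)
    have := (Real.le_sqrt' hε).1 hfar
    linarith
  have h2 : ∀ x, (√(P x) - √(Q x)) ^ 2 ≤ 2 * (if A x then (P x - Q x) ^ 2 / (Q x + τ) else 0) + τ +
      (if A x then 0 else P x) + (if A x then 0 else Q x) := by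
    intro x
    split_ifs
    · have := sqrt_sub_sq_le (hP x) (hQ x) hτ0
      linarith
    · nlinarith [Real.sq_sqrt (hP x), Real.sq_sqrt (hQ x),
        mul_nonneg (Real.sqrt_nonneg (P x)) (Real.sqrt_nonneg (Q x))]
  have h3 := h1.trans (sum_le_sum fun x _ => h2 x)
  rw [sum_add_distrib, sum_add_distrib, sum_add_distrib, ← mul_sum] at h3
  have h4 : ∑ _x : α, τ = ε ^ 2 := by simp [hτ]; field_simp
  rw [h4] at h3
  rw [discrepancy_eq]
  set B := ∑ x, if A x then 0 else P x
  have hB : B ≤ B ^ 2 / ε ^ 2 + ε ^ 2 / 4 := by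
    have e : B ^ 2 / ε ^ 2 = (B / ε) ^ 2 := by rw [div_pow]
    have e' : B = B / ε * ε := by field_simp
    rw [e]; nlinarith [sq_nonneg (B / ε - ε / 2)]
  have : 0 ≤ B ^ 2 / ε ^ 2 := by positivity
  linarith

/-- Deviation bound for the statistic built from `A`, `Q`. -/
lemma collapse_dev {P Q : α → ℝ} (hP : ∀ x, 0 ≤ P x) (h1 : ∑ x, P x = 1) (hQ : ∀ x, 0 ≤ Q x)
    [Nonempty α] {k : ℕ} {ε : ℝ} (hε : 0 < ε) (hk : 3400 * √(Fintype.card α) / ε ^ 2 ≤ k) (E : ℝ)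
    (hDE : discrepancy A P Q ε ≤ E) (hE : ε ^ 2 / 4 ≤ E) :
    Ex P (fun v : Fin k → α => Ex P (fun v' : Fin k → α =>
      if k ^ 2 * E / 4 ≤ |stat (collapse A) (weight A Q ε) (refMass A Q) v v' -
        k ^ 2 * discrepancy A P Q ε| then (1 : ℝ) else 0)) ≤ 1 / 10 := by
  have hc1 : (1 : ℝ) ≤ Fintype.card α := Nat.one_le_cast.2 Fintype.card_pos
  have hc : (0 : ℝ) < Fintype.card α := by linarith
  have hτ0 : 0 < ε ^ 2 / Fintype.card α := by positivity
  have hq : ∀ z, 0 ≤ refMass A Q z := by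
    rintro (_ | x)
    · exact le_rfl
    · simp only [refMass]; split_ifs <;> simp [hQ]
  have hq' : ∀ x, 0 ≤ if A x then Q x else 0 := fun x => hq (some x)
  refine stat_dev hP h1 _ _ _ ?_ hq ?_ (Fintype.card α) ε hc hε ?_ ?_ hk _ E rfl hDE hE
  · rintro (_ | x)
    · simp only [weight]; positivity
    · have := hq' x
      simp only [weight]; positivity
  · rintro (_ | x)
    · simp [refMass]
    · have := hq' x
      simp only [weight, refMass]
      rw [one_div_mul_eq_div, div_le_one (by positivity)]; linarith
  · rw [Fintype.card_option]; push_cast; linarith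
  · rintro (_ | x)
    · simp only [weight]; gcongr
    · have := hq' x
      simp only [weight]
      rw [show (Fintype.card α : ℝ) / ε ^ 2 = 1 / (ε ^ 2 / Fintype.card α) by rw [one_div_div]]
      gcongr
      linarith

end Collapse

/-! ### The test -/

section Test
variable {n : ℕ}

/-- `Q` is a Markov distribution compatible with the sample `u`: every subcube count is within `r`
of its expectation under `Q`, on the square-root scale. -/
def Feasible (Par : Fin n → Finset (Fin n)) {k : ℕ} (r : ℝ) (u : Fin k → Fin n → Bool)
    (Q : (Fin n → Bool) → ℝ) : Prop :=
  ((∀ x, 0 ≤ Q x) ∧ ∑ x, Q x = 1) ∧ IsMarkov Par Q ∧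
    ∀ S x, |√(cnt (fun y => ∀ j ∈ S, y j = x j) u) - √(k * cellMass Q S x)| ≤ r

/-- The true Markov distribution is compatible with its own sample with high probability. -/
lemma feasible_prob {Par : Fin n → Finset (Fin n)} {P : (Fin n → Bool) → ℝ}
    (hP : (∀ x, 0 ≤ P x) ∧ ∑ x, P x = 1) (mP : IsMarkov Par P) (k : ℕ) :
    open Classical in
    9 / 10 ≤ Ex P (fun u : Fin k → Fin n → Bool =>
      if Feasible Par (3 * √(10 * (n + 1))) u P then (1 : ℝ) else 0) := by
  classical
  set L : ℝ := 10 * (n + 1) with hL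
  have hL0 : 0 < L := by positivity
  let bad : Finset (Fin n) → (Fin n → Bool) → (Fin k → Fin n → Bool) → ℝ := fun S x u =>
    if 3 * √L < |√(cnt (fun y => ∀ j ∈ S, y j = x j) u) - √(k * cellMass P S x)| then 1 else 0
  have hb0 : ∀ S x u, 0 ≤ bad S x u := fun S x u => by simp only [bad]; split_ifs <;> norm_num
  have hbad : ∀ S x, Ex P (bad S x) ≤ 2 * Real.exp (-L) := fun S x =>
    chernoff_s17 hP.1 hP.2 (fun y => ∀ j ∈ S, y j = x j) L hL0
  have hpt : ∀ u : Fin k → Fin n → Bool, (1 : ℝ) ≤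
      (if Feasible Par (3 * √L) u P then (1 : ℝ) else 0) + ∑ S, ∑ x, bad S x u := by
    intro u
    have hsum0 : 0 ≤ ∑ S, ∑ x, bad S x u := sum_nonneg fun S _ => sum_nonneg fun x _ => hb0 S x u
    by_cases hF : Feasible Par (3 * √L) u P
    · rw [if_pos hF]; linarith
    · have : ∃ S x, 3 * √L <
          |√(cnt (fun y => ∀ j ∈ S, y j = x j) u) - √(k * cellMass P S x)| := by
        by_contra hcon
        push Not at hcon
        exact hF ⟨hP, mP, hcon⟩
      obtain ⟨S, x, hSx⟩ := this
      have e : bad S x u = 1 := if_pos hSx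
      have i1 : bad S x u ≤ ∑ x, bad S x u :=
        single_le_sum (f := fun x => bad S x u) (fun x _ => hb0 S x u) (mem_univ x)
      have i2 : ∑ x, bad S x u ≤ ∑ S, ∑ x, bad S x u :=
        single_le_sum (f := fun S => ∑ x, bad S x u)
          (fun S _ => sum_nonneg fun x _ => hb0 S x u) (mem_univ S)
      rw [if_neg hF]; linarith
  have h := Ex_mono hP.1 hpt
  rw [Ex_const hP.2, Ex_add, Ex_sum] at h
  simp only [Ex_sum] at h
  have h2 : ∑ S, ∑ x, Ex P (bad S x) ≤ 1 / 10 := by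
    calc _ ≤ ∑ _S : Finset (Fin n), ∑ _x : Fin n → Bool, 2 * Real.exp (-L) :=
          sum_le_sum fun S _ => sum_le_sum fun x _ => hbad S x
      _ = 2 * 4 ^ n * Real.exp (-L) := by
          simp
          rw [show (4 : ℝ) = 2 * 2 by norm_num, mul_pow]; ring
      _ ≤ 1 / 10 := by
          rw [Real.exp_neg, ← div_eq_mul_inv, div_le_iff₀ (Real.exp_pos _)]
          have h2e : (2 : ℝ) ≤ Real.exp 1 := by linarith [Real.add_one_le_exp (1 : ℝ)]
          have : Real.exp L = Real.exp 1 ^ (10 * (n + 1)) := by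
            rw [← Real.exp_nat_mul, hL]; push_cast; ring_nf
          have h3 : (2 : ℝ) ^ (10 * (n + 1)) ≤ Real.exp L := by
            rw [this]; exact pow_le_pow_left₀ (by norm_num) h2e _
          have h4 : (2 : ℝ) ^ (10 * (n + 1)) = 1024 * (2 ^ 8) ^ n * 4 ^ n := by
            rw [mul_assoc, ← mul_pow, pow_mul, pow_succ]; norm_num; ring
          have h5 : (1 : ℝ) ≤ (2 ^ 8) ^ n := one_le_pow₀ (by norm_num)
          have h6 : (0 : ℝ) < 4 ^ n := by positivity
          rw [h4] at h3
          nlinarith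
  linarith

/-- Mass outside the low-score region, by Markov's inequality. -/
lemma high_score_mass {Par : Fin n → Finset (Fin n)} {R Q : (Fin n → Bool) → ℝ}
    (hR : ∀ x, 0 ≤ R x) (hQ : ∀ x, 0 ≤ Q x) (k : ℕ) (r : ℝ) :
    ∑ x, (if score Par Q k r x ≤ 1 / 324 then 0 else R x) ≤
      324 * ∑ x, R x * score Par Q k r x := by
  rw [mul_sum]
  refine sum_le_sum fun x _ => ?_
  have h0 := score_nonneg (Par := Par) hQ k r x
  have := hR x
  split_ifs with h
  · positivity
  · push Not at h; nlinarith

/-- Two Markov distributions compatible with the same sample have small discrepancy on the collapsed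
space. -/
lemma discrepancy_close {Par : Fin n → Finset (Fin n)} (hpar : ∀ i, ∀ j ∈ Par i, j < i) {d : ℕ}
    (hdeg : ∀ i, (Par i).card ≤ d) {P Q : (Fin n → Bool) → ℝ} {k : ℕ} (hk : 0 < k) {r ε : ℝ}
    (hr : 0 < r) (hε : 0 < ε) (u : Fin k → Fin n → Bool) (hP : Feasible Par r u P)
    (hQ : Feasible Par r u Q) (hH : (n : ℝ) ^ 2 * 2 ^ (d + 1) * r ^ 2 / k ≤ ε ^ 2 / 41472) :
    discrepancy (fun x => score Par Q k r x ≤ 1 / 324) P Q ε ≤ ε ^ 2 / 16 := by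
  obtain ⟨⟨hP0, -⟩, mP, fP⟩ := hP
  obtain ⟨⟨hQ0, -⟩, mQ, fQ⟩ := hQ
  have hclose : ∀ S x, |√(k * cellMass P S x) - √(k * cellMass Q S x)| ≤ 2 * r := by
    intro S x
    have a := abs_le.1 (fP S x)
    have b := abs_le.1 (fQ S x)
    rw [abs_le]; constructor <;> linarith [a.1, a.2, b.1, b.2]
  have mQs := score_mean (R := Q) hdeg hQ0 k hk r hr 1 zero_le_one fun S x => by nlinarith
  have mPs := score_mean (R := P) hdeg hQ0 k hk r hr 8 (by norm_num) fun S x => by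
    have c1 : 0 ≤ k * cellMass P S x := mul_nonneg (Nat.cast_nonneg _) (cellMass_nonneg hP0 S x)
    have c2 : 0 ≤ k * cellMass Q S x := mul_nonneg (Nat.cast_nonneg _) (cellMass_nonneg hQ0 S x)
    have := (abs_le.1 (hclose S x)).2
    have h := pow_le_pow_left₀ (Real.sqrt_nonneg _)
      (by linarith : √(k * cellMass P S x) ≤ √(k * cellMass Q S x) + 2 * r) 2
    rw [Real.sq_sqrt c1] at h
    nlinarith [Real.sq_sqrt c2, sq_nonneg (√(k * cellMass Q S x) - 2 * r)]
  have hPA := high_score_mass (Par := Par) hP0 hQ0 k r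
  rw [discrepancy_eq]
  set B := ∑ x, if score Par Q k r x ≤ 1 / 324 then 0 else P x
  have hB0 : 0 ≤ B := sum_nonneg fun x _ => by split_ifs <;> simp [hP0]
  have hB : B ≤ ε ^ 2 / 16 := by linarith
  have hB2 : B ^ 2 / ε ^ 2 ≤ ε ^ 2 / 256 := by
    rw [div_le_iff₀ (by positivity)]
    nlinarith [pow_le_pow_left₀ hB0 hB 2]
  have hc : (0 : ℝ) < Fintype.card (Fin n → Bool) := Nat.cast_pos.2 Fintype.card_pos
  have hS : ∑ x, (if score Par Q k r x ≤ 1 / 324 then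
      (P x - Q x) ^ 2 / (Q x + ε ^ 2 / Fintype.card (Fin n → Bool)) else 0) ≤
      1296 * ∑ x, Q x * score Par Q k r x := by
    rw [mul_sum]
    refine sum_le_sum fun x _ => ?_
    have h0 := score_nonneg (Par := Par) hQ0 k r x
    have hq := hQ0 x
    have hτ : 0 < ε ^ 2 / (Fintype.card (Fin n → Bool) : ℝ) := by positivity
    split_ifs with h
    · have := ratio_bound hpar hP0 hQ0 mP mQ k r hr hclose x h
      rw [div_le_iff₀ (by positivity)]
      have : 0 ≤ Q x * score Par Q k r x * (ε ^ 2 / (Fintype.card (Fin n → Bool) : ℝ)) := by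
        positivity
      nlinarith
    · positivity
  have : 0 < ε ^ 2 := by positivity
  linarith

open Classical in
/-- The test: pick a Markov `Q` compatible with the first sample (reject if there is none) and
compare the statistic built from `Q` on the other two samples with a threshold. -/
noncomputable def markovTest (Par : Fin n → Finset (Fin n)) {k : ℕ} (r ε : ℝ)
    (u v v' : Fin k → Fin n → Bool) : Bool :=
  if h : ∃ Q, Feasible Par r u Q then
    decide (stat (collapse fun x => score Par h.choose k r x ≤ 1 / 324)
      (weight (fun x => score Par h.choose k r x ≤ 1 / 324) h.choose ε)
      (refMass (fun x => score Par h.choose k r x ≤ 1 / 324) h.choose) v v' < k ^ 2 * ε ^ 2 / 8)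
  else false

/-- Completeness and soundness of the test, for three independent blocks of `k` samples. -/
lemma test_core {Par : Fin n → Finset (Fin n)} (hpar : ∀ i, ∀ j ∈ Par i, j < i) {d : ℕ}
    (hdeg : ∀ i, (Par i).card ≤ d) {k : ℕ} {r ε : ℝ} (hr : r = 3 * √(10 * (n + 1)))
    (hε : 0 < ε) (hH : (n : ℝ) ^ 2 * 2 ^ (d + 1) * r ^ 2 / k ≤ ε ^ 2 / 41472)
    (hk : 3400 * √(2 ^ n) / ε ^ 2 ≤ k) {P : (Fin n → Bool) → ℝ}
    (hP : (∀ x, 0 ≤ P x) ∧ ∑ x, P x = 1) :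
    (IsMarkov Par P → 2 / 3 ≤ Ex P fun u : Fin k → Fin n → Bool => Ex P fun v : Fin k → Fin n → Bool =>
      Ex P fun v' : Fin k → Fin n → Bool =>
        if markovTest Par r ε u v v' = true then (1 : ℝ) else 0) ∧
    ((∀ Q : (Fin n → Bool) → ℝ, ((∀ x, 0 ≤ Q x) ∧ ∑ x, Q x = 1) → IsMarkov Par Q →
        ε ≤ hellinger P Q) →
      2 / 3 ≤ Ex P fun u : Fin k → Fin n → Bool => Ex P fun v : Fin k → Fin n → Bool =>
        Ex P fun v' : Fin k → Fin n → Bool =>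
          if markovTest Par r ε u v v' = false then (1 : ℝ) else 0) := by
  classical
  have hr0 : 0 < r := by rw [hr]; positivity
  have hk0 : (0 : ℝ) < k := lt_of_lt_of_le (by positivity) hk
  have hkn : 0 < k := Nat.cast_pos.1 hk0
  have hcard : (Fintype.card (Fin n → Bool) : ℝ) = 2 ^ n := by simp
  have hk' : 3400 * √(Fintype.card (Fin n → Bool)) / ε ^ 2 ≤ k := by rwa [hcard]
  have hε2 : 0 < ε ^ 2 := by positivity
  have hkε : 0 < (k : ℝ) ^ 2 * ε ^ 2 := by positivity
  constructor
  · intro mP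
    have hfe := feasible_prob hP mP k
    rw [← hr] at hfe
    have hstep : ∀ u : Fin k → Fin n → Bool, 9 / 10 * (if Feasible Par r u P then (1 : ℝ) else 0) ≤
        Ex P fun v : Fin k → Fin n → Bool => Ex P fun v' : Fin k → Fin n → Bool =>
          if markovTest Par r ε u v v' = true then (1 : ℝ) else 0 := by
      intro u
      by_cases hF : Feasible Par r u P
      · have hex : ∃ Q, Feasible Par r u Q := ⟨P, hF⟩
        have hQ := hex.choose_spec
        set Q := hex.choose with hQdef
        have hD := discrepancy_close hpar hdeg hkn hr0 hε u hF hQ hH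
        have hdev := collapse_dev (fun x => score Par Q k r x ≤ 1 / 324) hP.1 hP.2 hQ.1.1 hε hk'
          (ε ^ 2 / 4) (by linarith) le_rfl
        set D := discrepancy (fun x => score Par Q k r x ≤ 1 / 324) P Q ε
        rw [if_pos hF, mul_one]
        have hpt : ∀ v v' : Fin k → Fin n → Bool, (1 : ℝ) ≤
            (if markovTest Par r ε u v v' = true then (1 : ℝ) else 0) +
            (if k ^ 2 * (ε ^ 2 / 4) / 4 ≤ |stat (collapse fun x => score Par Q k r x ≤ 1 / 324)
              (weight (fun x => score Par Q k r x ≤ 1 / 324) Q ε)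
              (refMass (fun x => score Par Q k r x ≤ 1 / 324) Q) v v' - k ^ 2 * D|
              then (1 : ℝ) else 0) := by
          intro v v'
          by_cases hb : k ^ 2 * (ε ^ 2 / 4) / 4 ≤
              |stat (collapse fun x => score Par Q k r x ≤ 1 / 324)
              (weight (fun x => score Par Q k r x ≤ 1 / 324) Q ε)
              (refMass (fun x => score Par Q k r x ≤ 1 / 324) Q) v v' - k ^ 2 * D|
          · rw [if_pos hb]; split_ifs <;> norm_num
          · have ht : markovTest Par r ε u v v' = true := by
              rw [markovTest, dif_pos hex, decide_eq_true_eq, ← hQdef]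
              have := (abs_lt.1 (not_le.1 hb)).2
              have := mul_le_mul_of_nonneg_left hD (by positivity : (0 : ℝ) ≤ (k : ℝ) ^ 2)
              linarith
            rw [if_pos ht]; split_ifs <;> norm_num
        have h := Ex_mono hP.1 fun v => Ex_mono hP.1 fun v' => hpt v v'
        simp only [Ex_add, Ex_const hP.2] at h
        linarith
      · rw [if_neg hF, mul_zero]
        refine le_trans (Ex_const hP.2 (k := k) 0).ge (Ex_mono hP.1 fun v => ?_)
        refine le_trans (Ex_const hP.2 (k := k) 0).ge (Ex_mono hP.1 fun v' => ?_)
        split_ifs <;> norm_num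
    have h := Ex_mono hP.1 hstep
    rw [Ex_mul_left] at h
    linarith
  · intro hfar
    have hstep : ∀ u : Fin k → Fin n → Bool, 9 / 10 ≤
        Ex P fun v : Fin k → Fin n → Bool => Ex P fun v' : Fin k → Fin n → Bool =>
          if markovTest Par r ε u v v' = false then (1 : ℝ) else 0 := by
      intro u
      by_cases hex : ∃ Q, Feasible Par r u Q
      · have hQ := hex.choose_spec
        set Q := hex.choose with hQdef
        have hQA : ∑ x, (if score Par Q k r x ≤ 1 / 324 then 0 else Q x) ≤ ε ^ 2 / 4 := by
          have a := high_score_mass (Par := Par) hQ.1.1 hQ.1.1 k r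
          have b := score_mean (R := Q) hdeg hQ.1.1 k hkn r hr0 1 zero_le_one
            fun S x => by nlinarith
          linarith
        have hD := discrepancy_far (fun x => score Par Q k r x ≤ 1 / 324) hP.1 hQ.1.1 hε hQA
          (hfar Q hQ.1 hQ.2.1)
        have hdev := collapse_dev (fun x => score Par Q k r x ≤ 1 / 324) hP.1 hP.2 hQ.1.1 hε hk'
          _ le_rfl hD
        set D := discrepancy (fun x => score Par Q k r x ≤ 1 / 324) P Q ε
        have hpt : ∀ v v' : Fin k → Fin n → Bool, (1 : ℝ) ≤
            (if markovTest Par r ε u v v' = false then (1 : ℝ) else 0) +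
            (if k ^ 2 * D / 4 ≤ |stat (collapse fun x => score Par Q k r x ≤ 1 / 324)
              (weight (fun x => score Par Q k r x ≤ 1 / 324) Q ε)
              (refMass (fun x => score Par Q k r x ≤ 1 / 324) Q) v v' - k ^ 2 * D|
              then (1 : ℝ) else 0) := by
          intro v v'
          by_cases hb : k ^ 2 * D / 4 ≤ |stat (collapse fun x => score Par Q k r x ≤ 1 / 324)
              (weight (fun x => score Par Q k r x ≤ 1 / 324) Q ε)
              (refMass (fun x => score Par Q k r x ≤ 1 / 324) Q) v v' - k ^ 2 * D|
          · rw [if_pos hb]; split_ifs <;> norm_num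
          · have ht : markovTest Par r ε u v v' = false := by
              rw [markovTest, dif_pos hex, decide_eq_false_iff_not, not_lt, ← hQdef]
              have := (abs_lt.1 (not_le.1 hb)).1
              have := mul_le_mul_of_nonneg_left hD (by positivity : (0 : ℝ) ≤ (k : ℝ) ^ 2)
              linarith
            rw [if_pos ht]; split_ifs <;> norm_num
        have h := Ex_mono hP.1 fun v => Ex_mono hP.1 fun v' => hpt v v'
        simp only [Ex_add, Ex_const hP.2] at h
        linarith
      · have ht : ∀ v v' : Fin k → Fin n → Bool, markovTest Par r ε u v v' = false :=
          fun v v' => by rw [markovTest, dif_neg hex]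
        simp only [ht, if_true, Ex_const hP.2]
        norm_num
    have h := Ex_mono hP.1 hstep
    rw [Ex_const hP.2] at h
    linarith

end Test

/-! ### The sample size -/

/-- Up to a constant, the sample size in the theorem dominates `2^d n³`, although its second term
carries only `n² d log n`: when `d < n / 3` the term `2^(n/2)` takes over. -/
lemma size_bound (n d : ℕ) (hd : d ≤ n) :
    (2 : ℝ) ^ d * n ^ 3 / 20000 ≤
      max ((2 : ℝ) ^ ((n : ℝ) / 2)) (2 ^ d * (n : ℝ) ^ 2 * d * Real.log n) := by
  have hl2 : (0.69 : ℝ) < Real.log 2 := by linarith [Real.log_two_gt_d9]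
  have hd0 : (0 : ℝ) < 2 ^ d := by positivity
  by_cases hn : n ≤ 1
  · refine le_trans ?_ (le_max_left _ _)
    have h1 : (1 : ℝ) ≤ 2 ^ ((n : ℝ) / 2) := Real.one_le_rpow (by norm_num) (by positivity)
    have h2 : (2 : ℝ) ^ d ≤ 2 := by
      calc (2 : ℝ) ^ d ≤ 2 ^ 1 := pow_le_pow_right₀ (by norm_num) (hd.trans hn)
        _ = 2 := by norm_num
    have h3 : (n : ℝ) ^ 3 ≤ 1 := pow_le_one₀ (by positivity) (by exact_mod_cast hn)
    have h4 : (2 : ℝ) ^ d * n ^ 3 ≤ 2 * 1 := mul_le_mul h2 h3 (by positivity) (by norm_num)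
    linarith
  push Not at hn
  by_cases h : n ≤ 3 * d
  · refine le_trans ?_ (le_max_right _ _)
    have h1 : (n : ℝ) ≤ 3 * d := by exact_mod_cast h
    have h2 : Real.log 2 ≤ Real.log n := Real.log_le_log (by norm_num) (by exact_mod_cast hn)
    have h3 : (n : ℝ) / 20000 ≤ d * Real.log n := by nlinarith
    calc (2 : ℝ) ^ d * n ^ 3 / 20000 = 2 ^ d * n ^ 2 * (n / 20000) := by ring
      _ ≤ 2 ^ d * n ^ 2 * (d * Real.log n) := by gcongr
      _ = _ := by ring
  · push Not at h
    refine le_trans ?_ (le_max_left _ _)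
    have h1 : (3 * d : ℝ) ≤ n := by exact_mod_cast h.le
    have h2 : (2 : ℝ) ^ ((n : ℝ) / 2) = 2 ^ ((n : ℝ) / 3) * (2 ^ ((n : ℝ) / 18)) ^ 3 := by
      rw [← Real.rpow_natCast (2 ^ ((n : ℝ) / 18)), ← Real.rpow_mul (by norm_num),
        ← Real.rpow_add (by norm_num)]
      congr 1; push_cast; ring
    have h3 : (2 : ℝ) ^ d ≤ 2 ^ ((n : ℝ) / 3) := by
      rw [← Real.rpow_natCast]
      exact Real.rpow_le_rpow_of_exponent_le (by norm_num) (by linarith)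
    have h4 : (n : ℝ) / 27 ≤ 2 ^ ((n : ℝ) / 18) := by
      rw [Real.rpow_def_of_pos (by norm_num)]
      have := Real.add_one_le_exp (Real.log 2 * ((n : ℝ) / 18))
      have hn0 : (0 : ℝ) ≤ n := Nat.cast_nonneg _
      nlinarith
    rw [h2]
    calc (2 : ℝ) ^ d * n ^ 3 / 20000 ≤ 2 ^ d * (n / 27) ^ 3 := by
          have : (0 : ℝ) ≤ 2 ^ d * n ^ 3 := by positivity
          rw [div_pow]; norm_num; linarith
      _ ≤ _ := by gcongr

/-- Testing whether `P` is Markov with respect to a *fixed* degree-`d` DAG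
(parent map) `Par`, to Hellinger distance `ε`, with
`m = ⌈C·max(2^(n/2)/ε², 2^d n² d log n/ε²)⌉` samples. -/
theorem stmt_17 :
    ∃ C : ℝ, 0 < C ∧
      ∀ (n d : ℕ), d ≤ n →
      ∀ Par : Fin n → Finset (Fin n),
        (∀ i, (Par i).card ≤ d) → (∀ i, ∀ j ∈ Par i, j < i) →
      ∀ ε : ℝ, 0 < ε → ε < 1 →
      ∀ m : ℕ,
        m = ⌈C * max ((2 : ℝ) ^ ((n : ℝ) / 2) / ε ^ 2)
              (2 ^ d * (n : ℝ) ^ 2 * d * Real.log n / ε ^ 2)⌉₊ →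
      ∃ f : (Fin m → Fin n → Bool) → Bool,
        ∀ P : (Fin n → Bool) → ℝ,
          ((∀ x, 0 ≤ P x) ∧ ∑ x, P x = 1) →
          (IsMarkov Par P →
            2 / 3 ≤ ∑ s : Fin m → Fin n → Bool,
              (if f s = true then ∏ j, P (s j) else 0)) ∧
          ((∀ Q : (Fin n → Bool) → ℝ,
              ((∀ x, 0 ≤ Q x) ∧ ∑ x, Q x = 1) → IsMarkov Par Q →
              ε ≤ hellinger P Q) →
            2 / 3 ≤ ∑ s : Fin m → Fin n → Bool,
              (if f s = false then ∏ j, P (s j) else 0)) := by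
  refine ⟨10 ^ 13, by norm_num, ?_⟩
  intro n d hdn Par hdeg hpar ε hε _ m hm
  set X := max ((2 : ℝ) ^ ((n : ℝ) / 2)) (2 ^ d * (n : ℝ) ^ 2 * d * Real.log n) with hX
  have hε2 : 0 < ε ^ 2 := by positivity
  have hX1 : (1 : ℝ) ≤ X :=
    (Real.one_le_rpow (by norm_num) (by positivity)).trans (le_max_left _ _)
  have hm1 : (10 : ℝ) ^ 13 * (X / ε ^ 2) ≤ m := by
    rw [hm, hX, ← max_div_div_right hε2.le]; exact Nat.le_ceil _
  clear hm
  have hXε : 1 ≤ X / ε ^ 2 := by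
    rw [le_div_iff₀ hε2]; nlinarith
  -- three blocks of `k` samples are used, the remaining `l` are discarded
  obtain ⟨k, l, hl, rfl⟩ : ∃ k l : ℕ, l < 3 ∧ m = k + (k + (k + l)) :=
    ⟨m / 3, m % 3, Nat.mod_lt _ (by norm_num), by lia⟩
  have hkm : (10 : ℝ) ^ 12 * (X / ε ^ 2) ≤ k := by
    push_cast at hm1
    have : (l : ℝ) ≤ 3 := by exact_mod_cast hl.le
    linarith
  have hk0 : (0 : ℝ) < k := lt_of_lt_of_le (by positivity) hkm
  have hk1 : 3400 * √(2 ^ n) / ε ^ 2 ≤ k := by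
    have e : √((2 : ℝ) ^ n) = 2 ^ ((n : ℝ) / 2) := by
      rw [Real.sqrt_eq_rpow, ← Real.rpow_natCast, ← Real.rpow_mul (by norm_num)]
      congr 1; ring
    have h1 : √((2 : ℝ) ^ n) ≤ X := by rw [e]; exact le_max_left _ _
    have h2 : √((2 : ℝ) ^ n) / ε ^ 2 ≤ X / ε ^ 2 := by gcongr
    rw [mul_div_assoc]; linarith
  have hH : (n : ℝ) ^ 2 * 2 ^ (d + 1) * (3 * √(10 * (n + 1))) ^ 2 / k ≤ ε ^ 2 / 41472 := by
    have e : (n : ℝ) ^ 2 * 2 ^ (d + 1) * (3 * √(10 * (n + 1))) ^ 2 =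
        180 * (2 ^ d * (n ^ 2 * (n + 1))) := by
      rw [mul_pow, Real.sq_sqrt (by positivity)]; ring
    have h1 : (n : ℝ) ^ 2 * (n + 1) ≤ 2 * n ^ 3 := by
      rcases Nat.eq_zero_or_pos n with h | h
      · subst h; simp
      · have : (1 : ℝ) ≤ n := by exact_mod_cast h
        nlinarith [sq_nonneg (n : ℝ)]
    have h2 := size_bound n d hdn
    rw [← hX] at h2
    have h3 : (2 : ℝ) ^ d * (n ^ 2 * (n + 1)) ≤ 2 ^ d * (2 * n ^ 3) := by gcongr
    have h4 : X = X / ε ^ 2 * ε ^ 2 := by field_simp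
    have h5 := mul_le_mul_of_nonneg_right hkm hε2.le
    rw [e, div_le_iff₀ hk0]
    nlinarith
  refine ⟨fun s => markovTest Par (3 * √(10 * (n + 1))) ε (fun j => s (Fin.castAdd _ j))
    (fun j => s (Fin.natAdd k (Fin.castAdd _ j)))
    (fun j => s (Fin.natAdd k (Fin.natAdd k (Fin.castAdd l j)))), fun P hP => ?_⟩
  have core := test_core hpar hdeg rfl hε hH hk1 hP
  have key : ∀ b : Bool, (∑ s : Fin (k + (k + (k + l))) → Fin n → Bool,
      if markovTest Par (3 * √(10 * (n + 1))) ε (fun j => s (Fin.castAdd _ j))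
        (fun j => s (Fin.natAdd k (Fin.castAdd _ j)))
        (fun j => s (Fin.natAdd k (Fin.natAdd k (Fin.castAdd l j)))) = b
        then ∏ j, P (s j) else 0) =
      Ex P fun u : Fin k → Fin n → Bool => Ex P fun v : Fin k → Fin n → Bool =>
        Ex P fun v' : Fin k → Fin n → Bool =>
          if markovTest Par (3 * √(10 * (n + 1))) ε u v v' = b then (1 : ℝ) else 0 := by
    intro b
    have e : ∀ F : (Fin (k + (k + (k + l))) → Fin n → Bool) → Bool,
        (∑ s, if F s = b then ∏ j, P (s j) else 0) =
          Ex P fun s => if F s = b then (1 : ℝ) else 0 := fun F =>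
      sum_congr rfl fun s _ => by by_cases h : F s = b <;> simp [h]
    rw [e, Ex_append]
    congr 1; funext u
    rw [Ex_append]
    congr 1; funext v
    rw [Ex_append]
    congr 1; funext v'
    simp only [Fin.append_left, Fin.append_right]
    exact Ex_const hP.2 _
  rw [key, key]
  exact core
end
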